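/- arXiv:2009.01097 — 3 statements merged into one kernel-verified Lean document; each statement's English description precedes it below -/
import Mathlib

section
/- Let A be a commutative noetherian ring and let B be a flat A-algebra which is essentially of finite type over A. Then B is a perfect module over the enveloping ring B ⊗_A B (acting through the multiplication map μ : B ⊗_A B → B) if and only if B is a formally smooth A-algebra. -/
universe u

/-- A module `M` over `R` is *perfect of length at most `n`*: this encodes the existence of
a resolution `0 → P_n → ⋯ → P_0 → M → 0` by finitely generated projective `R`-modules,
via iterated kernels of surjections from finitely generated projective modules. -/
def Module.IsPerfectLE (R : Type u) [CommRing R] :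
    ∀ (_n : ℕ) (M : Type u) [AddCommGroup M] [Module R M], Prop
  | 0, M, _, _ => Module.Finite R M ∧ Module.Projective R M
  | n + 1, M, _, _ => ∃ (P : Type u) (_ : AddCommGroup P) (_ : Module R P)
      (f : P →ₗ[R] M), Module.Finite R P ∧ Module.Projective R P ∧
        Function.Surjective f ∧ Module.IsPerfectLE R n (LinearMap.ker f)

/-- A module is *perfect* if it admits a finite length resolution
`0 → P_n → ⋯ → P_0 → M → 0` by finitely generated projective modules. -/
def Module.IsPerfect (R : Type u) [CommRing R] (M : Type u) [AddCommGroup M] [Module R M] :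
    Prop :=
  ∃ n : ℕ, Module.IsPerfectLE R n M

section

open TensorProduct CategoryTheory IsLocalRing

namespace PerfAux

section generic

variable {R : Type u} [CommRing R]

theorem IsPerfectLE.of_equiv {n : ℕ} {M N : Type u} [AddCommGroup M] [Module R M]
    [AddCommGroup N] [Module R N] (e : M ≃ₗ[R] N) (h : Module.IsPerfectLE R n M) :
    Module.IsPerfectLE R n N := by
  cases n with
  | zero => exact ⟨(Module.Finite.equiv_iff e).mp h.1, have := h.2; Module.Projective.of_equiv e⟩
  | succ n =>
    obtain ⟨P, i1, i2, f, h1, h2, h3, h4⟩ := h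
    refine ⟨P, i1, i2, e.toLinearMap ∘ₗ f, h1, h2, e.surjective.comp h3, ?_⟩
    rwa [LinearEquiv.ker_comp]

theorem IsPerfectLE.hasPD {n : ℕ} : ∀ {M : Type u} [AddCommGroup M] [Module R M],
    Module.IsPerfectLE R n M → HasProjectiveDimensionLE (ModuleCat.of R M) n := by
  induction n with
  | zero =>
    intro M _ _ h
    have := h.2
    rw [← projective_iff_hasProjectiveDimensionLE_zero, ← IsProjective.iff_projective]
    exact h.2
  | succ n ih =>
    intro M _ _ h
    obtain ⟨P, i1, i2, f, h1, h2, h3, h4⟩ := h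
    have hS := LinearMap.shortExact_shortComplexKer h3
    have : Projective (f.shortComplexKer).X₂ := (IsProjective.iff_projective P).mp h2
    exact (hS.hasProjectiveDimensionLT_X₃_iff n this).mpr (ih h4)

theorem IsPerfectLE.of_hasPD [IsNoetherianRing R] {n : ℕ} :
    ∀ {M : Type u} [AddCommGroup M] [Module R M] [Module.Finite R M],
    HasProjectiveDimensionLE (ModuleCat.of R M) n → Module.IsPerfectLE R n M := by
  induction n with
  | zero =>
    intro M _ _ _ h
    rw [← projective_iff_hasProjectiveDimensionLE_zero, ← IsProjective.iff_projective] at h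
    exact ⟨inferInstance, h⟩
  | succ n ih =>
    intro M _ _ _ h
    obtain ⟨P, i1, i2, _, _, f, h3⟩ := Module.exists_finite_presentation R M
    have hS := LinearMap.shortExact_shortComplexKer h3
    have : Projective (f.shortComplexKer).X₂ :=
      (IsProjective.iff_projective P).mp inferInstance
    exact ⟨P, i1, i2, f, inferInstance, inferInstance, h3,
      ih ((hS.hasProjectiveDimensionLT_X₃_iff n this).mp h)⟩

/-- abstract base change -/
theorem IsPerfectLE.baseChange (T : Type u) [CommRing T] [Algebra R T]
    (C : ∀ (X : Type u) [AddCommGroup X] [Module R X], Prop)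
    (hC : ∀ (P M : Type u) [AddCommGroup P] [Module R P] [AddCommGroup M] [Module R M]
      (f : P →ₗ[R] M), Module.Projective R P → Function.Surjective f → C M →
      C (LinearMap.ker f) ∧ Function.Injective ((LinearMap.ker f).subtype.baseChange T))
    {n : ℕ} : ∀ {M : Type u} [AddCommGroup M] [Module R M], C M → Module.IsPerfectLE R n M →
      Module.IsPerfectLE T n (T ⊗[R] M) := by
  induction n with
  | zero =>
    intro M _ _ _ h
    have := h.1
    have := h.2
    exact ⟨inferInstance, inferInstance⟩
  | succ n ih =>
    intro M _ _ hM h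
    obtain ⟨P, i1, i2, f, h1, h2, h3, h4⟩ := h
    obtain ⟨hK, hinj⟩ := hC P M f h2 h3 hM
    refine ⟨T ⊗[R] P, inferInstance, inferInstance, f.baseChange T, inferInstance, inferInstance,
      ?_, ?_⟩
    · exact LinearMap.lTensor_surjective T h3
    · have hex : Function.Exact ((LinearMap.ker f).subtype.baseChange T) (f.baseChange T) :=
        lTensor_exact T (LinearMap.exact_subtype_ker_map f) h3
      have hr : LinearMap.ker (f.baseChange T) =
        LinearMap.range ((LinearMap.ker f).subtype.baseChange T) := LinearMap.exact_iff.mp hex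
      rw [hr]
      exact IsPerfectLE.of_equiv (LinearEquiv.ofInjective _ hinj) (ih hK h4)

theorem IsPerfectLE.baseChange_flat (T : Type u) [CommRing T] [Algebra R T] [Module.Flat R T]
    {n : ℕ} {M : Type u} [AddCommGroup M] [Module R M] (h : Module.IsPerfectLE R n M) :
      Module.IsPerfectLE T n (T ⊗[R] M) := by
  refine IsPerfectLE.baseChange T (fun X _ _ => True) ?_ trivial h
  intro P M _ _ _ _ f _ _ _
  exact ⟨trivial, Module.Flat.lTensor_preserves_injective_linearMap _ (Submodule.subtype_injective _)⟩

theorem IsPerfectLE.baseChange_quot (x : R) {n : ℕ} {M : Type u} [AddCommGroup M] [Module R M]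
    (hx : IsSMulRegular R x) (hM : IsSMulRegular M x) (h : Module.IsPerfectLE R n M) :
      Module.IsPerfectLE (R ⧸ Ideal.span {x}) n ((R ⧸ Ideal.span {x}) ⊗[R] M) := by
  refine IsPerfectLE.baseChange _ (fun X _ _ => IsSMulRegular X x) ?_ hM h
  intro P M _ _ _ _ f hP hf hM
  have hxP : IsSMulRegular P x := Module.Flat.isSMulRegular_of_isRegular
    (have h : IsLeftRegular x := hx; (isLeftRegular_iff_isRegular).mp h)
  have hK : IsSMulRegular (LinearMap.ker f) x := hxP.submodule _ _
  refine ⟨hK, ?_⟩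
  intro a b hab
  rw [← sub_eq_zero, ← map_sub] at hab
  rw [← sub_eq_zero]
  generalize a - b = z at hab
  obtain ⟨k, rfl⟩ : ∃ k, z = 1 ⊗ₜ k := by
    obtain ⟨k, hk⟩ := TensorProduct.mk_surjective R (LinearMap.ker f) (R ⧸ Ideal.span {x})
      Ideal.Quotient.mk_surjective z
    exact ⟨k, hk.symm⟩
  have h0 : (1 : R ⧸ Ideal.span {x}) ⊗ₜ[R] (k : P) = 0 := by simpa using hab
  have h1 := congr(TensorProduct.quotTensorEquivQuotSMul P (Ideal.span {x}) $h0)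
  rw [map_zero] at h1
  have h2 : (k : P) ∈ Ideal.span {x} • (⊤ : Submodule R P) := by
    rw [← Submodule.Quotient.mk_eq_zero, ← h1]
    simp
  rw [Submodule.ideal_span_singleton_smul] at h2
  obtain ⟨p, -, hp⟩ := h2
  have hp' : x • p = k := hp
  have h3 : f p = 0 := by
    apply hM
    change x • f p = x • 0
    rw [smul_zero, ← map_smul, hp']
    exact k.2
  have : k = x • ⟨p, h3⟩ := Subtype.ext hp'.symm
  rw [this, ← TensorProduct.smul_tmul]
  have : x • (1 : R ⧸ Ideal.span {x}) = 0 := by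
    rw [Algebra.smul_def, mul_one]
    exact Ideal.Quotient.eq_zero_iff_mem.mpr (Ideal.mem_span_singleton_self x)
  rw [this, TensorProduct.zero_tmul]

end generic

end PerfAux

namespace PerfAux

section local0

theorem one_tmul_eq_zero_iff {T : Type u} [CommRing T] (I : Ideal T) {M : Type*}
    [AddCommGroup M] [Module T M] (x : M) :
    (1 : T ⧸ I) ⊗ₜ[T] x = 0 ↔ x ∈ I • (⊤ : Submodule T M) := by
  rw [← Submodule.Quotient.mk_eq_zero, ← (TensorProduct.quotTensorEquivQuotSMul M I).map_eq_zero_iff]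
  simp

theorem IsPerfectLE.free_of_depth_zero {T : Type u} [CommRing T] [IsLocalRing T]
    {s : T} (hs : s ≠ 0) (hm : ∀ a ∈ maximalIdeal T, a * s = 0) {n : ℕ} :
    ∀ {M : Type u} [AddCommGroup M] [Module T M], Module.IsPerfectLE T n M →
      Module.Free T M ∧ Module.Finite T M := by
  induction n with
  | zero =>
    intro M _ _ h
    have := h.1
    have := h.2
    exact ⟨Module.free_of_flat_of_isLocalRing, h.1⟩
  | succ n ih =>
    intro M _ _ h
    obtain ⟨P, i1, i2, f, h1, h2, h3, h4⟩ := h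
    obtain ⟨hK, hKf⟩ := ih h4
    have : Module.Free T P := Module.free_of_flat_of_isLocalRing
    refine ⟨Module.free_of_lTensor_residueField_injective (LinearMap.ker f).subtype f h3
      (LinearMap.exact_subtype_ker_map f) ?_, Module.Finite.of_surjective f h3⟩
    rw [injective_iff_map_eq_zero]
    intro z hz
    obtain ⟨e, rfl⟩ : ∃ k, (1 : ResidueField T) ⊗ₜ k = z := TensorProduct.mk_surjective T (LinearMap.ker f) (ResidueField T)
      Ideal.Quotient.mk_surjective z
    have h0 : (1 : ResidueField T) ⊗ₜ[T] (e : P) = 0 := by simpa using hz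
    have h1 := (one_tmul_eq_zero_iff _ _).mp h0
    have hse : s • (e : P) = 0 := by
      generalize (e : P) = p at h1
      induction h1 using Submodule.smul_induction_on' with
      | smul r hr n hn => rw [smul_smul, mul_comm, hm r hr, zero_smul]
      | add x hx y hy h1 h2 => rw [smul_add, h1, h2, add_zero]
    have hse' : s • e = 0 := Subtype.ext hse
    refine (one_tmul_eq_zero_iff _ _).mpr ?_
    let b := Module.Free.chooseBasis T (LinearMap.ker f)
    rw [← b.sum_repr e]
    refine Submodule.sum_mem _ fun i _ => Submodule.smul_mem_smul ?_ trivial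
    by_contra hu
    rw [IsLocalRing.notMem_maximalIdeal] at hu
    have : s * b.repr e i = 0 := by
      have := congr(b.repr $hse' i)
      simpa using this
    exact hs (by rwa [hu.mul_left_eq_zero] at this)

theorem maximalIdeal_eq_bot_of_perfect {T : Type u} [CommRing T] [IsLocalRing T]
    {s : T} (hs : s ≠ 0) (hm : ∀ a ∈ maximalIdeal T, a * s = 0)
    (h : Module.IsPerfect T (ResidueField T)) : maximalIdeal T = ⊥ := by
  obtain ⟨n, h⟩ := h
  have := (IsPerfectLE.free_of_depth_zero hs hm h).1
  rw [eq_bot_iff]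
  intro a ha
  have h1 : a • (1 : ResidueField T) = 0 := by
    rw [Algebra.smul_def, mul_one]
    exact (IsLocalRing.residue_eq_zero_iff a).mpr ha
  have : FaithfulSMul T (ResidueField T) := inferInstance
  refine FaithfulSMul.eq_of_smul_eq_smul (α := ResidueField T) fun x => ?_
  rw [zero_smul]
  calc a • x = (a • (1 : ResidueField T)) * x := by simp
  _ = 0 := by rw [h1, zero_mul]

theorem exists_regular {T : Type u} [CommRing T] [IsLocalRing T] [IsNoetherianRing T]
    (h : ∀ s : T, (∀ a ∈ maximalIdeal T, a * s = 0) → s = 0) :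
    ∃ x ∈ maximalIdeal T, x ∉ maximalIdeal T ^ 2 ∧ IsSMulRegular T x := by
  by_contra! H
  have hfin := associatedPrimes.finite T T
  have hsub : (maximalIdeal T : Set T) ⊆ (maximalIdeal T ^ 2 : Ideal T) ∪
      (maximalIdeal T ^ 2 : Ideal T) ∪ ⋃ i ∈ (hfin.toFinset : Set (Ideal T)), (i : Set T) := by
    intro x hx
    by_cases h2 : x ∈ maximalIdeal T ^ 2
    · exact Or.inl (Or.inl h2)
    · right
      have h3 := H x hx h2
      have : x ∈ ⋃ p ∈ associatedPrimes T T, (p : Set T) := by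
        rw [biUnion_associatedPrimes_eq_compl_nonZeroDivisors]
        intro h4
        apply h3
        have := (mem_nonZeroDivisors_iff.mp h4).1
        exact (isLeftRegular_iff_right_eq_zero_of_mul.mpr this)
      simpa using this
  have key : ∀ I ∈ associatedPrimes T T, ¬ maximalIdeal T ≤ I := by
    intro I hI hle
    obtain ⟨hp, x, hx⟩ := isAssociatedPrime_iff.mp hI
    have h0 := h x (fun a ha => by
      have := hle ha
      rw [hx] at this
      simpa [Submodule.mem_colon] using this)
    apply hp.ne_top
    rw [hx, h0]
    ext; simp [Submodule.mem_colon]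
  rw [Ideal.subset_union_prime' (f := fun i : Ideal T => i) (a := maximalIdeal T ^ 2) (b := maximalIdeal T ^ 2)] at hsub
  · have h2 : ¬ maximalIdeal T ≤ maximalIdeal T ^ 2 := by
      intro h2
      have : maximalIdeal T = ⊥ := by
        refine Submodule.eq_bot_of_le_smul_of_le_jacobson_bot (maximalIdeal T) _
          (IsNoetherian.noetherian _) ?_ (IsLocalRing.maximalIdeal_le_jacobson _)
        rwa [smul_eq_mul, ← pow_two]
      have := h 1 (by simp [this])
      exact one_ne_zero this
    rcases hsub with h3 | h3 | ⟨i, hi, h3⟩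
    · exact h2 h3
    · exact h2 h3
    · exact key i (by simpa using hi) h3
  · intro i hi
    exact IsAssociatedPrime.isPrime (I := i) (M := T) ((Set.Finite.mem_toFinset hfin).mp hi)

theorem perfect_residueField_quot {T : Type u} [CommRing T] [IsLocalRing T] [IsNoetherianRing T]
    {x : T} (hx : x ∈ maximalIdeal T) (hx2 : x ∉ maximalIdeal T ^ 2) (hreg : IsSMulRegular T x)
    (h : Module.IsPerfect T (ResidueField T)) [IsLocalRing (T ⧸ Ideal.span {x})] :
    Module.IsPerfect (T ⧸ Ideal.span {x}) (ResidueField (T ⧸ Ideal.span {x})) := by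
  obtain ⟨n, h⟩ := h
  have hpd := IsPerfectLE.hasPD h
  let f : T →ₗ[T] ResidueField T := Algebra.linearMap T (ResidueField T)
  have hf : Function.Surjective f := Ideal.Quotient.mk_surjective
  have hker : LinearMap.ker f = maximalIdeal T := by
    ext a; exact IsLocalRing.residue_eq_zero_iff a
  have hS := LinearMap.shortExact_shortComplexKer hf
  have hP : Projective (f.shortComplexKer).X₂ := (IsProjective.iff_projective T).mp inferInstance
  have hpd2 : HasProjectiveDimensionLE (ModuleCat.of T (LinearMap.ker f)) n := by
    refine hS.hasProjectiveDimensionLT_X₁ (n + 1) ?_ ?_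
    · rw [projective_iff_hasProjectiveDimensionLT_one] at hP
      exact hasProjectiveDimensionLT_of_ge _ 1 _ (by omega)
    · exact hasProjectiveDimensionLT_of_ge (ModuleCat.of T (ResidueField T)) (n + 1) _ (by omega)
  rw [hker] at hpd2
  have h2 := IsPerfectLE.of_hasPD hpd2
  have h3 := IsPerfectLE.baseChange_quot x hreg (hreg.submodule _ _) h2
  have h4 := IsPerfectLE.hasPD h3
  set Q := T ⧸ Ideal.span {x} with hQ
  let xm : maximalIdeal T := ⟨x, hx⟩
  have hloc : IsLocalHom (algebraMap T Q) := IsLocalHom.of_surjective _ Ideal.Quotient.mk_surjective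
  let i : ResidueField Q →ₗ[Q] Q ⊗[T] maximalIdeal T :=
    Submodule.liftQ _ (LinearMap.toSpanSingleton Q _ (1 ⊗ₜ xm)) (by
      intro q hq
      obtain ⟨t, rfl⟩ := Ideal.Quotient.mk_surjective q
      have ht : t ∈ maximalIdeal T := by
        rw [IsLocalRing.mem_maximalIdeal, mem_nonunits_iff] at hq ⊢
        exact fun h => hq (h.map _)
      rw [LinearMap.mem_ker, LinearMap.toSpanSingleton_apply]
      have : (Ideal.Quotient.mk (Ideal.span {x}) t) • ((1 : Q) ⊗ₜ[T] xm) = t • ((1 : Q) ⊗ₜ[T] xm) :=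
        algebraMap_smul Q t _
      rw [this, ← TensorProduct.tmul_smul]
      have h5 : t • xm = x • (⟨t, ht⟩ : maximalIdeal T) := Subtype.ext (mul_comm _ _)
      rw [h5, TensorProduct.tmul_smul, TensorProduct.smul_tmul']
      have : x • (1 : Q) = 0 := by
        rw [Algebra.smul_def, mul_one]
        exact Ideal.Quotient.eq_zero_iff_mem.mpr (Ideal.mem_span_singleton_self x)
      rw [this, TensorProduct.zero_tmul])
  have hv : (maximalIdeal T).toCotangent xm ≠ 0 := by
    rw [Ne, Ideal.toCotangent_eq_zero]
    exact hx2
  obtain ⟨g, hg⟩ := Module.Projective.exists_dual_eq_one (ResidueField T) (V := CotangentSpace T)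
    (x := (maximalIdeal T).toCotangent xm) hv
  let c : ResidueField T →ₗ[T] ResidueField Q := Submodule.liftQ _ (Algebra.linearMap T (ResidueField Q)) (by
      intro t ht
      rw [LinearMap.mem_ker, Algebra.linearMap_apply, IsScalarTower.algebraMap_apply T Q]
      refine (IsLocalRing.residue_eq_zero_iff _).mpr ?_
      rw [IsLocalRing.mem_maximalIdeal, mem_nonunits_iff] at ht ⊢
      exact fun h => ht (isUnit_of_map_unit _ _ h))
  let l : maximalIdeal T →ₗ[T] ResidueField Q := c ∘ₗ (g.restrictScalars T) ∘ₗ (maximalIdeal T).toCotangent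
  let r : Q ⊗[T] maximalIdeal T →ₗ[Q] ResidueField Q := l.liftBaseChange Q
  have hri : r ∘ₗ i = LinearMap.id := by
    apply LinearMap.ext
    intro y
    obtain ⟨q, rfl⟩ := Ideal.Quotient.mk_surjective y
    change r (q • (1 ⊗ₜ xm)) = _
    rw [map_smul]
    have : r (1 ⊗ₜ xm) = 1 := by
      simp only [r, LinearMap.liftBaseChange_tmul, one_smul, l, LinearMap.comp_apply, LinearMap.restrictScalars_apply]
      rw [hg]
      change algebraMap T (ResidueField Q) 1 = 1
      simp
    rw [this, Algebra.smul_def, mul_one]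
    rfl
  let ret : Retract (ModuleCat.of Q (ResidueField Q)) (ModuleCat.of Q (Q ⊗[T] maximalIdeal T)) :=
    { i := ModuleCat.ofHom i
      r := ModuleCat.ofHom r
      retract := by
        rw [← ModuleCat.ofHom_comp, hri]; rfl }
  have h6 := ret.hasProjectiveDimensionLT (n + 1)
  exact ⟨n, IsPerfectLE.of_hasPD h6⟩

theorem main1 {P : Type u} [CommRing P] [IsLocalRing P] [IsNoetherianRing P] (J : Ideal P) :
    ∀ (T : Type u) [CommRing T] [IsLocalRing T] (φ : P →+* T), Function.Surjective φ →
      RingHom.ker φ = J → Module.IsPerfect T (ResidueField T) →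
      J ⊓ maximalIdeal P ^ 2 ≤ maximalIdeal P * J := by
  induction J using IsNoetherian.induction with
  | hgt J ih =>
  intro T _ _ φ hφ hJ h
  have : IsNoetherianRing T := isNoetherianRing_of_surjective P T φ hφ
  have hmm : ∀ p, p ∈ maximalIdeal P ↔ φ p ∈ maximalIdeal T := by
    have := IsLocalHom.of_surjective φ hφ
    intro p
    simp [IsLocalRing.mem_maximalIdeal, mem_nonunits_iff]
  by_cases H : ∀ s : T, (∀ a ∈ maximalIdeal T, a * s = 0) → s = 0
  · obtain ⟨x, hx, hx2, hreg⟩ := exists_regular H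
    obtain ⟨y, rfl⟩ := hφ x
    have : Nontrivial (T ⧸ Ideal.span {φ y}) := Ideal.Quotient.nontrivial_iff.mpr (by
      rw [Ne, Ideal.span_singleton_eq_top]
      exact hx)
    have : IsLocalRing (T ⧸ Ideal.span {φ y}) :=
      IsLocalRing.of_surjective' (Ideal.Quotient.mk (Ideal.span {φ y})) Ideal.Quotient.mk_surjective
    have h2 := perfect_residueField_quot hx hx2 hreg h
    have hk : RingHom.ker ((Ideal.Quotient.mk (Ideal.span {φ y})).comp φ) = J ⊔ Ideal.span {y} := by
      rw [← RingHom.comap_ker, Ideal.mk_ker, ← hJ, ← Set.image_singleton, ← Ideal.map_span,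
        Ideal.comap_map_of_surjective' _ hφ, sup_comm]
    have hlt : J < J ⊔ Ideal.span {y} := by
      rw [left_lt_sup]
      intro hle
      have : y ∈ J := hle (Ideal.mem_span_singleton_self y)
      rw [← hJ, RingHom.mem_ker] at this
      rw [this] at hx2
      exact hx2 (zero_mem _)
    have h3 := ih _ hlt _ ((Ideal.Quotient.mk (Ideal.span {φ y})).comp φ)
      (Function.Surjective.comp (g := Ideal.Quotient.mk (Ideal.span {φ y})) Ideal.Quotient.mk_surjective hφ) hk h2
    rintro f ⟨hf1, hf2⟩
    have h4 := h3 ⟨Ideal.mem_sup_left hf1, hf2⟩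
    rw [Ideal.mul_sup, Submodule.mem_sup] at h4
    obtain ⟨g, hg, z, hz, rfl⟩ := h4
    rw [mul_comm, Ideal.mem_span_singleton_mul] at hz
    obtain ⟨a, ha, rfl⟩ := hz
    have hgJ : g ∈ J := Ideal.mul_le_right hg
    have h5 : y * a ∈ J := by
      have := J.sub_mem hf1 hgJ
      rwa [add_sub_cancel_left] at this
    have h6 : a ∈ J := by
      rw [← hJ, RingHom.mem_ker, map_mul] at h5
      rw [← hJ, RingHom.mem_ker]
      apply hreg
      simpa using h5
    refine add_mem hg ?_
    exact Ideal.mul_mem_mul ((hmm y).mpr hx) h6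
  · push Not at H
    obtain ⟨s, hs, hs0⟩ := H
    have h0 := maximalIdeal_eq_bot_of_perfect hs0 hs h
    have : J = maximalIdeal P := by
      ext p
      rw [hmm, h0, ← hJ]; rfl
    rw [this, pow_two]
    exact inf_le_right

end local0
end PerfAux

namespace PerfAux

theorem flat_ker {R : Type u} [CommRing R] {P M : Type u} [AddCommGroup P] [Module R P]
    [AddCommGroup M] [Module R M] [Module.Flat R P] [Module.Flat R M] (f : P →ₗ[R] M)
    (hf : Function.Surjective f) : Module.Flat R (LinearMap.ker f) := by
  rw [Module.Flat.iff_rTensor_preserves_injective_linearMap]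
  intro N N' _ _ _ _ g hg
  have h1 := LinearMap.lTensor_injective_of_exact_of_flat f hf _ (LinearMap.ker f).subtype_injective
    (LinearMap.exact_subtype_ker_map _) N
  have h2 := Module.Flat.rTensor_preserves_injective_linearMap (M := P) g hg
  have h3 := h2.comp h1
  have h4 : (g.rTensor P) ∘ₗ ((LinearMap.ker f).subtype.lTensor N) =
      ((LinearMap.ker f).subtype.lTensor N') ∘ₗ (g.rTensor (LinearMap.ker f)) := by
    ext; simp
  rw [← LinearMap.coe_comp, h4, LinearMap.coe_comp] at h3
  exact h3.of_comp

/-- flatness over a base ring -/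
def FlatOver (B R : Type u) [CommRing B] [CommRing R] [Algebra B R] (X : Type u) [AddCommGroup X]
    [Module R X] : Prop := @Module.Flat B X _ _ (Module.compHom X (algebraMap B R))

theorem flatOver_iff (B R : Type u) [CommRing B] [CommRing R] [Algebra B R] (X : Type u)
    [AddCommGroup X] [Module R X] [i : Module B X] [IsScalarTower B R X] :
    FlatOver B R X ↔ Module.Flat B X := by
  have : Module.compHom X (algebraMap B R) = i :=
    Module.ext' _ _ fun b x => algebraMap_smul R b x
  rw [FlatOver, this]

theorem IsPerfectLE.baseChange_pushout {B k R R1 : Type u} [CommRing B] [CommRing k] [CommRing R]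
    [CommRing R1] [Algebra B k] [Algebra B R] [Algebra k R1] [Algebra R R1] [Algebra B R1]
    [IsScalarTower B k R1] [IsScalarTower B R R1] [Algebra.IsPushout B k R R1] [Module.Flat B R]
    {n : ℕ} {M : Type u} [AddCommGroup M] [Module R M] [Module B M] [IsScalarTower B R M]
    [Module.Flat B M] (h : Module.IsPerfectLE R n M) :
    Module.IsPerfectLE R1 n (R1 ⊗[R] M) := by
  refine IsPerfectLE.baseChange R1 (fun X _ _ => FlatOver B R X) ?_ ?_ h
  · intro P M _ _ _ _ f hP hf hM
    let _ := Module.compHom P (algebraMap B R)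
    let _ := Module.compHom M (algebraMap B R)
    have tP : IsScalarTower B R P := .of_algebraMap_smul fun r x => rfl
    have tM : IsScalarTower B R M := .of_algebraMap_smul fun r x => rfl
    have hM' : Module.Flat B M := (flatOver_iff B R M).mp hM
    have hP' : Module.Flat B P := Module.Flat.trans B R P
    have h1 := flat_ker (f.restrictScalars B) hf
    refine ⟨?_, ?_⟩
    · have h1' : Module.Flat B (LinearMap.ker f) := h1
      have tK : IsScalarTower B R (LinearMap.ker f) :=
        .of_algebraMap_smul fun r x => Subtype.ext (algebraMap_smul R r x.1)
      exact (flatOver_iff B R (LinearMap.ker f)).mpr h1'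
    · have h2 := LinearMap.lTensor_injective_of_exact_of_flat (f.restrictScalars B) hf
        ((LinearMap.ker f).subtype.restrictScalars B) (LinearMap.ker f).subtype_injective
        (LinearMap.exact_subtype_ker_map f) k
      let eP := Algebra.IsPushout.cancelBaseChange B k R R1 P
      let eK := Algebra.IsPushout.cancelBaseChange B k R R1 (LinearMap.ker f)
      have h3 : ∀ x, (LinearMap.ker f).subtype.baseChange R1 (eK.symm x) =
          eP.symm (((LinearMap.ker f).subtype.restrictScalars B).lTensor k x) := by
        intro x
        induction x with
        | zero => simp
        | add x y hx hy => simp only [map_add, hx, hy]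
        | tmul x y =>
          simp [eK, eP, Algebra.IsPushout.cancelBaseChange_symm_tmul]
      intro a b hab
      apply eK.injective
      apply h2
      apply eP.symm.injective
      rw [← h3, ← h3]
      simpa using hab
  · exact (flatOver_iff B R M).mpr inferInstance

/-- base change of a cyclic module -/
theorem cyclic_baseChange {R T : Type u} [CommRing R] [CommRing T] [Algebra R T]
    {M N : Type u} [AddCommGroup M] [Module R M] [AddCommGroup N] [Module T N]
    (f : R →ₗ[R] M) (hf : Function.Surjective f) (g : T →ₗ[T] N) (hg : Function.Surjective g)
    (h : LinearMap.ker g = (Ideal.map (algebraMap R T) (LinearMap.ker f))) :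
    Nonempty (T ⊗[R] M ≃ₗ[T] N) := by
  let F := f.baseChange T
  have hF : Function.Surjective F := LinearMap.lTensor_surjective T hf
  have hex : Function.Exact ((LinearMap.ker f).subtype.baseChange T) F :=
        lTensor_exact T (LinearMap.exact_subtype_ker_map f) hf
  let e : T ⊗[R] R ≃ₗ[T] T := AlgebraTensorModule.rid R T T
  let F' : T →ₗ[T] T ⊗[R] M := F ∘ₗ e.symm.toLinearMap
  have hF' : Function.Surjective F' := hF.comp e.symm.surjective
  have hk : LinearMap.ker F' = LinearMap.ker g := by
    rw [h]
    apply le_antisymm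
    · intro t ht
      obtain ⟨z, hz⟩ := (hex (e.symm t)).mp ht
      have : t = e ((LinearMap.ker f).subtype.baseChange T z) := by rw [hz]; simp
      rw [this]
      clear this hz
      induction z with
      | zero => simp
      | add x y hx hy => simp only [map_add]; exact add_mem hx hy
      | tmul x y =>
        simp only [LinearMap.baseChange_tmul, e, AlgebraTensorModule.rid_tmul, Submodule.subtype_apply]
        rw [Algebra.smul_def]
        exact Ideal.mul_mem_right _ _ (Ideal.mem_map_of_mem _ y.2)
    · rw [Ideal.map_le_iff_le_comap]
      intro r hr
      change F (e.symm _) = 0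
      have : e.symm (algebraMap R T r) = 1 ⊗ₜ r := by
        apply e.injective
        simp [e, Algebra.smul_def]
      rw [this]
      have hr' : f r = 0 := hr
      simp [F, hr']
  exact ⟨(F'.quotKerEquivOfSurjective hF').symm ≪≫ₗ Submodule.quotEquivOfEq _ _ hk ≪≫ₗ
    g.quotKerEquivOfSurjective hg⟩

end PerfAux

namespace PerfAux

theorem exists_pres (A S : Type u) [CommRing A] [CommRing S] [Algebra A S]
    [Algebra.EssFiniteType A S] :
    ∃ (P : Type u) (_ : CommRing P) (_ : Algebra A P), Algebra.FormallySmooth A P ∧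
      Algebra.EssFiniteType A P ∧ Module.Flat A P ∧ Module.Free P Ω[P⁄A] ∧
      Module.Finite P Ω[P⁄A] ∧ ∃ f : P →ₐ[A] S, Function.Surjective f := by
  let S0 := Algebra.EssFiniteType.subalgebra A S
  let M := Algebra.EssFiniteType.submonoid A S
  obtain ⟨n, f₀, hf₀⟩ := Algebra.FiniteType.iff_quotient_mvPolynomial''.mp
    (inferInstance : Algebra.FiniteType A S0)
  let M' := M.comap f₀
  let P' := Localization M'
  let fP : P' →ₐ[A] S := IsLocalization.liftAlgHom (M := M')
      (f := (IsScalarTower.toAlgHom A S0 S).comp f₀) fun x ↦ by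
    simpa using IsLocalization.map_units (M := M) S ⟨f₀ x.1, x.2⟩
  have hf₁ : Function.Surjective fP := by
    intro x
    obtain ⟨x, ⟨s, hs⟩, rfl⟩ := IsLocalization.exists_mk'_eq M x
    obtain ⟨x, rfl⟩ := hf₀ x
    obtain ⟨s, rfl⟩ := hf₀ s
    refine ⟨IsLocalization.mk' (M := M') _ x ⟨s, hs⟩, ?_⟩
    simp [fP, IsLocalization.lift_mk', Units.mul_inv_eq_iff_eq_mul, IsUnit.liftRight]
    exact (IsLocalization.mk'_spec S (f₀ x) ⟨f₀ s, hs⟩).symm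
  have : Algebra.FormallyEtale (MvPolynomial (Fin n) A) P' := .of_isLocalization M'
  have : Algebra.FormallySmooth A P' := .comp _ (MvPolynomial (Fin n) A) _
  have : Module.Free P' Ω[P'⁄A] :=
    .of_equiv (KaehlerDifferential.tensorKaehlerEquivOfFormallyEtale A (MvPolynomial (Fin n) A) P')
  have : Algebra.EssFiniteType (MvPolynomial (Fin n) A) P' := .of_isLocalization _ M'
  have : Algebra.EssFiniteType A P' := .comp _ (MvPolynomial (Fin n) A) _
  have : Module.Flat (MvPolynomial (Fin n) A) P' := IsLocalization.flat _ M'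
  exact ⟨P', inferInstance, inferInstance, inferInstance, inferInstance,
    .trans _ (MvPolynomial (Fin n) A) _, inferInstance, inferInstance, fP, hf₁⟩

end PerfAux

namespace PerfAux

theorem main1_loc {Pk Sk : Type u} [CommRing Pk] [IsNoetherianRing Pk] [CommRing Sk]
    (φ : Pk →+* Sk) (hφ : Function.Surjective φ) (nS : Ideal Sk) [nS.IsPrime]
    (hp : Module.IsPerfect (Localization.AtPrime nS) (ResidueField (Localization.AtPrime nS)))
    (f : Pk) (hf : φ f = 0) (hf2 : f ∈ (nS.comap φ) ^ 2) :
    ∃ s, s ∉ nS.comap φ ∧ s * f ∈ nS.comap φ * RingHom.ker φ := by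
  set n := nS.comap φ with hn
  have h1 := RingHom.surjective_localRingHom_of_surjective φ hφ nS
  have hmap : Submonoid.map φ (nS.comap φ).primeCompl = nS.primeCompl := by
    ext x
    constructor
    · rintro ⟨y, hy, rfl⟩
      exact hy
    · intro hx
      obtain ⟨y, rfl⟩ := hφ x
      exact ⟨y, hx, rfl⟩
  have hker : RingHom.ker (Localization.localRingHom n nS φ hn) =
      Ideal.map (algebraMap Pk (Localization.AtPrime n)) (RingHom.ker φ) :=
    IsLocalization.ker_map (Localization.AtPrime nS) φ hmap
  have h2 := main1 _ _ (Localization.localRingHom n nS φ hn) h1 hker hp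
  have h3 : algebraMap Pk (Localization.AtPrime n) f ∈
      Ideal.map (algebraMap Pk (Localization.AtPrime n)) (n * RingHom.ker φ) := by
    rw [Ideal.map_mul, Localization.AtPrime.map_eq_maximalIdeal]
    refine h2 ⟨Ideal.mem_map_of_mem _ hf, ?_⟩
    rw [← Localization.AtPrime.map_eq_maximalIdeal, ← Ideal.map_pow]
    exact Ideal.mem_map_of_mem _ hf2
  rw [IsLocalization.algebraMap_mem_map_algebraMap_iff n.primeCompl] at h3
  exact h3

theorem mem_sq_of_D_eq_zero {A P k : Type u} [CommRing A] [CommRing P] [CommRing k] [Algebra A P]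
    [Algebra P k] [Algebra A k] [IsScalarTower A P k] (θ : k ⊗[A] P →ₐ[k] k)
    (hθ : ∀ p : P, θ (1 ⊗ₜ p) = algebraMap P k p) (f : P) (hf : algebraMap P k f = 0)
    (hD : (1 : k) ⊗ₜ[P] KaehlerDifferential.D A P f = 0) :
    (1 ⊗ₜ f : k ⊗[A] P) ∈ RingHom.ker θ ^ 2 := by
  set n := RingHom.ker θ with hn
  let C := n.Cotangent
  have t1 : IsScalarTower P k C := .of_algebraMap_smul fun r x => by
    rw [← algebraMap_smul (k ⊗[A] P) r x, ← algebraMap_smul (k ⊗[A] P) (algebraMap P k r) x]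
    rw [IsScalarTower.algebraMap_apply P k (k ⊗[A] P)]
  have tA : IsScalarTower A k C := .of_algebraMap_smul fun a x => by
    rw [← algebraMap_smul (k ⊗[A] P) a x, ← algebraMap_smul (k ⊗[A] P) (algebraMap A k a) x]
    rw [IsScalarTower.algebraMap_apply A k (k ⊗[A] P)]
  have t2 : IsScalarTower A P C := .of_algebraMap_smul fun a x => by
    rw [← algebraMap_smul k (algebraMap A P a), ← IsScalarTower.algebraMap_apply, algebraMap_smul]
  have hmem : ∀ p : P, (1 ⊗ₜ p - algebraMap P k p ⊗ₜ 1 : k ⊗[A] P) ∈ n := by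
    intro p
    rw [hn, RingHom.mem_ker, map_sub, hθ]
    have : (algebraMap P k p ⊗ₜ 1 : k ⊗[A] P) = algebraMap k (k ⊗[A] P) (algebraMap P k p) := rfl
    rw [this, AlgHom.commutes]
    simp
  let d0 : P →ₗ[A] n :=
    { toFun := fun p => ⟨_, hmem p⟩
      map_add' := fun p q => Subtype.ext (by
        simp only [map_add, TensorProduct.tmul_add, TensorProduct.add_tmul, Submodule.coe_add]; abel)
      map_smul' := fun a p => Subtype.ext (by
        change _ = a • (1 ⊗ₜ p - algebraMap P k p ⊗ₜ 1 : k ⊗[A] P)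
        simp only [Algebra.smul_def a p, map_mul, smul_sub]
        rw [← Algebra.smul_def, TensorProduct.tmul_smul, ← IsScalarTower.algebraMap_apply,
          ← Algebra.smul_def, TensorProduct.smul_tmul', TensorProduct.smul_tmul']) }
  let d : Derivation A P C := Derivation.mk' ((n.toCotangent.restrictScalars A) ∘ₗ d0) (by
    intro p q
    have key : ∀ (r : P) (y : n), r • n.toCotangent y = n.toCotangent ((algebraMap P k r ⊗ₜ 1 : k ⊗[A] P) • y) := by
      intro r y
      rw [map_smul]
      rw [← algebraMap_smul (k ⊗[A] P) r]; rfl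
    simp only [LinearMap.comp_apply, LinearMap.restrictScalars_apply, key, ← map_add]
    rw [Ideal.toCotangent_eq]
    have : ((d0 (p * q) : n) : k ⊗[A] P) - (((algebraMap P k p ⊗ₜ 1 : k ⊗[A] P) • d0 q +
        (algebraMap P k q ⊗ₜ 1 : k ⊗[A] P) • d0 p : n) : k ⊗[A] P) = (d0 p : k ⊗[A] P) * d0 q := by
      simp only [d0, LinearMap.coe_mk, AddHom.coe_mk, Submodule.coe_add, SetLike.val_smul, smul_eq_mul,
        mul_sub, sub_mul, Algebra.TensorProduct.tmul_mul_tmul, one_mul, mul_one, map_mul]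
      rw [mul_comm (algebraMap P k q)]
      abel
    rw [this, pow_two]
    exact Ideal.mul_mem_mul (d0 p).2 (d0 q).2)
  let l : k ⊗[P] Ω[P⁄A] →ₗ[k] C := d.liftKaehlerDifferential.liftBaseChange k
  have h1 : l (1 ⊗ₜ KaehlerDifferential.D A P f) = n.toCotangent (d0 f) := by
    simp [l, LinearMap.liftBaseChange_tmul, d]
  rw [hD, map_zero, eq_comm, Ideal.toCotangent_eq_zero] at h1
  simpa [d0, hf] using h1

end PerfAux

namespace PerfAux

theorem smooth_of_local {A S P : Type u} [CommRing A] [CommRing S] [CommRing P] [Algebra A S]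
    [Algebra A P] [Algebra P S] [IsScalarTower A P S] [IsLocalRing S] [Module.Flat A S]
    [Algebra.FormallySmooth A P] [Algebra.EssFiniteType A P] [IsNoetherianRing P]
    [Module.Free P Ω[P⁄A]] [Module.Finite P Ω[P⁄A]]
    (h₁ : Function.Surjective (algebraMap P S))
    (ψ : ResidueField S ⊗[A] S →ₐ[ResidueField S] ResidueField S)
    (hψ : ∀ s : S, ψ (1 ⊗ₜ s) = residue S s) [hpr : (RingHom.ker ψ).IsPrime]
    (hperf : Module.IsPerfect (Localization.AtPrime (RingHom.ker ψ))
      (ResidueField (Localization.AtPrime (RingHom.ker ψ)))) :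
    Algebra.FormallySmooth A S := by
  rw [Algebra.FormallySmooth.iff_injective_cotangentComplexBaseChange_residueField P h₁
    (IsNoetherian.noetherian _)]
  set k := ResidueField S with hk
  set J := RingHom.ker (algebraMap P S) with hJ
  rw [injective_iff_map_eq_zero]
  intro z hz
  have hPk : Function.Surjective (algebraMap P k) := by
    rw [IsScalarTower.algebraMap_eq P S k]
    exact (residue_surjective (R := S)).comp h₁
  obtain ⟨f, rfl⟩ : ∃ f : J, (1 : k) ⊗ₜ[P] f = z := TensorProduct.mk_surjective P J k hPk z
  have hf0 : algebraMap P S f.1 = 0 := f.2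
  have hfk : algebraMap P k f.1 = 0 := by
    rw [IsScalarTower.algebraMap_apply P S k, hf0, map_zero]
  have hD : (1 : k) ⊗ₜ[P] KaehlerDifferential.D A P f.1 = 0 := by
    rw [KaehlerDifferential.cotangentComplexBaseChange_tmul] at hz
    simpa using hz
  let φ : k ⊗[A] P →ₐ[k] k ⊗[A] S :=
    Algebra.TensorProduct.map (.id k k) (IsScalarTower.toAlgHom A P S)
  have hφ : Function.Surjective φ := LinearMap.lTensor_surjective _ h₁
  have hθ : ∀ p : P, (ψ.comp φ) (1 ⊗ₜ p) = algebraMap P k p := by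
    intro p
    simp only [AlgHom.comp_apply, φ, Algebra.TensorProduct.map_tmul, AlgHom.id_apply, map_one,
      IsScalarTower.toAlgHom_apply, hψ]
    rw [IsScalarTower.algebraMap_apply P S k]; rfl
  have h2 := mem_sq_of_D_eq_zero (ψ.comp φ) hθ f.1 hfk hD
  have hcomap : (RingHom.ker ψ).comap φ.toRingHom = RingHom.ker (ψ.comp φ) := by
    ext; rfl
  rw [← hcomap] at h2
  have : IsNoetherianRing (k ⊗[A] P) := Algebra.EssFiniteType.isNoetherianRing k _
  obtain ⟨s, hs, hsf⟩ := main1_loc φ.toRingHom hφ (RingHom.ker ψ) hperf (1 ⊗ₜ f.1)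
    (by simp [φ, hf0]) h2
  let ι : k ⊗[A] J →ₗ[A] k ⊗[A] P := (J.subtype.restrictScalars A).lTensor k
  let g0 : J →ₗ[A] k ⊗[P] J :=
    { toFun := fun j => 1 ⊗ₜ j
      map_add' := fun a b => TensorProduct.tmul_add _ _ _
      map_smul' := fun a b => by
        rw [RingHom.id_apply, ← algebraMap_smul P a b, TensorProduct.tmul_smul, algebraMap_smul] }
  let g : k ⊗[A] J →ₗ[k] k ⊗[P] J := g0.liftBaseChange k
  have hιi : Function.Injective ι := LinearMap.lTensor_injective_of_exact_of_flat
    (IsScalarTower.toAlgHom A P S).toLinearMap h₁ (J.subtype.restrictScalars A)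
    J.subtype_injective (LinearMap.exact_subtype_ker_map (Algebra.linearMap P S)) k
  have hιr : ∀ w, φ w = 0 → ∃ v, ι v = w := by
    intro w hw
    exact (lTensor_exact k (f := (J.subtype.restrictScalars A)) (g := (IsScalarTower.toAlgHom A P S).toLinearMap)
      (LinearMap.exact_subtype_ker_map (Algebra.linearMap P S)) h₁ w).mp hw
  have hmul : ∀ (s : k ⊗[A] P) (w : k ⊗[A] J), ∃ w', ι w' = s * ι w ∧
      g w' = (ψ (φ s)) • g w := by
    intro s w
    induction s with
    | zero => exact ⟨0, by simp, by simp⟩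
    | add x y hx hy =>
      obtain ⟨a, ha, ha'⟩ := hx
      obtain ⟨b, hb, hb'⟩ := hy
      exact ⟨a + b, by rw [map_add, ha, hb, add_mul], by
        rw [map_add, ha', hb', map_add, map_add, add_smul]⟩
    | tmul c p =>
      induction w with
      | zero => exact ⟨0, by simp, by simp⟩
      | add x y hx hy =>
        obtain ⟨a, ha, ha'⟩ := hx
        obtain ⟨b, hb, hb'⟩ := hy
        exact ⟨a + b, by rw [map_add, ha, hb, map_add, mul_add], by
          rw [map_add, ha', hb', map_add, smul_add]⟩
      | tmul d j =>
        refine ⟨(c * d) ⊗ₜ (p • j), ?_, ?_⟩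
        · simp [ι]
        · have : ψ (φ (c ⊗ₜ p)) = c * algebraMap P k p := by
            rw [← hθ, ← smul_eq_mul, ← map_smul, TensorProduct.smul_tmul', smul_eq_mul, mul_one]
            rfl
          rw [this]
          simp only [g, LinearMap.liftBaseChange_tmul, g0, LinearMap.coe_mk, AddHom.coe_mk]
          rw [TensorProduct.tmul_smul, ← algebraMap_smul k p, smul_smul, smul_smul]
          congr 1
          ring
  have hz : ∀ y ∈ (RingHom.ker ψ).comap φ.toRingHom * RingHom.ker φ.toRingHom, ∃ w, ι w = y ∧ g w = 0 := by
    intro y hy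
    induction hy using Submodule.mul_induction_on' with
    | mem_mul_mem m hm n hn =>
      obtain ⟨v, rfl⟩ := hιr n hn
      obtain ⟨w, hw, hw'⟩ := hmul m v
      refine ⟨w, hw, ?_⟩
      have hm' : ψ (φ m) = 0 := hm
      rw [hw', hm', zero_smul]
    | add x hx y hy h1 h2 =>
      obtain ⟨a, ha, ha'⟩ := h1
      obtain ⟨b, hb, hb'⟩ := h2
      exact ⟨a + b, by rw [map_add, ha, hb], by rw [map_add, ha', hb', add_zero]⟩
  obtain ⟨w1, hw1, hw1'⟩ := hz _ hsf
  obtain ⟨w2, hw2, hw2'⟩ := hmul s (1 ⊗ₜ f)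
  have : ι (1 ⊗ₜ f) = 1 ⊗ₜ f.1 := by simp [ι]
  have heq : w1 = w2 := hιi (by rw [hw1, hw2, this])
  rw [← heq, hw1'] at hw2'
  have hs' : ψ (φ s) ≠ 0 := hs
  have h3 : g (1 ⊗ₜ f) = 0 := (smul_eq_zero.mp hw2'.symm).resolve_left hs'
  simpa [g, g0] using h3

end PerfAux

namespace PerfAux

theorem perfect_local_aux {A B : Type u} [CommRing A] [CommRing B] [Algebra A B] [Module.Flat A B]
    {M : Type u} [AddCommGroup M] [Module (B ⊗[A] B) M] [Module B M] [IsScalarTower B (B ⊗[A] B) M]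
    [Module.Flat B M] (f : B ⊗[A] B →ₗ[B ⊗[A] B] M) (hf : Function.Surjective f)
    (hker : ∀ x, f x = 0 ↔ Algebra.TensorProduct.lmul' A (S := B) x = 0)
    (h : Module.IsPerfect (B ⊗[A] B) M)
    {S : Type u} [CommRing S] [Algebra A S] [Algebra B S] [IsScalarTower A B S] (Q : Submonoid B)
    [IsLocalization Q S] [IsLocalRing S]
    (ψ : ResidueField S ⊗[A] S →ₐ[ResidueField S] ResidueField S)
    (hψ : ∀ s : S, ψ (1 ⊗ₜ s) = residue S s) [hpr : (RingHom.ker ψ).IsPrime]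
    (T : Type u) [CommRing T] [Algebra (ResidueField S ⊗[A] S) T]
    [IsLocalization.AtPrime T (RingHom.ker ψ)] [IsLocalRing T] :
    Module.IsPerfect T (ResidueField T) := by
  obtain ⟨n, h⟩ := h
  refine ⟨n, ?_⟩
  set k := ResidueField S with hk
  let R := B ⊗[A] B
  let R1 := k ⊗[A] B
  let ρ : R →ₐ[B] R1 := Algebra.TensorProduct.map (Algebra.ofId B k) (AlgHom.id A B)
  let _ : Algebra R R1 := ρ.toRingHom.toAlgebra
  have hρ : algebraMap R R1 = ρ.toRingHom := rfl
  have t1 : IsScalarTower B R R1 := .of_algebraMap_eq fun b => by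
    rw [hρ]; exact (ρ.commutes b).symm
  have hpush : Algebra.IsPushout B k R R1 := ⟨by
    refine IsBaseChange.of_equiv (AlgebraTensorModule.cancelBaseChange A B k k B) ?_
    intro x
    induction (x : B ⊗[A] B) using TensorProduct.induction_on with
    | zero => simp
    | add x y hx hy => exact (by simpa only [TensorProduct.tmul_add, map_add] using congr($hx + $hy))
    | tmul x y =>
      change _ = ρ (x ⊗ₜ y)
      refine (AlgebraTensorModule.cancelBaseChange_tmul (R := A) (A := B) (B := k) (M := k) (N := B) 1 y x).trans ?_
      change ((x • (1 : k)) ⊗ₜ y : k ⊗[A] B) = (algebraMap B k x) ⊗ₜ y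
      rw [Algebra.smul_def, mul_one]⟩
  have hflatR : Module.Flat B R := inferInstance
  have h1 : Module.IsPerfectLE R1 n (R1 ⊗[R] M) := IsPerfectLE.baseChange_pushout (B := B) (k := k) h
  let α : R1 →ₐ[k] k ⊗[A] S := Algebra.TensorProduct.map (.id k k) (IsScalarTower.toAlgHom A B S)
  have hα : α.toRingHom.Flat := by
    refine RingHom.Flat.tensorProductMap (f := AlgHom.id k k) (g := IsScalarTower.toAlgHom A B S) ?_ ?_
    · exact RingHom.Flat.of_bijective Function.bijective_id
    · change (algebraMap B S).Flat
      rw [RingHom.flat_algebraMap_iff]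
      exact IsLocalization.flat S Q
  let β : R1 →+* T := (algebraMap (k ⊗[A] S) T).comp α.toRingHom
  have hβ : β.Flat := by
    refine RingHom.Flat.comp hα ?_
    rw [RingHom.flat_algebraMap_iff]
    exact IsLocalization.flat T (RingHom.ker ψ).primeCompl
  let _ : Algebra R1 T := β.toAlgebra
  have hβ' : Module.Flat R1 T := hβ
  have h2 := IsPerfectLE.baseChange_flat T h1
  let _ : Algebra R T := (β.comp ρ.toRingHom).toAlgebra
  have hRT : ∀ x y : B, algebraMap R T (x ⊗ₜ y) = algebraMap (k ⊗[A] S) T (algebraMap B k x ⊗ₜ algebraMap B S y) :=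
    fun x y => rfl
  have t2 : IsScalarTower R R1 T := .of_algebraMap_eq fun x => rfl
  have h3 := IsPerfectLE.of_equiv (AlgebraTensorModule.cancelBaseChange R R1 T T M) h2
  let g : T →ₗ[T] ResidueField T := Algebra.linearMap T (ResidueField T)
  have hg : Function.Surjective g := residue_surjective
  have hsub : ∀ b : B, algebraMap (k ⊗[A] S) T (1 ⊗ₜ algebraMap B S b - algebraMap B k b ⊗ₜ 1) ∈
      Ideal.map (algebraMap R T) (LinearMap.ker f) := by
    intro b
    have : algebraMap (k ⊗[A] S) T (1 ⊗ₜ algebraMap B S b - algebraMap B k b ⊗ₜ 1) =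
        algebraMap R T (1 ⊗ₜ b - b ⊗ₜ 1) := by
      rw [map_sub, map_sub, hRT, hRT, map_one, map_one]
    rw [this]
    apply Ideal.mem_map_of_mem
    rw [LinearMap.mem_ker, hker]
    simp
  have hsub2 : ∀ s : S, algebraMap (k ⊗[A] S) T (1 ⊗ₜ s - residue S s ⊗ₜ 1) ∈
      Ideal.map (algebraMap R T) (LinearMap.ker f) := by
    intro s
    obtain ⟨b, t, rfl⟩ := IsLocalization.exists_mk'_eq Q s
    set s := IsLocalization.mk' S b t with hs
    have hst : s * algebraMap B S t = algebraMap B S b := IsLocalization.mk'_spec S b t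
    have hu : IsUnit (algebraMap (k ⊗[A] S) T (1 ⊗ₜ algebraMap B S t)) := by
      refine IsLocalization.map_units T (⟨1 ⊗ₜ algebraMap B S t, ?_⟩ : (RingHom.ker ψ).primeCompl)
      change ¬ (ψ _ = 0)
      rw [hψ]
      have := (IsLocalization.map_units S t).map (residue S)
      exact this.ne_zero
    rw [← Ideal.unit_mul_mem_iff_mem _ hu, ← map_mul]
    have hr : residue S s * algebraMap B k t = algebraMap B k b := by
      have := congr(residue S $hst)
      rw [map_mul] at this
      exact this
    have : (1 ⊗ₜ algebraMap B S t : k ⊗[A] S) * (1 ⊗ₜ s - residue S s ⊗ₜ 1) =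
        (1 ⊗ₜ algebraMap B S b - algebraMap B k b ⊗ₜ 1) - (residue S s ⊗ₜ 1) *
          (1 ⊗ₜ algebraMap B S t - algebraMap B k t ⊗ₜ 1) := by
      rw [← hst, ← hr]
      simp only [mul_sub, Algebra.TensorProduct.tmul_mul_tmul, one_mul, mul_one]
      rw [mul_comm s]
      abel
    rw [this, map_sub, map_mul]
    exact sub_mem (hsub b) (Ideal.mul_mem_left _ _ (hsub t))
  have hsub3 : ∀ x : k ⊗[A] S, algebraMap (k ⊗[A] S) T (x - ψ x ⊗ₜ 1) ∈
      Ideal.map (algebraMap R T) (LinearMap.ker f) := by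
    intro x
    induction x with
    | zero => simp
    | add x y hx hy =>
      have := add_mem hx hy
      rw [← map_add] at this
      convert this using 2
      rw [map_add, TensorProduct.add_tmul]
      abel
    | tmul c s =>
      have h5 : ψ (c ⊗ₜ s) = c * residue S s := by
        rw [← hψ, ← smul_eq_mul, ← map_smul, TensorProduct.smul_tmul', smul_eq_mul, mul_one]
      have : (c ⊗ₜ s - ψ (c ⊗ₜ s) ⊗ₜ 1 : k ⊗[A] S) = (c ⊗ₜ 1) * (1 ⊗ₜ s - residue S s ⊗ₜ 1) := by
        rw [h5, mul_sub]
        simp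
      rw [this, map_mul]
      exact Ideal.mul_mem_left _ _ (hsub2 s)
  have hkg : LinearMap.ker g = Ideal.map (algebraMap R T) (LinearMap.ker f) := by
    have hkg' : LinearMap.ker g = maximalIdeal T := by
      ext x; exact residue_eq_zero_iff x
    rw [hkg']
    apply le_antisymm
    · rw [← IsLocalization.AtPrime.map_eq_maximalIdeal (RingHom.ker ψ) T, Ideal.map_le_iff_le_comap]
      intro x hx
      have := hsub3 x
      have hx' : ψ x = 0 := hx
      rwa [hx', TensorProduct.zero_tmul, sub_zero] at this
    · rw [Ideal.map_le_iff_le_comap]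
      intro x hx
      rw [LinearMap.mem_ker, hker] at hx
      rw [Ideal.mem_comap]
      change algebraMap (k ⊗[A] S) T (α (ρ x)) ∈ maximalIdeal T
      rw [← IsLocalization.AtPrime.map_eq_maximalIdeal (RingHom.ker ψ) T]
      apply Ideal.mem_map_of_mem
      have : ∀ x : B ⊗[A] B, ψ (α (ρ x)) = algebraMap B k (Algebra.TensorProduct.lmul' A (S := B) x) := by
        intro x
        induction x with
        | zero => simp
        | add x y hx hy => simp only [map_add, hx, hy]
        | tmul x y =>
          have h6 : α (ρ (x ⊗ₜ y)) = (algebraMap B k x) • (1 ⊗ₜ algebraMap B S y) := by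
            rw [TensorProduct.smul_tmul', smul_eq_mul, mul_one]; rfl
          rw [h6, map_smul, hψ, Algebra.TensorProduct.lmul'_apply_tmul, map_mul]
          rfl
      rw [RingHom.mem_ker, this, hx, map_zero]
  obtain ⟨e⟩ := cyclic_baseChange f hf g hg hkg
  exact IsPerfectLE.of_equiv e h3

theorem perfect_local {A B : Type u} [CommRing A] [CommRing B] [Algebra A B] [Module.Flat A B]
    {M : Type u} [AddCommGroup M] [Module (B ⊗[A] B) M] [Module B M] [IsScalarTower B (B ⊗[A] B) M]
    [Module.Flat B M] (f : B ⊗[A] B →ₗ[B ⊗[A] B] M) (hf : Function.Surjective f)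
    (hker : ∀ x, f x = 0 ↔ Algebra.TensorProduct.lmul' A (S := B) x = 0)
    (h : Module.IsPerfect (B ⊗[A] B) M)
    {S : Type u} [CommRing S] [Algebra A S] [Algebra B S] [IsScalarTower A B S] (Q : Submonoid B)
    [IsLocalization Q S] [IsLocalRing S]
    (ψ : ResidueField S ⊗[A] S →ₐ[ResidueField S] ResidueField S)
    (hψ : ∀ s : S, ψ (1 ⊗ₜ s) = residue S s) [hpr : (RingHom.ker ψ).IsPrime] :
    Module.IsPerfect (Localization.AtPrime (RingHom.ker ψ))
      (ResidueField (Localization.AtPrime (RingHom.ker ψ))) :=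
  perfect_local_aux f hf hker h Q ψ hψ _

end PerfAux

namespace PerfAux

theorem formallySmooth_of_atPrime {A B : Type u} [CommRing A] [CommRing B] [Algebra A B]
    [IsNoetherianRing A] [Algebra.EssFiniteType A B]
    (h : ∀ (q : Ideal B) [q.IsPrime], Algebra.FormallySmooth A (Localization.AtPrime q)) :
    Algebra.FormallySmooth A B := by
  have : IsNoetherianRing B := Algebra.EssFiniteType.isNoetherianRing A B
  have h1 : Algebra.smoothLocus A B = Set.univ := Set.eq_univ_of_forall fun p => h p.asIdeal
  rw [Algebra.smoothLocus_eq_compl_support_inter, ← Set.univ_subset_iff, Set.subset_inter_iff,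
    Set.univ_subset_iff, Set.univ_subset_iff, Set.compl_univ_iff,
    Module.support_eq_empty_iff] at h1
  have : Module.FinitePresentation B Ω[B⁄A] := Module.finitePresentation_of_finite _ _
  have := Module.freeLocus_eq_univ_iff.mp h1.2
  exact (Algebra.formallySmooth_iff _ _).mpr ⟨this, h1.1⟩

theorem smooth_of_perfect {A B : Type u} [CommRing A] [CommRing B] [Algebra A B]
    [IsNoetherianRing A] [Algebra.EssFiniteType A B] (hflat : Module.Flat A B)
    {M : Type u} [AddCommGroup M] [Module (B ⊗[A] B) M] [Module B M] [IsScalarTower B (B ⊗[A] B) M]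
    [Module.Flat B M] (f : B ⊗[A] B →ₗ[B ⊗[A] B] M) (hf : Function.Surjective f)
    (hker : ∀ x, f x = 0 ↔ Algebra.TensorProduct.lmul' A (S := B) x = 0)
    (h : Module.IsPerfect (B ⊗[A] B) M) : Algebra.FormallySmooth A B := by
  refine formallySmooth_of_atPrime fun q hq => ?_
  let S := Localization.AtPrime q
  have : Algebra.EssFiniteType B S := .of_isLocalization _ q.primeCompl
  have : Algebra.EssFiniteType A S := .comp _ B _
  have : Module.Flat B S := IsLocalization.flat S q.primeCompl
  have : Module.Flat A S := Module.Flat.trans A B S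
  obtain ⟨P, _, _, _, _, _, _, _, φ, hφ⟩ := exists_pres A S
  have : IsNoetherianRing P := Algebra.EssFiniteType.isNoetherianRing A P
  let _ : Algebra P S := φ.toRingHom.toAlgebra
  have : IsScalarTower A P S := .of_algebraMap_eq fun x => (φ.commutes x).symm
  let k := ResidueField S
  let ψ : k ⊗[A] S →ₐ[k] k :=
    Algebra.TensorProduct.lift (AlgHom.id k k) (IsScalarTower.toAlgHom A S k) fun _ _ => .all _ _
  have hψ : ∀ s, ψ (1 ⊗ₜ s) = residue S s := fun s => by
    simp [ψ]; rfl
  have : (RingHom.ker ψ).IsPrime := RingHom.ker_isPrime _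
  exact smooth_of_local (P := P) hφ ψ hψ (perfect_local f hf hker h q.primeCompl ψ hψ)

theorem smooth_of_perfect' {A B : Type u} [CommRing A] [CommRing B] [Algebra A B]
    [IsNoetherianRing A] [Algebra.EssFiniteType A B] (hflat : Module.Flat A B)
    (h : letI := ((Algebra.TensorProduct.lmul' A (S := B)).toRingHom).toModule
     Module.IsPerfect (B ⊗[A] B) B) : Algebra.FormallySmooth A B := by
  let _ := ((Algebra.TensorProduct.lmul' A (S := B)).toRingHom).toModule
  have : IsScalarTower B (B ⊗[A] B) B := .of_algebraMap_smul fun r x => by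
    change Algebra.TensorProduct.lmul' A (S := B) (r ⊗ₜ 1) * x = r * x
    simp
  refine smooth_of_perfect hflat (M := B) ((LinearMap.toSpanSingleton (B ⊗[A] B) B 1)) ?_ ?_ h
  · intro b
    refine ⟨b ⊗ₜ 1, ?_⟩
    change Algebra.TensorProduct.lmul' A (S := B) (b ⊗ₜ 1) * 1 = b
    simp
  · intro x
    change Algebra.TensorProduct.lmul' A (S := B) x * 1 = 0 ↔ _
    rw [mul_one]

end PerfAux

namespace PerfAux

theorem formallyEtale_of_basis {B L κ : Type u} [CommRing B] [CommRing L] [Algebra B L]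
    [Algebra.FormallySmooth B L] (y : κ → L) (b : Module.Basis κ L Ω[L⁄B])
    (hb : ∀ i, b i = KaehlerDifferential.D B L (y i)) [Algebra (MvPolynomial κ B) L]
    [IsScalarTower B (MvPolynomial κ B) L]
    (hy : ∀ i, algebraMap (MvPolynomial κ B) L (MvPolynomial.X i) = y i) :
    Algebra.FormallyEtale (MvPolynomial κ B) L := by
  let D := MvPolynomial κ B
  let b' := (KaehlerDifferential.mvPolynomialBasis B κ).baseChange L
  have hbb : KaehlerDifferential.mapBaseChange B D L = (b'.equiv b (Equiv.refl κ)).toLinearMap := by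
    apply b'.ext
    intro i
    simp only [LinearEquiv.coe_coe, Module.Basis.equiv_apply, Equiv.refl_apply, hb]
    simp only [b', Module.Basis.baseChange_apply, KaehlerDifferential.mapBaseChange_tmul, one_smul,
      KaehlerDifferential.mvPolynomialBasis_apply, KaehlerDifferential.map_D, D, hy]
  have hbij : Function.Bijective (KaehlerDifferential.mapBaseChange B D L) := by
    rw [hbb]; exact LinearEquiv.bijective _
  constructor
  · refine ⟨fun x z => ?_⟩
    have : ∀ x : Ω[L⁄D], x = 0 := by
      intro x
      obtain ⟨w, rfl⟩ := KaehlerDifferential.map_surjective B D L x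
      exact (KaehlerDifferential.exact_mapBaseChange_map B D L w).mpr (hbij.2 w)
    rw [this x, this z]
  · refine ⟨fun x z => ?_⟩
    have : ∀ x : Algebra.H1Cotangent D L, x = 0 := by
      intro x
      have h1 : Algebra.H1Cotangent.δ B D L x = 0 := by
        apply hbij.1
        rw [map_zero]
        exact (Algebra.H1Cotangent.exact_δ_mapBaseChange B D L _).mpr ⟨x, rfl⟩
      obtain ⟨w, rfl⟩ := (Algebra.H1Cotangent.exact_map_δ B D L _).mp h1
      rw [Subsingleton.elim w 0, map_zero]
    rw [this x, this z]

theorem flat_of_formallySmooth (D L : Type u) [CommRing D] [CommRing L] [Algebra D L]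
    [IsNoetherianRing D] [Algebra.EssFiniteType D L] [Algebra.FormallySmooth D L] :
    Module.Flat D L := by
  obtain ⟨P, _, _, _, _, _, _, _, φ, hφ⟩ := exists_pres D L
  have : IsNoetherianRing P := Algebra.EssFiniteType.isNoetherianRing D P
  exact Algebra.FormallySmooth.flat_of_algHom_of_isNoetherianRing φ hφ

theorem isWeaklyRegular_X {B κ : Type u} [CommRing B] (l : List κ) (hl : l.Nodup) :
    RingTheory.Sequence.IsWeaklyRegular (MvPolynomial κ B)
      (l.map (MvPolynomial.X (R := B))) := by
  refine ⟨fun i hi => ?_⟩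
  rw [isSMulRegular_quotient_iff_mem_of_smul_mem]
  have hi' : i < l.length := by simpa using hi
  have hs : (Ideal.ofList (List.take i (l.map (MvPolynomial.X (R := B)))) • ⊤ :
      Submodule (MvPolynomial κ B) (MvPolynomial κ B)) =
      Ideal.span (MvPolynomial.X '' {j | j ∈ l.take i}) := by
    rw [Ideal.smul_eq_mul, Ideal.mul_top, Ideal.ofList]
    congr 1
    ext x
    simp [← List.map_take]
  rw [hs]
  intro p hp
  rw [MvPolynomial.mem_ideal_span_X_image] at hp ⊢
  intro m hm
  rw [List.getElem_map, smul_eq_mul] at hp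
  have hnot : l[i] ∉ l.take i := by
    intro hmem
    obtain ⟨j, hj, hj'⟩ := List.mem_take_iff_getElem.mp hmem
    have := (List.Nodup.getElem_inj_iff hl).mp hj'
    omega
  obtain ⟨j, hj, hj'⟩ := hp (Finsupp.single l[i] 1 + m) (by
    rw [MvPolynomial.mem_support_iff, MvPolynomial.coeff_X_mul]
    exact MvPolynomial.mem_support_iff.mp hm)
  refine ⟨j, hj, ?_⟩
  have hne : l[i] ≠ j := by rintro rfl; exact hnot hj
  simpa [Finsupp.single_apply, hne] using hj'

theorem span_D_eq_top {B L : Type u} [CommRing B] [CommRing L] [Algebra B L] [IsLocalRing L]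
    [Module.Finite L Ω[L⁄B]] (J : Ideal L) (hJ : J ≤ maximalIdeal L)
    [Algebra.FormallyUnramified B (L ⧸ J)] :
    Submodule.span L (Set.range fun j : J => KaehlerDifferential.D B L j) = ⊤ := by
  have hsurj : Function.Surjective (algebraMap L (L ⧸ J)) := Ideal.Quotient.mk_surjective
  have key : ⊤ ≤ Submodule.span L (Set.range fun j : J => KaehlerDifferential.D B L j) ⊔
      J • (⊤ : Submodule L Ω[L⁄B]) := by
    intro x _
    obtain ⟨c, hc⟩ := (KaehlerDifferential.exact_kerCotangentToTensor_mapBaseChange B L (L ⧸ J) hsurj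
      (1 ⊗ₜ x)).mp (Subsingleton.elim _ _)
    obtain ⟨j, rfl⟩ := Ideal.toCotangent_surjective _ c
    rw [KaehlerDifferential.kerCotangentToTensor_toCotangent] at hc
    have hj : (j : L) ∈ J := Ideal.Quotient.eq_zero_iff_mem.mp ((RingHom.mem_ker).mp j.2)
    have h2 : (1 : L ⧸ J) ⊗ₜ[L] (x - KaehlerDifferential.D B L j) = 0 := by
      rw [TensorProduct.tmul_sub, sub_eq_zero, hc]
    rw [one_tmul_eq_zero_iff] at h2
    rw [← add_sub_cancel (KaehlerDifferential.D B L j) x]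
    exact Submodule.add_mem_sup (Submodule.subset_span ⟨⟨j, hj⟩, rfl⟩) h2
  refine top_le_iff.mp (Submodule.le_of_le_smul_of_le_jacobson_bot Module.Finite.fg_top ?_ key)
  rwa [IsLocalRing.jacobson_eq_maximalIdeal _ bot_ne_top]

theorem pd_local {B L : Type u} [CommRing B] [CommRing L] [Algebra B L] [IsLocalRing L]
    [IsNoetherianRing B] [Algebra.EssFiniteType B L] [Algebra.FormallySmooth B L]
    (J : Ideal L) (hJ : J ≤ maximalIdeal L) [Algebra.FormallyEtale B (L ⧸ J)]
    (n : ℕ) (hn : Module.finrank L Ω[L⁄B] ≤ n) :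
    HasProjectiveDimensionLE (ModuleCat.of L (L ⧸ J)) n := by
  have : IsNoetherianRing L := Algebra.EssFiniteType.isNoetherianRing B L
  have : Module.FinitePresentation L Ω[L⁄B] := Module.finitePresentation_of_finite _ _
  obtain ⟨κ, a, b, hb⟩ := Module.exists_basis_of_span_of_flat
    (fun j : J => KaehlerDifferential.D B L j) (span_D_eq_top (B := B) J hJ)
  let _ : Fintype κ := @Fintype.ofFinite _ (Module.Finite.finite_basis b)
  have hcard : Fintype.card κ ≤ n := by rwa [← Module.finrank_eq_card_basis b]
  let y : κ → L := fun i => a i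
  let D := MvPolynomial κ B
  let _ : Algebra D L := (MvPolynomial.aeval y).toRingHom.toAlgebra
  have : IsScalarTower B D L := .of_algebraMap_eq fun r => ((MvPolynomial.aeval y).commutes r).symm
  have hy : ∀ i, algebraMap D L (MvPolynomial.X i) = y i := fun i => MvPolynomial.aeval_X y i
  have : Algebra.FormallyEtale D L := formallyEtale_of_basis y b hb hy
  have : Algebra.EssFiniteType D L := .of_comp B D L
  have : IsNoetherianRing D := inferInstanceAs (IsNoetherianRing (MvPolynomial κ B))
  have : Module.Flat D L := flat_of_formallySmooth D L
  let l := (Finset.univ : Finset κ).toList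
  have hreg := RingTheory.Sequence.IsWeaklyRegular.of_flat (S := L)
    (isWeaklyRegular_X (B := B) l (Finset.nodup_toList _))
  set rs := List.map (algebraMap (MvPolynomial κ B) L) (List.map (MvPolynomial.X (R := B)) l) with hrs
  have hrs' : rs = l.map y := by
    rw [hrs, List.map_map]
    exact List.map_congr_left fun i _ => hy i
  have hK : Ideal.ofList rs = Ideal.span (Set.range y) := by
    rw [hrs', Ideal.ofList]
    congr 1
    ext x
    simp [l]
  let K := Ideal.span (Set.range y)
  have hKJ : K ≤ J := by
    rw [Ideal.span_le]
    rintro _ ⟨i, rfl⟩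
    exact (a i).2
  have hEur : Algebra.FormallyUnramified B (L ⧸ K) := by
    refine ⟨⟨fun u v => ?_⟩⟩
    have hz : KaehlerDifferential.map B B L (L ⧸ K) = 0 := by
      apply b.ext
      intro i
      rw [hb, KaehlerDifferential.map_D]
      have : algebraMap L (L ⧸ K) (a i) = 0 := by
        rw [Ideal.Quotient.algebraMap_eq, Ideal.Quotient.eq_zero_iff_mem]
        exact Ideal.subset_span ⟨i, rfl⟩
      rw [this, map_zero, LinearMap.zero_apply]
    have hs := KaehlerDifferential.map_surjective_of_surjective B B L (L ⧸ K) Ideal.Quotient.mk_surjective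
    obtain ⟨u, rfl⟩ := hs u
    obtain ⟨v, rfl⟩ := hs v
    rw [hz]; rfl
  let _ : Algebra (L ⧸ K) (L ⧸ J) := (Ideal.Quotient.factor hKJ).toAlgebra
  have : IsScalarTower B (L ⧸ K) (L ⧸ J) := .of_algebraMap_eq fun r => rfl
  have het : Algebra.FormallyEtale (L ⧸ K) (L ⧸ J) := .of_restrictScalars (R := B)
  have hfs : Function.Surjective (algebraMap (L ⧸ K) (L ⧸ J)) := Ideal.Quotient.factor_surjective hKJ
  rw [Algebra.FormallyEtale.iff_of_surjective hfs] at het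
  have hKm : K ≤ maximalIdeal L := hKJ.trans hJ
  have hKtop : K ≠ ⊤ := fun h => (Ideal.IsPrime.ne_top (inferInstance : (maximalIdeal L).IsPrime)) (top_le_iff.mp (h ▸ hKm))
  have : Nontrivial (L ⧸ K) := Ideal.Quotient.nontrivial_iff.mpr hKtop
  have : IsLocalRing (L ⧸ K) := .of_surjective' (Ideal.Quotient.mk K) Ideal.Quotient.mk_surjective
  have hJtop : J ≠ ⊤ := fun h => (Ideal.IsPrime.ne_top (inferInstance : (maximalIdeal L).IsPrime)) (top_le_iff.mp (h ▸ hJ))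
  have : Nontrivial (L ⧸ J) := Ideal.Quotient.nontrivial_iff.mpr hJtop
  have hker : RingHom.ker (algebraMap (L ⧸ K) (L ⧸ J)) = ⊥ := by
    rcases (Ideal.isIdempotentElem_iff_eq_bot_or_top_of_isLocalRing _).mp het with h | h
    · exact h
    · exact absurd h (RingHom.ker_ne_top _)
  have hJK : J = K := by
    refine le_antisymm (fun x hx => ?_) hKJ
    have : Ideal.Quotient.mk K x ∈ RingHom.ker (algebraMap (L ⧸ K) (L ⧸ J)) := by
      rw [RingHom.mem_ker]
      exact Ideal.Quotient.eq_zero_iff_mem.mpr hx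
    rw [hker] at this
    exact Ideal.Quotient.eq_zero_iff_mem.mp this
  have hpd := ModuleCat.projectiveDimension_quotient_eq_add_length_of_isWeaklyRegular (ModuleCat.of L L) rs
    hreg (by
      rw [hrs']
      intro r hr
      obtain ⟨i, -, rfl⟩ := List.mem_map.mp hr
      exact hJ (a i).2)
  rw [ModuleCat.projectiveDimension_eq_zero_of_projective (ModuleCat.of L L), zero_add] at hpd
  have hlen : rs.length ≤ n := by
    rw [hrs', List.length_map, Finset.length_toList]
    exact hcard
  have h3 : HasProjectiveDimensionLE (ModuleCat.of L (L ⧸ (Ideal.ofList rs • (⊤ : Submodule L L)))) n := by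
    rw [← projectiveDimension_le_iff]
    refine hpd.le.trans ?_
    exact_mod_cast hlen
  have h4 : Ideal.ofList rs • (⊤ : Submodule L L) = J := by
    rw [hK, Ideal.smul_eq_mul, Ideal.mul_top, hJK]
  rwa [h4] at h3

end PerfAux

namespace PerfAux

theorem pd_atPrime {B R L : Type u} [CommRing B] [CommRing R] [CommRing L] [Algebra B R]
    [Algebra R L] [Algebra B L] [IsScalarTower B R L] [IsNoetherianRing B]
    [Algebra.EssFiniteType B R] [Algebra.FormallySmooth B R] (p : Ideal R) [p.IsPrime]
    [IsLocalization.AtPrime L p] [IsLocalRing L] (μ : R →ₐ[B] B)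
    (N : ℕ) (s : (Fin N → R) →ₗ[R] Ω[R⁄B]) (hs : Function.Surjective s) :
    HasProjectiveDimensionLE (ModuleCat.of L (L ⧸ (RingHom.ker μ).map (algebraMap R L))) N := by
  set J := (RingHom.ker μ).map (algebraMap R L) with hJdef
  have : Algebra.FormallyEtale R L := .of_isLocalization p.primeCompl
  have : Algebra.FormallySmooth B L := .comp B R L
  have : Algebra.EssFiniteType R L := .of_isLocalization _ p.primeCompl
  have : Algebra.EssFiniteType B L := .comp B R L
  have hfr : Module.finrank L Ω[L⁄B] ≤ N := by
    let e := KaehlerDifferential.tensorKaehlerEquivOfFormallyEtale B R L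
    let φ := e.toLinearMap ∘ₗ (s.baseChange L) ∘ₗ (TensorProduct.piScalarRight R L L (Fin N)).symm.toLinearMap
    have hφ : Function.Surjective φ := e.surjective.comp
      ((LinearMap.lTensor_surjective L hs).comp (LinearEquiv.surjective _))
    have := LinearMap.finrank_le_finrank_of_surjective hφ
    simpa using this
  have hμ : Function.Surjective μ := fun b => ⟨algebraMap B R b, by rw [μ.commutes]; rfl⟩
  have hloc : IsLocalization (p.primeCompl.map μ.toRingHom) (L ⧸ J) := by
    refine IsLocalization.of_surjective (S := L) p.primeCompl μ.toRingHom hμ (Ideal.Quotient.mk J)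
      Ideal.Quotient.mk_surjective ?_ ?_
    · ext x
      change Ideal.Quotient.mk J (algebraMap R L x) = Ideal.Quotient.mk J (algebraMap B L (μ x))
      rw [Ideal.Quotient.eq, IsScalarTower.algebraMap_apply B R L, ← map_sub]
      apply Ideal.mem_map_of_mem
      rw [RingHom.mem_ker, map_sub, μ.commutes]
      exact sub_self _
    · rw [Ideal.mk_ker]; exact le_rfl
  have : Algebra.FormallyEtale B (L ⧸ J) := .of_isLocalization (p.primeCompl.map μ.toRingHom)
  by_cases hJ : J ≤ maximalIdeal L
  · exact pd_local J hJ N hfr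
  · have hJt : J = ⊤ := by
      by_contra h
      exact hJ (le_maximalIdeal h)
    have : Subsingleton (L ⧸ J) := Ideal.Quotient.subsingleton_iff.mpr hJt
    have hz : Limits.IsZero (ModuleCat.of L (L ⧸ J)) := ModuleCat.isZero_of_subsingleton _
    have := hz.hasProjectiveDimensionLT_zero
    exact hasProjectiveDimensionLT_of_ge _ 0 _ (Nat.zero_le _)

theorem isPerfect_of_retract {B R M : Type u} [CommRing B] [CommRing R] [Algebra B R]
    [IsNoetherianRing B] [Algebra.EssFiniteType B R] [Algebra.FormallySmooth B R] (μ : R →ₐ[B] B)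
    [AddCommGroup M] [Module R M] (f : R →ₗ[R] M) (hf : Function.Surjective f)
    (hker : ∀ x, f x = 0 ↔ μ x = 0) : Module.IsPerfect R M := by
  have : IsNoetherianRing R := Algebra.EssFiniteType.isNoetherianRing B R
  have : Module.Finite R M := Module.Finite.of_surjective f hf
  obtain ⟨N, s, hs⟩ := Module.Finite.exists_fin' R Ω[R⁄B]
  refine ⟨N, IsPerfectLE.of_hasPD ?_⟩
  rw [ModuleCat.hasProjectiveDimensionLE_iff_forall_primeSpectrum]
  intro p
  let Rp := Localization.AtPrime p.asIdeal
  have hpd := pd_atPrime (L := Rp) p.asIdeal μ N s hs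
  set J := (RingHom.ker μ).map (algebraMap R Rp) with hJdef
  have hkf : LinearMap.ker f = RingHom.ker μ := by
    ext x
    exact hker x
  obtain ⟨e1⟩ := cyclic_baseChange (T := Rp) f hf (Submodule.mkQ J) (Submodule.mkQ_surjective J)
    (by rw [Submodule.ker_mkQ, hkf])
  have hbc : IsBaseChange Rp ((ModuleCat.of R M).localizedModuleMkLinearMap p.asIdeal.primeCompl) :=
    (isLocalizedModule_iff_isBaseChange p.asIdeal.primeCompl Rp _).mp
      (ModuleCat.localizedModule_isLocalizedModule (ModuleCat.of R M) p.asIdeal.primeCompl)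
  exact ModuleCat.hasProjectiveDimensionLE_of_linearEquiv (M := ModuleCat.of Rp (Rp ⧸ J))
    (N := (ModuleCat.of R M).localizedModule p.asIdeal.primeCompl) (e1.symm.trans hbc.equiv) N

theorem perfect_of_smooth {A B : Type u} [CommRing A] [CommRing B] [Algebra A B]
    [IsNoetherianRing A] [Algebra.EssFiniteType A B] [Algebra.FormallySmooth A B] :
    letI := ((Algebra.TensorProduct.lmul' A (S := B)).toRingHom).toModule
    Module.IsPerfect (B ⊗[A] B) B := by
  let _ := ((Algebra.TensorProduct.lmul' A (S := B)).toRingHom).toModule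
  have : IsNoetherianRing B := Algebra.EssFiniteType.isNoetherianRing A B
  refine isPerfect_of_retract (Algebra.TensorProduct.lmul'' A (S := B))
    (LinearMap.toSpanSingleton (B ⊗[A] B) B 1) ?_ ?_
  · intro b
    refine ⟨b ⊗ₜ 1, ?_⟩
    change Algebra.TensorProduct.lmul' A (S := B) (b ⊗ₜ 1) * 1 = b
    simp
  · intro x
    change Algebra.TensorProduct.lmul' A (S := B) x * 1 = 0 ↔ Algebra.TensorProduct.lmul' A (S := B) x = 0
    rw [mul_one]

end PerfAux

end

open TensorProduct in
/-- **Homological smoothness is smoothness, for flat essentially-of-finite-type algebras.**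
Let `A` be a commutative noetherian ring and `B` a flat `A`-algebra which is essentially of
finite type over `A`.  Then `B` is a perfect module over the enveloping ring `B ⊗[A] B`
(acting through the multiplication map `μ : B ⊗[A] B → B`) if and only if `B` is a
formally smooth `A`-algebra. -/
theorem isPerfect_over_enveloping_iff_formallySmooth
    {A B : Type u} [CommRing A] [CommRing B] [Algebra A B]
    [IsNoetherianRing A] [Algebra.EssFiniteType A B]
    (hflat : Module.Flat A B) :
    (letI := ((Algebra.TensorProduct.lmul' A (S := B)).toRingHom).toModule
     Module.IsPerfect (B ⊗[A] B) B) ↔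
    Algebra.FormallySmooth A B := by
  exact ⟨fun h => PerfAux.smooth_of_perfect' hflat h, fun _ => PerfAux.perfect_of_smooth⟩
end

section
/- Let A be a commutative noetherian ring and let B be a flat A-algebra which is essentially of finite type over A, and let μ : B ⊗_A B → B denote the multiplication map. Then B is a formally smooth A-algebra if and only if for every prime ideal q of B, setting p = μ^{-1}(q), the kernel of the induced local homomorphism (B ⊗_A B)_p → B_q is generated by a (B ⊗_A B)_p-regular sequence (i.e., the diagonal μ is a local complete intersection). -/
universe u

/-- A surjective ring homomorphism `ψ : B →+* A` is a *local complete intersection* if for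
every prime `q` of `A`, with `p = ψ⁻¹(q)`, the kernel of the induced local homomorphism
`B_p →+* A_q` is generated by a `B_p`-regular sequence. -/
def RingHom.IsLocalCompleteIntersection {B A : Type u} [CommRing B] [CommRing A]
    (ψ : B →+* A) : Prop :=
  ∀ (q : Ideal A) (hq : q.IsPrime),
    haveI := hq
    haveI : (q.comap ψ).IsPrime := hq.comap ψ
    ∃ rs : List (Localization.AtPrime (q.comap ψ)),
      RingTheory.Sequence.IsRegular (Localization.AtPrime (q.comap ψ)) rs ∧
      RingHom.ker (Localization.localRingHom (q.comap ψ) q ψ rfl) = Ideal.ofList rs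

lemma aux_factor_nilp {T : Type*} [CommRing T] {J J' : Ideal T} (h : J ≤ J') (n : ℕ)
    (hn : J' ^ n ≤ J) : IsNilpotent (RingHom.ker (Ideal.Quotient.factor h)) := by
  refine ⟨n, ?_⟩
  have : RingHom.ker (Ideal.Quotient.factor h) = J'.map (Ideal.Quotient.mk J) := by
    ext z
    obtain ⟨t, rfl⟩ := Ideal.Quotient.mk_surjective z
    rw [RingHom.mem_ker, Ideal.Quotient.factor_mk, Ideal.Quotient.eq_zero_iff_mem,
      Ideal.mem_quotient_iff_mem h]
  rw [this, ← Ideal.map_pow, Ideal.zero_eq_bot, Ideal.map_eq_bot_iff_le_ker, Ideal.mk_ker]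
  exact hn

open Algebra Polynomial in
lemma aux_first_order {B R S : Type*} [CommRing B] [CommRing R] [CommRing S] [Algebra B R]
    [Algebra B S] (π : R →ₐ[B] S) (δ : R → S)
    (h0 : ∀ b, δ (algebraMap B R b) = 0) (hadd : ∀ a b, δ (a + b) = δ a + δ b)
    (hmul : ∀ a b, δ (a * b) = π a * δ b + π b * δ a) :
    ∃ f : R →ₐ[B] (S[X] ⧸ Ideal.span {(X : S[X]) ^ 2}),
      ∀ r, f r = Ideal.Quotient.mk _ (C (π r) + X * C (δ r)) := by
  have h00 : δ 0 = 0 := by simpa using h0 0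
  have h01 : δ 1 = 0 := by simpa using h0 1
  refine ⟨{ toFun := fun r => Ideal.Quotient.mk _ (C (π r) + X * C (δ r))
            map_one' := by simp [h01]
            map_zero' := by simp [h00]
            map_add' := fun a b => ?_
            map_mul' := fun a b => ?_
            commutes' := fun b => ?_ }, fun r => rfl⟩
  · rw [← map_mul, Ideal.Quotient.eq, Ideal.mem_span_singleton]
    refine ⟨- (C (δ a) * C (δ b)), ?_⟩
    rw [hmul]
    simp only [map_add, map_mul]; ring
  · rw [← map_add]; congr 1; simp only [map_add, hadd]; ring
  · rw [h0, AlgHom.commutes, map_zero, mul_zero, add_zero]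
    rfl

open Algebra Polynomial in
lemma aux_lift_exists {B R S : Type*} [CommRing B] [CommRing R] [CommRing S] [Algebra B R]
    [Algebra B S] [FormallySmooth B R] (π : R →ₐ[B] S) (δ : R → S)
    (h0 : ∀ b, δ (algebraMap B R b) = 0) (hadd : ∀ a b, δ (a + b) = δ a + δ b)
    (hmul : ∀ a b, δ (a * b) = π a * δ b + π b * δ a) (k : ℕ) (hk : 1 ≤ k) :
    ∃ θ : R →ₐ[B] (S[X] ⧸ Ideal.span {(X : S[X]) ^ (k + 1)}),
      ∀ r, ∃ h : S[X], θ r = Ideal.Quotient.mk _ (C (π r) + X * C (δ r) + X ^ 2 * h) := by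
  obtain ⟨f, hf⟩ := aux_first_order π δ h0 hadd hmul
  have hJ : Ideal.span {(X : S[X]) ^ (k + 1)} ≤ Ideal.span {(X : S[X]) ^ 2} := by
    rw [Ideal.span_singleton_le_span_singleton]
    exact pow_dvd_pow _ (by omega)
  have hg : Function.Surjective (Ideal.Quotient.factorₐ B hJ) := Ideal.Quotient.factor_surjective hJ
  have hnil : IsNilpotent (RingHom.ker (Ideal.Quotient.factorₐ B hJ)) := by
    refine aux_factor_nilp hJ (k+1) ?_
    rw [Ideal.span_singleton_pow, Ideal.span_singleton_le_span_singleton, ← pow_mul]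
    exact pow_dvd_pow _ (by omega)
  refine ⟨FormallySmooth.liftOfSurjective f _ hg hnil, fun r => ?_⟩
  have h1 := FormallySmooth.liftOfSurjective_apply f _ hg hnil r
  generalize FormallySmooth.liftOfSurjective f _ hg hnil r = z at h1
  obtain ⟨t, rfl⟩ := Ideal.Quotient.mk_surjective z
  rw [hf] at h1
  change Ideal.Quotient.mk _ t = _ at h1
  rw [Ideal.Quotient.eq, Ideal.mem_span_singleton] at h1
  obtain ⟨h, hh⟩ := h1
  exact ⟨h, by rw [← hh]; congr 1; ring⟩

open Polynomial in
lemma aux_poly {S : Type*} [CommRing S] (h h' : S[X]) (r0 d : S) (k : ℕ)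
    (key : X ^ (k + 1) ∣ (X + X ^ 2 * h) ^ k * (C r0 + X * C d + X ^ 2 * h')) : r0 = 0 := by
  obtain ⟨c, hc⟩ := key
  have e1 : (X : S[X]) ^ k * ((1 + X * h) ^ k * (C r0 + X * C d + X ^ 2 * h'))
      = X ^ k * (X * c) := by
    rw [← mul_assoc, ← mul_pow, ← mul_assoc, ← pow_succ, ← hc]; congr 2; ring
  have e2 := (Polynomial.monic_X_pow k).isRegular.left e1
  have e3 := congrArg (Polynomial.eval 0) e2
  simpa using e3

open Algebra Polynomial in
lemma aux_lift_regular {B R : Type*} [CommRing B] [CommRing R] [Algebra B R]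
    [Algebra.FormallySmooth B R] (D : Derivation B R R) (x : R) (hx : D x = 1) (k : ℕ) (hk : 1 ≤ k)
    (r : R) (hr : x ^ k * r = 0) : r ∈ Ideal.span {x} := by
  obtain ⟨θ, hθ⟩ := aux_lift_exists (B := B) (Ideal.Quotient.mkₐ B (Ideal.span {x}))
    (fun r => Ideal.Quotient.mk _ (D r)) (by simp) (by simp)
    (fun a b => by simp [Derivation.leibniz]) k hk
  have hx0 : Ideal.Quotient.mkₐ B (Ideal.span {x}) x = 0 :=
      Ideal.Quotient.eq_zero_iff_mem.mpr (Ideal.mem_span_singleton_self x)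
  suffices hs : Ideal.Quotient.mkₐ B (Ideal.span {x}) r = 0 from Ideal.Quotient.eq_zero_iff_mem.mp hs
  obtain ⟨h, hh⟩ := hθ x
  obtain ⟨h', hh'⟩ := hθ r
  rw [hx0, hx, map_one, map_one, map_zero, zero_add, mul_one] at hh
  generalize Ideal.Quotient.mkₐ B (Ideal.span {x}) r = r0 at *
  have key := congrArg θ hr
  rw [map_mul, map_pow, hh, hh', map_zero, ← map_pow, ← map_mul, Ideal.Quotient.eq_zero_iff_mem,
    Ideal.mem_span_singleton] at key
  exact aux_poly _ _ _ _ k key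

lemma aux_isSMulRegular {B R : Type*} [CommRing B] [CommRing R] [Algebra B R]
    [Algebra.FormallySmooth B R] [IsNoetherianRing R] [IsLocalRing R]
    (D : Derivation B R R) (x : R) (hx : D x = 1) (hxm : x ∈ IsLocalRing.maximalIdeal R) :
    IsSMulRegular R x := by
  rw [isSMulRegular_iff_right_eq_zero_of_smul]
  intro y hy
  have h : ∀ k : ℕ, ∃ z, y = x ^ k * z := by
    intro k
    induction k with
    | zero => exact ⟨y, by simp⟩
    | succ k ih =>
      obtain ⟨z, rfl⟩ := ih
      have := aux_lift_regular D x hx (k+1) (by omega) z (by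
        rw [← hy, smul_eq_mul]; ring)
      obtain ⟨w, rfl⟩ := Ideal.mem_span_singleton.mp this
      exact ⟨w, by ring⟩
  have hne : Ideal.span {x} ≠ ⊤ := fun h => by
    have : Ideal.span {x} ≤ IsLocalRing.maximalIdeal R := by
      rwa [Ideal.span_singleton_le_iff_mem]
    rw [h] at this
    exact Ideal.IsPrime.ne_top' (top_le_iff.mp this)
  have := Ideal.iInf_pow_eq_bot_of_isLocalRing _ hne
  rw [← Ideal.mem_bot, ← this, Ideal.mem_iInf]
  intro k
  obtain ⟨z, rfl⟩ := h k
  rw [Ideal.span_singleton_pow]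
  exact Ideal.mem_span_singleton.mpr ⟨z, rfl⟩

lemma aux_quot_smooth {B R : Type*} [CommRing B] [CommRing R] [Algebra B R]
    [Algebra.FormallySmooth B R] (D : Derivation B R R) (x : R) (hx : D x = 1) :
    Algebra.FormallySmooth B (R ⧸ Ideal.span {x}) := by
  rw [Algebra.FormallySmooth.iff_split_injection (P := R) Ideal.Quotient.mk_surjective]
  let K := RingHom.ker (algebraMap R (R ⧸ Ideal.span {x}))
  have hK : K = Ideal.span {x} := Ideal.mk_ker
  have hxK : x ∈ K := hK ▸ Ideal.mem_span_singleton_self x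
  let l1 : (R ⧸ Ideal.span {x}) →ₗ[R] K.Cotangent :=
    Submodule.liftQ _ (LinearMap.toSpanSingleton R _ (K.toCotangent ⟨x, hxK⟩)) (by
      intro y hy
      rw [LinearMap.mem_ker, LinearMap.toSpanSingleton_apply]
      exact Ideal.Cotangent.smul_eq_zero_of_mem (hK ▸ hy) _)
  refine ⟨l1 ∘ₗ (TensorProduct.rid R _).toLinearMap ∘ₗ
    LinearMap.lTensor _ D.liftKaehlerDifferential, ?_⟩
  ext z
  obtain ⟨⟨z, hz⟩, rfl⟩ := Ideal.toCotangent_surjective _ z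
  have hz' := hz
  change z ∈ K at hz'
  rw [hK, Ideal.mem_span_singleton] at hz'
  obtain ⟨a, rfl⟩ := hz'
  rw [LinearMap.comp_apply, KaehlerDifferential.kerCotangentToTensor_toCotangent]
  simp only [LinearMap.comp_apply, LinearMap.lTensor_tmul, LinearEquiv.coe_coe,
    TensorProduct.rid_tmul, LinearMap.id_apply]
  rw [Derivation.liftKaehlerDifferential_comp_D, Derivation.leibniz, hx]
  have : l1 ((x • D a + a • (1:R)) • (1 : R ⧸ Ideal.span {x})) = (x • D a + a • (1:R)) • l1 1 := map_smul _ _ _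
  rw [this]
  have h1 : l1 1 = K.toCotangent ⟨x, hxK⟩ := by
    change l1 (Submodule.Quotient.mk 1) = _
    rw [Submodule.liftQ_apply, LinearMap.toSpanSingleton_apply, one_smul]
  rw [h1, ← map_smul]
  refine K.toCotangent_eq.mpr ?_
  simp only [smul_eq_mul, Submodule.coe_smul_of_tower, mul_one, pow_two]
  convert Ideal.mul_mem_mul hxK (Ideal.mul_mem_left K (D a) hxK) using 1
  ring

lemma aux_exists_derivation {B R C : Type*} [CommRing B] [CommRing R] [CommRing C] [Algebra B R]
    [Algebra B C] [Algebra R C] [IsScalarTower B R C] [Nontrivial C] [IsLocalRing R]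
    [Algebra.FormallySmooth B R] [Algebra.FormallySmooth B C]
    (hs : Function.Surjective (algebraMap R C)) (x : R) (hx : x ∈ RingHom.ker (algebraMap R C))
    (hx' : x ∉ IsLocalRing.maximalIdeal R * RingHom.ker (algebraMap R C)) :
    ∃ D : Derivation B R R, D x = 1 := by
  by_contra! hcon
  have hnu : ∀ h : Ω[R⁄B] →ₗ[R] R, h (KaehlerDifferential.D B R x) ∈ IsLocalRing.maximalIdeal R := by
    intro h
    by_contra hu
    rw [IsLocalRing.mem_maximalIdeal, mem_nonunits_iff, not_not] at hu
    obtain ⟨u, hu⟩ := hu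
    refine hcon ((↑u⁻¹ : R) • h.compDer (KaehlerDifferential.D B R)) ?_
    simp [← hu]
  obtain ⟨s, hsec⟩ := Module.projective_def'.mp (inferInstance : Module.Projective R Ω[R⁄B])
  have hmem : KaehlerDifferential.D B R x ∈ IsLocalRing.maximalIdeal R • (⊤ : Submodule R Ω[R⁄B]) := by
    have h1 : (Finsupp.linearCombination R id) (s (KaehlerDifferential.D B R x)) =
      KaehlerDifferential.D B R x := LinearMap.congr_fun hsec _
    rw [← h1, Finsupp.linearCombination_apply]
    refine Submodule.sum_mem _ fun i _ => Submodule.smul_mem_smul ?_ trivial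
    exact hnu (Finsupp.lapply i ∘ₗ s)
  obtain ⟨l, hl⟩ := (Algebra.FormallySmooth.iff_split_injection (R := B) (P := R) hs).mp inferInstance
  let K := RingHom.ker (algebraMap R C)
  have h2 := LinearMap.congr_fun hl (K.toCotangent ⟨x, hx⟩)
  rw [LinearMap.comp_apply, KaehlerDifferential.kerCotangentToTensor_toCotangent] at h2
  let m : Ω[R⁄B] →ₗ[R] K.Cotangent := l ∘ₗ TensorProduct.mk R C Ω[R⁄B] 1
  have h3 : m (KaehlerDifferential.D B R x) ∈ IsLocalRing.maximalIdeal R • (⊤ : Submodule R K.Cotangent) := by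
    have := Submodule.mem_map_of_mem (f := m) hmem
    rw [Submodule.map_smul''] at this
    exact Submodule.smul_mono le_rfl le_top this
  have h4 : m (KaehlerDifferential.D B R x) = K.toCotangent ⟨x, hx⟩ := h2
  rw [h4, ← Ideal.toCotangent_range, ← Submodule.map_top, ← Submodule.map_smul''] at h3
  obtain ⟨y, hy, hyx⟩ := h3
  rw [Ideal.toCotangent_eq] at hyx
  have hle : K ≤ IsLocalRing.maximalIdeal R := IsLocalRing.le_maximalIdeal (RingHom.ker_ne_top _)
  have hy2 : (y : R) ∈ IsLocalRing.maximalIdeal R * K := by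
    have := Submodule.mem_map_of_mem (f := K.subtype) hy
    rw [Submodule.map_smul'', Submodule.map_top, Submodule.range_subtype] at this
    exact this
  apply hx'
  have h5 : (y : R) - x ∈ IsLocalRing.maximalIdeal R * K := by
    rw [pow_two] at hyx
    exact Ideal.mul_mono_left hle hyx
  have := Ideal.sub_mem _ hy2 h5
  simpa using this

open RingTheory.Sequence in
lemma aux_isWeaklyRegular_cons {R : Type*} [CommRing R] (x : R) (rs : List R)
    (hx : IsSMulRegular R x)
    (h : IsWeaklyRegular (R ⧸ Ideal.span {x}) (rs.map (Ideal.Quotient.mk (Ideal.span {x})))) :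
    IsWeaklyRegular R (x :: rs) := by
  rw [isWeaklyRegular_cons_iff]
  refine ⟨hx, ?_⟩
  have h1 := (isWeaklyRegular_map_algebraMap_iff (R ⧸ Ideal.span {x}) (R ⧸ Ideal.span {x}) rs).mp h
  have e : QuotSMulTop x R ≃ₗ[R] (R ⧸ Ideal.span {x}) :=
    Submodule.quotEquivOfEq _ _ (by
      ext z
      simp [Submodule.mem_smul_pointwise_iff_exists, Ideal.mem_span_singleton, dvd_def, eq_comm])
  exact (e.isWeaklyRegular_congr rs).mpr h1

open RingTheory.Sequence in
lemma aux_forward {B C : Type u} [CommRing B] [CommRing C] [Algebra B C] [Nontrivial C]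
    [Algebra.FormallySmooth B C] (n : ℕ) :
    ∀ (R : Type u) [CommRing R] [Algebra B R] [Algebra R C] [IsScalarTower B R C]
      [IsLocalRing R] [IsNoetherianRing R] [Algebra.FormallySmooth B R]
      (_ : Function.Surjective (algebraMap R C)) (s : Finset R) (_ : s.card ≤ n)
      (_ : Ideal.span (s : Set R) = RingHom.ker (algebraMap R C)),
      ∃ rs : List R, IsWeaklyRegular R rs ∧ RingHom.ker (algebraMap R C) = Ideal.ofList rs := by
  classical
  induction n with
  | zero =>
    intro R _ _ _ _ _ _ _ hs s hcard hspan
    refine ⟨[], IsWeaklyRegular.nil _ _, ?_⟩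
    rw [← hspan, Finset.card_eq_zero.mp (Nat.le_zero.mp hcard)]
    simp
  | succ n ih =>
    intro R _ _ _ _ _ _ _ hs s hcard hspan
    set K := RingHom.ker (algebraMap R C) with hK
    have hKm : K ≤ IsLocalRing.maximalIdeal R := IsLocalRing.le_maximalIdeal (RingHom.ker_ne_top _)
    by_cases hbot : K = ⊥
    · exact ⟨[], IsWeaklyRegular.nil _ _, by simp [hbot]⟩
    have hex : ∃ x ∈ s, x ∉ IsLocalRing.maximalIdeal R * K := by
      by_contra! hcon
      apply hbot
      refine Submodule.eq_bot_of_le_smul_of_le_jacobson_bot (IsLocalRing.maximalIdeal R) K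
        (IsNoetherian.noetherian K) ?_ (IsLocalRing.jacobson_eq_maximalIdeal ⊥ bot_ne_top).ge
      change K ≤ IsLocalRing.maximalIdeal R * K
      conv_lhs => rw [← hspan]
      rw [Ideal.span_le]
      exact fun x hx => hcon x hx
    obtain ⟨x, hxs, hxm⟩ := hex
    have hxK : x ∈ K := hspan ▸ Ideal.subset_span hxs
    obtain ⟨D, hD⟩ := aux_exists_derivation (B := B) hs x hxK hxm
    have hreg := aux_isSMulRegular D x hD (hKm hxK)
    have hsm := aux_quot_smooth D x hD
    have hle : Ideal.span {x} ≤ K := by rwa [Ideal.span_singleton_le_iff_mem]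
    have hne : Ideal.span {x} ≠ ⊤ := fun h => RingHom.ker_ne_top (algebraMap R C)
      (top_le_iff.mp (h ▸ hle))
    have : Nontrivial (R ⧸ Ideal.span {x}) := Ideal.Quotient.nontrivial_iff.mpr hne
    have : IsLocalRing (R ⧸ Ideal.span {x}) :=
      IsLocalRing.of_surjective' _ Ideal.Quotient.mk_surjective
    letI : Algebra (R ⧸ Ideal.span {x}) C :=
      (Ideal.Quotient.lift (Ideal.span {x}) (algebraMap R C) hle).toAlgebra
    have hmk : ∀ r : R, algebraMap (R ⧸ Ideal.span {x}) C (Ideal.Quotient.mk _ r) = algebraMap R C r :=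
      fun r => rfl
    have : IsScalarTower B (R ⧸ Ideal.span {x}) C := IsScalarTower.of_algebraMap_eq fun b => by
      change _ = algebraMap (R ⧸ Ideal.span {x}) C (Ideal.Quotient.mk _ (algebraMap B R b))
      rw [hmk, ← IsScalarTower.algebraMap_apply]
    have hker : RingHom.ker (algebraMap (R ⧸ Ideal.span {x}) C) = K.map (Ideal.Quotient.mk _) := by
      ext z
      obtain ⟨t, rfl⟩ := Ideal.Quotient.mk_surjective z
      rw [RingHom.mem_ker, hmk, Ideal.mem_quotient_iff_mem hle, hK, RingHom.mem_ker]
    have hx0 : Ideal.Quotient.mk (Ideal.span {x}) x = 0 :=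
      Ideal.Quotient.eq_zero_iff_mem.mpr (Ideal.mem_span_singleton_self x)
    obtain ⟨rs', hrs', hrs'K⟩ := ih (R ⧸ Ideal.span {x})
      (fun c => by obtain ⟨r, rfl⟩ := hs c; exact ⟨Ideal.Quotient.mk _ r, rfl⟩)
      ((s.erase x).image (Ideal.Quotient.mk _))
      (Finset.card_image_le.trans (by rw [Finset.card_erase_of_mem hxs]; omega))
      (by
        rw [hker, ← hspan, Ideal.map_span]
        apply le_antisymm
        · apply Ideal.span_mono
          simp only [Finset.coe_image]
          exact Set.image_mono (by simp)
        · rw [Ideal.span_le]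
          rintro _ ⟨y, hy, rfl⟩
          by_cases hyx : y = x
          · rw [hyx, hx0]; exact Ideal.zero_mem _
          · exact Ideal.subset_span (by
              simp only [Finset.coe_image]
              exact ⟨y, by simpa [hyx] using hy, rfl⟩))
    obtain ⟨rs, rfl⟩ := List.map_surjective_iff.mpr Ideal.Quotient.mk_surjective rs'
    refine ⟨x :: rs, aux_isWeaklyRegular_cons x rs hreg hrs', ?_⟩
    rw [hker, ← Ideal.map_ofList] at hrs'K
    have := congrArg (Ideal.comap (Ideal.Quotient.mk (Ideal.span {x}))) hrs'K
    rw [Ideal.comap_map_of_surjective' _ Ideal.Quotient.mk_surjective,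
      Ideal.comap_map_of_surjective' _ Ideal.Quotient.mk_surjective, Ideal.mk_ker,
      sup_eq_left.mpr hle] at this
    rw [this, Ideal.ofList_cons, sup_comm]

open RingTheory.Sequence in
lemma aux_isWeaklyRegular_of_cons {R : Type*} [CommRing R] (x : R) (rs : List R)
    (h : IsWeaklyRegular R (x :: rs)) :
    IsSMulRegular R x ∧
    IsWeaklyRegular (R ⧸ Ideal.span {x}) (rs.map (Ideal.Quotient.mk (Ideal.span {x}))) := by
  rw [isWeaklyRegular_cons_iff] at h
  refine ⟨h.1, ?_⟩
  have e : QuotSMulTop x R ≃ₗ[R] (R ⧸ Ideal.span {x}) :=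
    Submodule.quotEquivOfEq _ _ (by
      ext z
      simp [Submodule.mem_smul_pointwise_iff_exists, Ideal.mem_span_singleton, dvd_def, eq_comm])
  exact (isWeaklyRegular_map_algebraMap_iff (R ⧸ Ideal.span {x}) (R ⧸ Ideal.span {x}) rs).mpr
    ((e.isWeaklyRegular_congr rs).mp h.2)

open RingTheory.Sequence in
lemma aux_inf_ofList {N : Type u} [CommRing N] (xs : List N) :
    ∀ (R : Type u) [CommRing R] (f : N →+* R) (_ : Function.Surjective f)
      (_ : IsWeaklyRegular R (xs.map f)),
      RingHom.ker f ⊓ Ideal.ofList xs ≤ RingHom.ker f * Ideal.ofList xs := by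
  induction xs with
  | nil =>
    intro R _ f hf _
    simp
  | cons x ys ih =>
    intro R _ f hf hreg
    obtain ⟨hx, hy⟩ := aux_isWeaklyRegular_of_cons _ _ hreg
    have key := ih (R ⧸ Ideal.span {f x}) ((Ideal.Quotient.mk _).comp f)
      (Ideal.Quotient.mk_surjective.comp hf) (by rw [List.map_map] at hy; exact hy)
    have hker : RingHom.ker ((Ideal.Quotient.mk (Ideal.span {f x})).comp f) =
        RingHom.ker f ⊔ Ideal.span {x} := by
      rw [← RingHom.comap_ker, Ideal.mk_ker, ← Set.image_singleton, ← Ideal.map_span,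
        Ideal.comap_map_of_surjective' _ hf, sup_comm]
    rw [hker] at key
    rintro z ⟨hz1, hz2⟩
    rw [SetLike.mem_coe, Ideal.ofList_cons] at hz2
    obtain ⟨a, ha, y, hy, rfl⟩ := Submodule.mem_sup.mp hz2
    obtain ⟨a, rfl⟩ := Ideal.mem_span_singleton.mp ha
    have hyk : y ∈ RingHom.ker f ⊔ Ideal.span {x} := by
      have : y = (x * a + y) - x * a := by ring
      rw [this]
      exact Ideal.sub_mem _ (Ideal.mem_sup_left hz1) (Ideal.mem_sup_right ha)
    have h1 := key ⟨hyk, hy⟩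
    rw [Ideal.sup_mul] at h1
    obtain ⟨l, hl, w, hw, rfl⟩ := Submodule.mem_sup.mp h1
    obtain ⟨c, hc, rfl⟩ := Ideal.mem_span_singleton_mul.mp hw
    have hlk : l ∈ RingHom.ker f := Ideal.mul_le_left hl
    have h2 : f x * f (a + c) = 0 := by
      rw [SetLike.mem_coe, RingHom.mem_ker] at hz1
      rw [RingHom.mem_ker] at hlk
      simp only [map_add, map_mul, hlk] at hz1 ⊢
      rw [← hz1]; ring
    have h3 : f (a + c) = 0 := isSMulRegular_iff_right_eq_zero_of_smul.mp hx _ h2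
    rw [Ideal.ofList_cons, Ideal.mul_sup]
    have : x * a + (l + x * c) = (a + c) * x + l := by ring
    rw [this]
    exact Submodule.add_mem_sup (Ideal.mul_mem_mul h3 (Ideal.mem_span_singleton_self x)) hl

open RingTheory.Sequence in
lemma aux_inf_sq {N R : Type u} [CommRing N] [CommRing R] (f : N →+* R)
    (hf : Function.Surjective f) (rs : List R) (hreg : IsWeaklyRegular R rs)
    (K : Ideal N) (hK : K = (Ideal.ofList rs).comap f) :
    RingHom.ker f ⊓ K ^ 2 ≤ RingHom.ker f * K := by
  obtain ⟨xs, rfl⟩ := List.map_surjective_iff.mpr hf rs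
  rw [← Ideal.map_ofList, Ideal.comap_map_of_surjective' _ hf, sup_comm] at hK
  have h := aux_inf_ofList xs R f hf hreg
  rintro z ⟨hz1, hz2⟩
  have hz3 : z ∈ RingHom.ker f * K ⊔ Ideal.ofList xs := by
    rw [SetLike.mem_coe, pow_two] at hz2
    nth_rw 1 [hK] at hz2
    rw [Ideal.sup_mul] at hz2
    exact sup_le_sup (le_refl (RingHom.ker f * K)) Ideal.mul_le_left hz2
  obtain ⟨u, hu, v, hv, rfl⟩ := Submodule.mem_sup.mp hz3
  have huk : u ∈ RingHom.ker f := Ideal.mul_le_left hu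
  have hvk : v ∈ RingHom.ker f := by simpa using Ideal.sub_mem _ hz1 huk
  exact Ideal.add_mem _ hu (Ideal.mul_mono_right (hK ▸ le_sup_right) (h ⟨hvk, hv⟩))

lemma aux_primeCompl_map {N D : Type u} [CommRing N] [CommRing D] (f : N →+* D)
    (hf : Function.Surjective f) (p : Ideal D) [p.IsPrime] :
    Submonoid.map f (p.comap f).primeCompl = p.primeCompl := by
  ext x
  constructor
  · rintro ⟨y, hy, rfl⟩; exact hy
  · intro hx
    obtain ⟨y, rfl⟩ := hf x
    exact ⟨y, hx, rfl⟩

lemma aux_ker_localRingHom {N D : Type u} [CommRing N] [CommRing D] (f : N →+* D)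
    (hf : Function.Surjective f) (p : Ideal D) [p.IsPrime] :
    RingHom.ker (Localization.localRingHom (p.comap f) p f rfl) =
      (RingHom.ker f).map (algebraMap N (Localization.AtPrime (p.comap f))) :=
  IsLocalization.ker_map (Localization.AtPrime p) f (aux_primeCompl_map f hf p)

lemma aux_surj_localRingHom {N D : Type u} [CommRing N] [CommRing D] (f : N →+* D)
    (hf : Function.Surjective f) (p : Ideal D) [p.IsPrime] :
    Function.Surjective (Localization.localRingHom (p.comap f) p f rfl) := by
  intro z
  obtain ⟨x, s, rfl⟩ := IsLocalization.exists_mk'_eq p.primeCompl z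
  obtain ⟨y, rfl⟩ := hf x
  obtain ⟨s, hs⟩ := s
  obtain ⟨t, rfl⟩ := hf s
  exact ⟨IsLocalization.mk' _ y ⟨t, hs⟩, by rw [Localization.localRingHom_mk']⟩

lemma aux_global {N D B : Type u} [CommRing N] [CommRing D] [CommRing B] (f : N →+* D)
    (hf : Function.Surjective f) (μ : D →+* B) (hμ : Function.Surjective μ)
    (h : μ.IsLocalCompleteIntersection) :
    RingHom.ker f ⊓ (RingHom.ker (μ.comp f)) ^ 2 ≤ RingHom.ker f * RingHom.ker (μ.comp f) := by
  rintro z ⟨hzL, hzK⟩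
  set L := RingHom.ker f with hL
  set K := RingHom.ker (μ.comp f) with hKdef
  by_contra hz
  let c : Ideal N := (L * K).colon {z}
  have hc : ∀ s, s ∈ c ↔ s * z ∈ L * K := fun s => by
    simp [c, Submodule.mem_colon_singleton]
  have hct : c ≠ ⊤ := fun hct => hz (by
    have := (hc 1).mp (hct ▸ trivial)
    simpa using this)
  obtain ⟨n, hn, hcn⟩ := Ideal.exists_le_maximal c hct
  have hKn : K ≤ n := fun k hk => hcn ((hc k).mpr (by
    rw [mul_comm k z]; exact Ideal.mul_mem_mul hzL hk))
  have hsurj : Function.Surjective (μ.comp f) := hμ.comp hf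
  obtain ⟨q, hq, rfl⟩ : ∃ q : Ideal B, q.IsPrime ∧ n = (q.comap μ).comap f := by
    refine ⟨n.map (μ.comp f), Ideal.map_isPrime_of_surjective hsurj hKn, ?_⟩
    rw [Ideal.comap_comap, Ideal.comap_map_of_surjective' _ hsurj]
    exact (sup_eq_left.mpr hKn).symm
  have : (q.comap μ).IsPrime := hq.comap μ
  have : ((q.comap μ).comap f).IsPrime := (hq.comap μ).comap f
  obtain ⟨rs, hrs, hker⟩ := h q hq
  have hcomp := Localization.localRingHom_comp ((q.comap μ).comap f) (q.comap μ) q f rfl μ rfl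
  have hKmap : K.map (algebraMap N (Localization.AtPrime ((q.comap μ).comap f))) =
      (Ideal.ofList rs).comap (Localization.localRingHom ((q.comap μ).comap f) (q.comap μ) f rfl) := by
    rw [← hker, RingHom.comap_ker, ← hcomp]
    exact (aux_ker_localRingHom (μ.comp f) hsurj q).symm
  have hmain := aux_inf_sq _ (aux_surj_localRingHom f hf (q.comap μ)) rs hrs.toIsWeaklyRegular _ hKmap
  rw [aux_ker_localRingHom f hf, ← Ideal.map_pow, ← Ideal.map_mul] at hmain
  have hmem := hmain ⟨Ideal.mem_map_of_mem _ hzL, Ideal.mem_map_of_mem _ hzK⟩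
  rw [IsLocalization.algebraMap_mem_map_algebraMap_iff ((q.comap μ).comap f).primeCompl] at hmem
  obtain ⟨s, hs, hsz⟩ := hmem
  exact hs (hcn ((hc s).mpr hsz))

open TensorProduct KaehlerDifferential in
lemma aux_derivation_zero {A P B M : Type*} [CommRing A] [CommRing P] [CommRing B] [Algebra A P]
    [Algebra A B] [Algebra P B] [IsScalarTower A P B] [AddCommGroup M] [Module A M] [Module P M]
    [Module B M] [IsScalarTower P B M] [IsScalarTower A P M] (d : Derivation A P M) (j : P)
    (hj : (1 : B) ⊗ₜ[P] D A P j = 0) : d j = 0 := by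
  have := congrArg (LinearMap.liftBaseChange B d.liftKaehlerDifferential) hj
  simpa using this

open TensorProduct KaehlerDifferential in
lemma aux_mem_sq {A P B N : Type*} [CommRing A] [CommRing P] [CommRing B] [CommRing N]
    [Algebra A P] [Algebra A B] [Algebra P B] [IsScalarTower A P B] [Algebra A N] [Algebra P N]
    [Algebra B N] [IsScalarTower P B N] [IsScalarTower A P N] (K : Ideal N) (i : P →ₐ[A] N)
    (hi : ∀ p, i p - algebraMap P N p ∈ K) (j : P) (hj0 : algebraMap P B j = 0)
    (hj : (1 : B) ⊗ₜ[P] D A P j = 0) : i j ∈ K ^ 2 := by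
  let d : Derivation A P K.Cotangent := Derivation.mk'
    { toFun := fun p => K.toCotangent ⟨i p - algebraMap P N p, hi p⟩
      map_add' := fun x y => by
        rw [← map_add]; congr 1; ext; simp; ring
      map_smul' := fun a x => by
        have : K.toCotangent ⟨i (a • x) - algebraMap P N (a • x), hi _⟩ =
          K.toCotangent (a • ⟨i x - algebraMap P N x, hi x⟩) := by
          congr 1; ext
          simp [smul_sub, Algebra.smul_def, ← IsScalarTower.algebraMap_apply]
          ring
        rw [this]
        exact (K.toCotangent.restrictScalars A).map_smul a _ }
    (fun x y => by
      have h1 : ∀ (p : P) (k : K), p • K.toCotangent k = K.toCotangent (p • k) := fun p k =>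
        ((K.toCotangent.restrictScalars P).map_smul p k).symm
      simp only [LinearMap.coe_mk, AddHom.coe_mk]
      rw [h1, h1, ← map_add, Ideal.toCotangent_eq]
      have : (i (x * y) - algebraMap P N (x * y)) - (x • (i y - algebraMap P N y) +
        y • (i x - algebraMap P N x)) = (i x - algebraMap P N x) * (i y - algebraMap P N y) := by
        simp only [map_mul, Algebra.smul_def]; ring
      refine (congrArg (· ∈ K ^ 2) this).mpr ?_
      rw [pow_two]
      exact Ideal.mul_mem_mul (hi x) (hi y))
  have h2 : K.toCotangent ⟨i j - algebraMap P N j, hi j⟩ = 0 := aux_derivation_zero (B := B) d j hj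
  rw [Ideal.toCotangent_eq_zero] at h2
  have h3 : algebraMap P N j = 0 := by rw [IsScalarTower.algebraMap_apply P B N, hj0, map_zero]
  have h4 : i j - algebraMap P N j ∈ K ^ 2 := h2
  rwa [h3, sub_zero] at h4

open TensorProduct in
lemma aux_flat_step {A P B M : Type*} [CommRing A] [CommRing P] [CommRing B] [Algebra A P]
    [Algebra A B] [Algebra P B] [IsScalarTower A P B] [AddCommGroup M] [Module A M] [Module P M]
    [Module B M] [IsScalarTower P B M] [IsScalarTower A P M] [IsScalarTower A B M]
    [Module.Flat A B] (J : Ideal P) (c : J →ₗ[P] M) (L K : Ideal (B ⊗[A] P))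
    (hL : ∀ z ∈ L, z ∈ LinearMap.range (LinearMap.lTensor B (J.subtype.restrictScalars A)))
    (h : B ⊗[A] P →+* B) (hh : ∀ b p, h (b ⊗ₜ p) = b * algebraMap P B p)
    (hK : ∀ z ∈ K, h z = 0)
    (j : J) (hj : (1 : B) ⊗ₜ[A] (j : P) ∈ L * K) : c j = 0 := by
  let Φ := LinearMap.lTensor B (J.subtype.restrictScalars A)
  have hΦ : Function.Injective Φ := Module.Flat.lTensor_preserves_injective_linearMap _
    (Submodule.injective_subtype J)
  let c' : J →ₗ[A] M := c.restrictScalars A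
  let Ψ : B ⊗[A] J →ₗ[B] M := c'.liftBaseChange B
  have hΨ : ∀ b x, Ψ (b ⊗ₜ x) = b • c x := fun b x => by simp [Ψ, c']
  have key : ∀ n t, ∃ t', Φ t' = n * Φ t ∧ Ψ t' = h n • Ψ t := by
    intro n t
    induction n with
    | zero => exact ⟨0, by simp, by simp⟩
    | add x y hx hy =>
      obtain ⟨t1, h1, h2⟩ := hx
      obtain ⟨t2, h3, h4⟩ := hy
      exact ⟨t1 + t2, by simp [h1, h3, add_mul], by simp [h2, h4, add_smul]⟩
    | tmul b p =>
      induction t with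
      | zero => exact ⟨0, by simp, by simp⟩
      | add x y hx hy =>
        obtain ⟨t1, h1, h2⟩ := hx
        obtain ⟨t2, h3, h4⟩ := hy
        exact ⟨t1 + t2, by simp [h1, h3, mul_add], by simp [h2, h4, smul_add]⟩
      | tmul b' x =>
        have hx : (p • (x : P)) ∈ J := J.smul_mem p x.2
        refine ⟨(b * b') ⊗ₜ ⟨p • (x : P), hx⟩, by simp [Φ], ?_⟩
        rw [hΨ, hΨ, hh]
        have : c ⟨p • (x : P), hx⟩ = p • c x := c.map_smul p x
        rw [this, ← algebraMap_smul B p (c x), smul_smul, smul_smul]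
        congr 1; ring
  have main : ∀ z ∈ L * K, ∃ t, Φ t = z ∧ Ψ t = 0 := by
    intro z hz
    induction hz using Submodule.mul_induction_on' with
    | mem_mul_mem l hl k hk =>
      obtain ⟨t, rfl⟩ := hL l hl
      obtain ⟨t', h1, h2⟩ := key k t
      refine ⟨t', by rw [h1, mul_comm], by rw [h2, hK k hk, zero_smul]⟩
    | add x _ y _ hx hy =>
      obtain ⟨t1, h1, h2⟩ := hx
      obtain ⟨t2, h3, h4⟩ := hy
      exact ⟨t1 + t2, by rw [map_add, h1, h3], by rw [map_add, h2, h4, add_zero]⟩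
  obtain ⟨t, h1, h2⟩ := main _ hj
  have : t = 1 ⊗ₜ j := hΦ (by rw [h1]; rfl)
  rw [this, hΨ, one_smul] at h2
  exact h2

open TensorProduct KaehlerDifferential in
lemma aux_H1 {A P B : Type u} [CommRing A] [CommRing P] [CommRing B] [Algebra A P]
    [Algebra A B] [Algebra P B] [IsScalarTower A P B] [Module.Flat A B]
    (hs : Function.Surjective (algebraMap P B))
    (hμ : ((Algebra.TensorProduct.lmul' A (S := B)).toRingHom).IsLocalCompleteIntersection) :
    Function.Injective (kerCotangentToTensor A P B) := by
  rw [injective_iff_map_eq_zero]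
  intro x hx
  obtain ⟨j, rfl⟩ := Ideal.toCotangent_surjective _ x
  rw [kerCotangentToTensor_toCotangent] at hx
  let φ : B ⊗[A] P →ₐ[A] B ⊗[A] B :=
    Algebra.TensorProduct.map (AlgHom.id A B) (IsScalarTower.toAlgHom A P B)
  have hφ : Function.Surjective φ := TensorProduct.map_surjective Function.surjective_id hs
  let h : B ⊗[A] P →+* B := (Algebra.TensorProduct.lmul' A (S := B)).toRingHom.comp φ.toRingHom
  have hh : ∀ b p, h (b ⊗ₜ p) = b * algebraMap P B p := fun b p => by simp [h, φ]
  have hsμ : Function.Surjective (Algebra.TensorProduct.lmul' A (S := B)).toRingHom :=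
    fun b => ⟨b ⊗ₜ 1, by simp⟩
  have hK : ((1 : B) ⊗ₜ[A] (j : P)) ∈ (RingHom.ker h) ^ 2 := by
    refine aux_mem_sq (A := A) (B := B) (RingHom.ker h) Algebra.TensorProduct.includeRight
      (fun p => ?_) (j : P) j.2 hx
    rw [RingHom.mem_ker, map_sub, sub_eq_zero]
    have : algebraMap P (B ⊗[A] P) p = algebraMap P B p ⊗ₜ 1 := rfl
    rw [this, Algebra.TensorProduct.includeRight_apply, hh, hh]
    simp
  have hL : ((1 : B) ⊗ₜ[A] (j : P)) ∈ RingHom.ker φ.toRingHom := by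
    have : algebraMap P B j = 0 := j.2
    simp [RingHom.mem_ker, φ, this]
  have hLK := aux_global φ.toRingHom hφ _ hsμ hμ ⟨hL, hK⟩
  let e := RingHom.quotientKerEquivOfSurjective hs
  let _ : Module B (RingHom.ker (algebraMap P B)).Cotangent := Module.compHom _ e.symm.toRingHom
  have hPB : IsScalarTower P B (RingHom.ker (algebraMap P B)).Cotangent := ⟨fun p b x => by
    have h1 : ∀ (b : B) (x : (RingHom.ker (algebraMap P B)).Cotangent), b • x = e.symm b • x :=
      fun _ _ => rfl
    have h2 : e.symm (algebraMap P B p) = Ideal.Quotient.mk _ p := by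
      rw [RingEquiv.symm_apply_eq]; rfl
    rw [h1, h1, Algebra.smul_def, map_mul, h2, mul_smul]
    rfl⟩
  have hAB : IsScalarTower A B (RingHom.ker (algebraMap P B)).Cotangent := ⟨fun a b x => by
    rw [← algebraMap_smul P a b, smul_assoc, algebraMap_smul]⟩
  refine aux_flat_step (A := A) (B := B) (RingHom.ker (algebraMap P B))
    (RingHom.ker (algebraMap P B)).toCotangent (RingHom.ker φ.toRingHom) (RingHom.ker h) ?_ h hh
    (fun z hz => hz) j hLK
  intro z hz
  have hex := lTensor_exact B (f := (RingHom.ker (algebraMap P B)).subtype.restrictScalars A)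
    (g := (IsScalarTower.toAlgHom A P B).toLinearMap) (fun y => by
      simp [RingHom.mem_ker]) hs
  exact (hex z).mp hz

lemma aux_koszul {R : Type*} [CommRing R] (n : ℕ) : ∀ (x : Fin n → R)
    (_ : ∀ i a, a * x i ∈ Ideal.span (x '' {j | j < i}) → a ∈ Ideal.span (x '' {j | j < i}))
    (a : Fin n → R) (_ : ∑ i, a i * x i = 0) (i : Fin n), a i ∈ Ideal.span (Set.range x) := by
  induction n with
  | zero => intro x _ a _ i; exact i.elim0
  | succ n ih =>
    intro x H a ha i
    have him : ∀ i : Fin n, (fun j : Fin n => x j.castSucc) '' {j | j < i} =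
        x '' {j | j < i.castSucc} := by
      intro i
      ext y
      constructor
      · rintro ⟨j, hj, rfl⟩
        exact ⟨j.castSucc, by simpa using hj, rfl⟩
      · rintro ⟨j, hj, rfl⟩
        have hj' : j ≠ Fin.last n := (lt_of_lt_of_le hj (Fin.le_last _)).ne
        obtain ⟨j, rfl⟩ := Fin.exists_castSucc_eq.mpr hj'
        exact ⟨j, by simpa using hj, rfl⟩
    have hlast : x '' {j | j < Fin.last n} = Set.range (fun j : Fin n => x j.castSucc) := by
      ext y
      constructor
      · rintro ⟨j, hj, rfl⟩
        obtain ⟨j, rfl⟩ := Fin.exists_castSucc_eq.mpr (ne_of_lt hj)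
        exact ⟨j, rfl⟩
      · rintro ⟨j, rfl⟩
        exact ⟨j.castSucc, Fin.castSucc_lt_last j, rfl⟩
    have hle : Ideal.span (Set.range (fun j : Fin n => x j.castSucc)) ≤
        Ideal.span (Set.range x) := by
      apply Ideal.span_mono
      rintro _ ⟨j, rfl⟩; exact ⟨_, rfl⟩
    rw [Fin.sum_univ_castSucc] at ha
    have hb : a (Fin.last n) ∈ Ideal.span (Set.range (fun j : Fin n => x j.castSucc)) := by
      rw [← hlast]
      apply H
      rw [hlast, ← neg_eq_of_add_eq_zero_right ha]
      refine neg_mem (Ideal.sum_mem _ fun j _ => Ideal.mul_mem_left _ _ (Ideal.subset_span ⟨j, rfl⟩))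
    obtain ⟨c, hc⟩ := Ideal.mem_span_range_iff_exists_fun.mp hb
    have h2 := ih (fun j => x j.castSucc) (fun i a => by
        rw [him]; exact H i.castSucc a) (fun j => a j.castSucc + c j * x (Fin.last n)) (by
      rw [← ha, ← hc, Finset.sum_mul, ← Finset.sum_add_distrib]
      exact Finset.sum_congr rfl fun j _ => by ring)
    induction i using Fin.lastCases with
    | last => exact hle hb
    | cast i =>
      have h3 := hle (h2 i)
      have h4 : c i * x (Fin.last n) ∈ Ideal.span (Set.range x) :=
        Ideal.mul_mem_left _ _ (Ideal.subset_span ⟨_, rfl⟩)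
      exact (Ideal.add_mem_iff_left _ h4).mp h3

open RingTheory.Sequence in
lemma aux_koszul_list {R : Type*} [CommRing R] (rs : List R) (h : IsWeaklyRegular R rs) :
    ∃ (n : ℕ) (x : Fin n → R), Ideal.span (Set.range x) = Ideal.ofList rs ∧
      ∀ (a : Fin n → R) (_ : ∑ i, a i * x i = 0) (i : Fin n), a i ∈ Ideal.ofList rs := by
  have h0 : Ideal.span (Set.range rs.get) = Ideal.ofList rs := by
    rw [Ideal.ofList, Set.range_list_get]
  refine ⟨rs.length, rs.get, h0, ?_⟩
  rw [← h0]
  apply aux_koszul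
  intro i a
  have h1 := h.regular_mod_prev i.1 i.2
  have h2 : Ideal.span (rs.get '' {j | j < i}) = Ideal.ofList (rs.take i) := by
    rw [Ideal.ofList]
    congr 1
    ext y
    simp only [Set.mem_image, Set.mem_ofPred_eq, List.mem_take_iff_getElem, List.get_eq_getElem]
    constructor
    · rintro ⟨j, hj, rfl⟩
      exact ⟨j, by simp [j.2]; exact hj, rfl⟩
    · rintro ⟨j, hj, rfl⟩
      have hj' := lt_min_iff.mp hj
      exact ⟨⟨j, hj'.2⟩, by simpa [Fin.lt_def] using hj'.1, rfl⟩
  rw [h2]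
  intro ha
  have h3 := isSMulRegular_iff_right_eq_zero_of_smul.mp h1 (Submodule.Quotient.mk a) (by
    rw [← Submodule.Quotient.mk_smul, Submodule.Quotient.mk_eq_zero]
    simpa [mul_comm] using ha)
  rw [Submodule.Quotient.mk_eq_zero] at h3
  simpa using h3

lemma aux_cotangent_free {R C : Type*} [CommRing R] [CommRing C] [Algebra R C]
    (hs : Function.Surjective (algebraMap R C)) (K : Ideal R)
    (hK : RingHom.ker (algebraMap R C) = K) (n : ℕ) (x : Fin n → R)
    (hx : Ideal.span (Set.range x) = K)
    (H : ∀ (a : Fin n → R) (_ : ∑ i, a i * x i = 0) (i : Fin n), a i ∈ K) :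
    Nonempty (K.Cotangent ≃ₗ[R] (Fin n → C)) := by
  have hxm : ∀ i, x i ∈ K := fun i => hx ▸ Ideal.subset_span ⟨i, rfl⟩
  let φ : (Fin n → R) →ₗ[R] K.Cotangent :=
    Fintype.linearCombination R (fun i => K.toCotangent ⟨x i, hxm i⟩)
  have hφ : ∀ a, φ a = K.toCotangent ⟨∑ i, a i * x i,
      Ideal.sum_mem _ fun i _ => Ideal.mul_mem_left _ _ (hxm i)⟩ := by
    intro a
    simp only [φ, Fintype.linearCombination_apply]
    simp_rw [← map_smul]
    rw [← map_sum]
    congr 1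
    ext
    simp
  let ψ : (Fin n → R) →ₗ[R] (Fin n → C) := (Algebra.linearMap R C).compLeft (Fin n)
  have hφs : Function.Surjective φ := by
    intro y
    obtain ⟨⟨k, hk⟩, rfl⟩ := Ideal.toCotangent_surjective _ y
    have hk' := hk
    rw [← hx] at hk'
    obtain ⟨c, hc⟩ := Ideal.mem_span_range_iff_exists_fun.mp hk'
    refine ⟨c, ?_⟩
    rw [hφ]
    congr 1
    ext
    exact hc
  have hψs : Function.Surjective ψ := by
    intro y
    choose g hg using hs
    exact ⟨fun i => g (y i), by ext i; simp [ψ, hg]⟩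
  have hψk : ∀ a, a ∈ LinearMap.ker ψ ↔ ∀ i, a i ∈ K := by
    intro a
    rw [← hK, LinearMap.mem_ker, funext_iff]
    rfl
  have hk : LinearMap.ker φ = LinearMap.ker ψ := by
    ext a
    rw [hψk, LinearMap.mem_ker, hφ, Ideal.toCotangent_eq_zero]
    constructor
    · intro h i
      change ∑ i, a i * x i ∈ K ^ 2 at h
      rw [pow_two] at h
      have h2 : ∃ c : Fin n → R, (∀ i, c i ∈ K) ∧ ∑ i, c i * x i = ∑ i, a i * x i := by
        generalize ∑ i, a i * x i = z at h ⊢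
        induction h using Submodule.mul_induction_on' with
        | mem_mul_mem l hl k hk =>
          rw [← hx] at hk
          obtain ⟨c, rfl⟩ := Ideal.mem_span_range_iff_exists_fun.mp hk
          exact ⟨fun i => l * c i, fun i => Ideal.mul_mem_right _ _ hl, by
            simp [Finset.mul_sum, mul_assoc]⟩
        | add u _ v _ hu hv =>
          obtain ⟨c, h1, rfl⟩ := hu
          obtain ⟨d, h3, rfl⟩ := hv
          exact ⟨fun i => c i + d i, fun i => Ideal.add_mem _ (h1 i) (h3 i), by
            simp [add_mul, Finset.sum_add_distrib]⟩
      obtain ⟨c, h1, h2⟩ := h2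
      have h3 := H (fun i => a i - c i) (by simp [sub_mul, h2]) i
      simpa using Ideal.add_mem _ h3 (h1 i)
    · intro h
      change ∑ i, a i * x i ∈ K ^ 2
      rw [pow_two]
      exact Ideal.sum_mem _ fun i _ => Ideal.mul_mem_mul (h i) (hxm i)
  exact ⟨(φ.quotKerEquivOfSurjective hφs).symm ≪≫ₗ Submodule.quotEquivOfEq _ _ hk ≪≫ₗ
    ψ.quotKerEquivOfSurjective hψs⟩

lemma aux_isLocalizedModule {B D R : Type*} [CommRing B] [CommRing D] [CommRing R]
    [Algebra B D] [Algebra D R] [Algebra B R] [IsScalarTower B D R]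
    (μ : D →+* B) (hμ : ∀ b, μ (algebraMap B D b) = b) (q : Ideal B) [q.IsPrime]
    (p : Ideal D) [p.IsPrime] (hp : ∀ d, d ∈ p ↔ μ d ∈ q) [IsLocalization p.primeCompl R]
    (I : Ideal D) (hI : I = RingHom.ker μ)
    (K : Ideal R) (hK : K = I.map (algebraMap D R)) (hle : I ≤ K.comap (IsScalarTower.toAlgHom B D R)) :
    IsLocalizedModule q.primeCompl (Ideal.mapCotangent I K (IsScalarTower.toAlgHom B D R) hle) := by
  have hdiff : ∀ s, algebraMap B D (μ s) - s ∈ I := fun s => by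
    rw [hI, RingHom.mem_ker, map_sub, hμ, sub_self]
  have hdiffR : ∀ s, algebraMap B R (μ s) - algebraMap D R s ∈ K := fun s => by
    rw [IsScalarTower.algebraMap_apply B D R, ← map_sub, hK]
    exact Ideal.mem_map_of_mem _ (hdiff s)
  constructor
  · intro s
    have hu : IsUnit (algebraMap B R s) := by
      rw [IsScalarTower.algebraMap_apply B D R]
      refine IsLocalization.map_units R (⟨algebraMap B D s, fun h => s.2 ?_⟩ : p.primeCompl)
      have := (hp _).mp h
      rwa [hμ] at this
    have := hu.map (Algebra.lsmul B B K.Cotangent)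
    rwa [AlgHom.commutes] at this
  · intro y
    obtain ⟨⟨k, hk⟩, rfl⟩ := Ideal.toCotangent_surjective _ y
    have hk' := hk
    rw [hK] at hk'
    obtain ⟨⟨i, s⟩, hs⟩ := (IsLocalization.mem_map_algebraMap_iff p.primeCompl R).mp hk'
    refine ⟨⟨I.toCotangent i, ⟨μ s, fun h => s.2 ((hp _).mpr h)⟩⟩, ?_⟩
    rw [Ideal.mapCotangent_toCotangent]
    change μ s • K.toCotangent ⟨k, hk⟩ = _
    refine ((K.toCotangent.restrictScalars B).map_smul (μ s) ⟨k, hk⟩).symm.trans ?_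
    refine (Ideal.toCotangent_eq _).mpr ?_
    change μ s • k - algebraMap D R i ∈ K ^ 2
    rw [← hs, pow_two, Algebra.smul_def, mul_comm k, ← sub_mul]
    exact Ideal.mul_mem_mul (hdiffR s) hk
  · intro x₁ x₂ h
    obtain ⟨i, rfl⟩ := Ideal.toCotangent_surjective _ x₁
    obtain ⟨j, rfl⟩ := Ideal.toCotangent_surjective _ x₂
    rw [Ideal.mapCotangent_toCotangent, Ideal.mapCotangent_toCotangent, Ideal.toCotangent_eq] at h
    change algebraMap D R i - algebraMap D R j ∈ K ^ 2 at h
    rw [← map_sub, hK, ← Ideal.map_pow,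
      IsLocalization.algebraMap_mem_map_algebraMap_iff p.primeCompl] at h
    obtain ⟨s, hs, hsz⟩ := h
    refine ⟨⟨μ s, fun h => hs ((hp _).mpr h)⟩, ?_⟩
    change μ s • I.toCotangent i = μ s • I.toCotangent j
    refine ((I.toCotangent.restrictScalars B).map_smul (μ s) i).symm.trans
      (Eq.trans ?_ ((I.toCotangent.restrictScalars B).map_smul (μ s) j))
    refine (Ideal.toCotangent_eq _).mpr ?_
    change μ s • (i : D) - μ s • (j : D) ∈ I ^ 2
    rw [← smul_sub, Algebra.smul_def]
    have : algebraMap B D (μ s) * ((i : D) - j) =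
      (algebraMap B D (μ s) - s) * ((i : D) - j) + s * ((i : D) - j) := by ring
    rw [this]
    refine Ideal.add_mem _ ?_ hsz
    rw [pow_two]
    exact Ideal.mul_mem_mul (hdiff s) (I.sub_mem i.2 j.2)

lemma aux_projective_of_iso {B M : Type*} [CommRing B] (S : Submonoid B) [AddCommGroup M]
    [Module B M] {M' : Type*} [AddCommGroup M'] [Module B M'] (g : M →ₗ[B] M')
    [IsLocalizedModule S g] (n : ℕ) (e : M' ≃ₗ[B] (Fin n → Localization S)) :
    Module.Projective (Localization S) (LocalizedModule S M) :=
  Module.Projective.of_equiv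
    ((((IsLocalizedModule.iso S g).trans e).extendScalarsOfIsLocalization S (Localization S)).symm)

lemma aux_proj_local {B D : Type u} [CommRing B] [CommRing D] [Algebra B D] (μ : D →+* B)
    (hμ : ∀ b, μ (algebraMap B D b) = b) (h : μ.IsLocalCompleteIntersection) (I : Ideal D)
    (hI : I = RingHom.ker μ) (q : Ideal B) (hq : q.IsPrime) :
    Module.Projective (Localization.AtPrime q) (LocalizedModule q.primeCompl I.Cotangent) := by
  have hp : (q.comap μ).IsPrime := hq.comap μ
  obtain ⟨rs, hrs, hker⟩ := h q hq
  have hsurj : Function.Surjective μ := fun b => ⟨_, hμ b⟩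
  letI : Algebra (Localization.AtPrime (q.comap μ)) (Localization.AtPrime q) :=
    (Localization.localRingHom (q.comap μ) q μ rfl).toAlgebra
  have hmap : ∀ x, algebraMap (Localization.AtPrime (q.comap μ)) (Localization.AtPrime q) x =
    Localization.localRingHom (q.comap μ) q μ rfl x := fun _ => rfl
  have ht : IsScalarTower B (Localization.AtPrime (q.comap μ)) (Localization.AtPrime q) := by
    refine IsScalarTower.of_algebraMap_eq fun b => ?_
    rw [IsScalarTower.algebraMap_apply B D (Localization.AtPrime (q.comap μ)), hmap,
      Localization.localRingHom_to_map, hμ]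
  obtain ⟨n, x, hx, H⟩ := aux_koszul_list rs hrs.toIsWeaklyRegular
  obtain ⟨e⟩ := aux_cotangent_free (aux_surj_localRingHom μ hsurj q :
    Function.Surjective (algebraMap (Localization.AtPrime (q.comap μ)) (Localization.AtPrime q)))
    (Ideal.ofList rs) hker n x hx H
  have hK : Ideal.ofList rs = I.map (algebraMap D (Localization.AtPrime (q.comap μ))) := by
    rw [← hker, hI]; exact aux_ker_localRingHom μ hsurj q
  have hle : I ≤ (Ideal.ofList rs).comap
      (IsScalarTower.toAlgHom B D (Localization.AtPrime (q.comap μ))) := by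
    rw [hK]; exact Ideal.le_comap_map
  have := aux_isLocalizedModule μ hμ q (q.comap μ) (fun d => Iff.rfl) I hI (Ideal.ofList rs) hK hle
  exact aux_projective_of_iso q.primeCompl (Ideal.mapCotangent I _ _ hle) n (e.restrictScalars B)

open TensorProduct in
lemma aux_backward {A B : Type u} [CommRing A] [CommRing B] [Algebra A B]
    [IsNoetherianRing A] [Algebra.EssFiniteType A B] [Module.Flat A B]
    (h : ((Algebra.TensorProduct.lmul' A (S := B)).toRingHom).IsLocalCompleteIntersection) :
    Algebra.FormallySmooth A B := by
  have hB : IsNoetherianRing B := Algebra.EssFiniteType.isNoetherianRing A B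
  rw [Algebra.formallySmooth_iff]
  constructor
  · have hfp : Module.FinitePresentation B (Ω[B⁄A]) := Module.finitePresentation_of_finite _ _
    refine Module.projective_of_localization_maximal fun q hq => ?_
    exact aux_proj_local (D := B ⊗[A] B) _ (fun b => by
      simp [Algebra.TensorProduct.algebraMap_apply]) h
      (KaehlerDifferential.ideal A B) rfl q hq.isPrime
  · letI : Algebra (MvPolynomial B A) B := (MvPolynomial.aeval (R := A) (id : B → B)).toAlgebra
    have hm : ∀ x, algebraMap (MvPolynomial B A) B x = MvPolynomial.aeval (R := A) (id : B → B) x :=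
      fun _ => rfl
    have ht : IsScalarTower A (MvPolynomial B A) B := IsScalarTower.of_algebraMap_eq fun a => by
      rw [hm, AlgHom.commutes]
    have hs : Function.Surjective (algebraMap (MvPolynomial B A) B) := fun b =>
      ⟨MvPolynomial.X b, by rw [hm]; simp⟩
    exact (Algebra.FormallySmooth.kerCotangentToTensor_injective_iff hs).mp (aux_H1 hs h)

lemma aux_forward_local {B D : Type u} [CommRing B] [CommRing D] [Algebra B D]
    [IsNoetherianRing D] [Algebra.FormallySmooth B D] (μ : D →+* B)
    (hμ : ∀ b, μ (algebraMap B D b) = b) : μ.IsLocalCompleteIntersection := by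
  intro q hq
  have hp : (q.comap μ).IsPrime := hq.comap μ
  have hsurj : Function.Surjective μ := fun b => ⟨_, hμ b⟩
  letI : Algebra (Localization.AtPrime (q.comap μ)) (Localization.AtPrime q) :=
    (Localization.localRingHom (q.comap μ) q μ rfl).toAlgebra
  have hmap : ∀ x, algebraMap (Localization.AtPrime (q.comap μ)) (Localization.AtPrime q) x =
    Localization.localRingHom (q.comap μ) q μ rfl x := fun _ => rfl
  have ht : IsScalarTower B (Localization.AtPrime (q.comap μ)) (Localization.AtPrime q) := by
    refine IsScalarTower.of_algebraMap_eq fun b => ?_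
    rw [IsScalarTower.algebraMap_apply B D (Localization.AtPrime (q.comap μ)), hmap,
      Localization.localRingHom_to_map, hμ]
  have hfs : Algebra.FormallySmooth B (Localization.AtPrime q) :=
    Algebra.FormallySmooth.of_isLocalization q.primeCompl
  have hfs1 : Algebra.FormallySmooth D (Localization.AtPrime (q.comap μ)) :=
    Algebra.FormallySmooth.of_isLocalization (q.comap μ).primeCompl
  have hfs2 : Algebra.FormallySmooth B (Localization.AtPrime (q.comap μ)) :=
    Algebra.FormallySmooth.comp B D _
  have hN : IsNoetherianRing (Localization.AtPrime (q.comap μ)) :=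
    IsLocalization.isNoetherianRing (q.comap μ).primeCompl _ inferInstance
  obtain ⟨s, hs⟩ := (isNoetherianRing_iff_ideal_fg _).mp hN (RingHom.ker
    (algebraMap (Localization.AtPrime (q.comap μ)) (Localization.AtPrime q)))
  obtain ⟨rs, h1, h2⟩ := aux_forward (B := B) (C := Localization.AtPrime q) s.card
    (Localization.AtPrime (q.comap μ)) (aux_surj_localRingHom μ hsurj q) s le_rfl hs
  refine ⟨rs, ⟨h1, ?_⟩, h2⟩
  rw [← h2, smul_eq_mul, Ideal.mul_top]
  exact (RingHom.ker_ne_top _).symm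

open TensorProduct in
/-- **Smoothness via the diagonal being a local complete intersection.**
Let `A` be a commutative noetherian ring and `B` a flat `A`-algebra which is essentially of
finite type over `A`, and let `μ : B ⊗[A] B → B` be the multiplication map.  Then `B` is a
formally smooth `A`-algebra if and only if for every prime `q` of `B`, with
`p = μ⁻¹(q)`, the kernel of the induced local homomorphism `(B ⊗[A] B)_p → B_q` is
generated by a `(B ⊗[A] B)_p`-regular sequence; i.e. the diagonal `μ` is a local complete
intersection. -/
theorem formallySmooth_iff_diagonal_isLocalCompleteIntersection
    {A B : Type u} [CommRing A] [CommRing B] [Algebra A B]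
    [IsNoetherianRing A] [Algebra.EssFiniteType A B]
    (hflat : Module.Flat A B) :
    Algebra.FormallySmooth A B ↔
    ((Algebra.TensorProduct.lmul' A (S := B)).toRingHom).IsLocalCompleteIntersection := by
  constructor
  · intro h
    have hN : IsNoetherianRing (B ⊗[A] B) := by
      have := Algebra.EssFiniteType.isNoetherianRing A B
      exact Algebra.EssFiniteType.isNoetherianRing B (B ⊗[A] B)
    exact aux_forward_local (D := B ⊗[A] B) _ (fun b => by
      simp [Algebra.TensorProduct.algebraMap_apply])
  · exact aux_backward
end

section
/- Let A be a commutative noetherian ring and let B be a nonzero, flat, formally smooth A-algebra which is essentially of finite type over A, and assume Spec(B) is connected. Then there exists an integer n ≥ 0 such that Ext^i_{B ⊗_A B}(B, B ⊗_A B) = 0 for all i ≠ n, and Ext^n_{B ⊗_A B}(B, B ⊗_A B) is an invertible B-module. -/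
universe u

open CategoryTheory

/-- An `R`-module `L` is *invertible* if there is an `R`-module `L'` with `L ⊗[R] L' ≅ R`. -/
def Module.IsInvertible (R : Type u) [CommRing R] (L : Type u) [AddCommGroup L] [Module R L] :
    Prop :=
  ∃ (L' : Type u) (_ : AddCommGroup L') (_ : Module R L'),
    Nonempty ((TensorProduct R L L') ≃ₗ[R] R)

namespace ExtEnv

section PS
open PowerSeries

lemma mem_span_X_sq_pow {S : Type*} [CommRing S] (n : ℕ) (f : S⟦X⟧) :
    f ∈ ((Ideal.span {(X : S⟦X⟧) ^ 2}) ^ n • (⊤ : Ideal S⟦X⟧)) ↔ ∀ m < 2 * n, coeff m f = 0 := by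
  rw [smul_eq_mul, Ideal.mul_top, Ideal.span_singleton_pow, Ideal.mem_span_singleton, ← pow_mul,
    X_pow_dvd_iff]

lemma isAdicComplete_X_sq (S : Type*) [CommRing S] :
    IsAdicComplete (Ideal.span {(X : S⟦X⟧) ^ 2}) S⟦X⟧ where
  haus' f hf := by
    ext m
    have := hf (m + 1)
    rw [SModEq.zero, mem_span_X_sq_pow] at this
    simpa using this m (by omega)
  prec' f hf := by
    refine ⟨PowerSeries.mk fun i ↦ coeff i (f (i + 1)), fun n ↦ ?_⟩
    rw [SModEq.sub_mem, mem_span_X_sq_pow]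
    intro m hm
    rw [map_sub, coeff_mk, sub_eq_zero]
    rcases le_total n (m + 1) with h | h
    · have := hf h
      rw [SModEq.sub_mem, mem_span_X_sq_pow] at this
      have := this m hm
      rwa [map_sub, sub_eq_zero] at this
    · have := hf h
      rw [SModEq.sub_mem, mem_span_X_sq_pow] at this
      have := this m (by omega)
      rw [map_sub, sub_eq_zero] at this
      exact this.symm

/-- the first-order map given by a derivation -/
noncomputable def derHom {B S : Type*} [CommRing B] [CommRing S] [Algebra B S]
    (D : Derivation B S S) : S →ₐ[B] S⟦X⟧ ⧸ (Ideal.span {(X : S⟦X⟧) ^ 2}) where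
  toFun s := Ideal.Quotient.mk _ (C s + C (D s) * X)
  map_one' := by simp
  map_zero' := by simp
  map_add' a b := by rw [← map_add]; congr 1; simp; ring
  map_mul' a b := by
    rw [← map_mul, Ideal.Quotient.eq, Ideal.mem_span_singleton]
    refine ⟨- C (D a) * C (D b), ?_⟩
    simp
    ring
  commutes' b := by
    rw [IsScalarTower.algebraMap_apply B S⟦X⟧ (S⟦X⟧ ⧸ _), PowerSeries.algebraMap_apply]
    simp

lemma regular_of_derivation {B S : Type*} [CommRing B] [CommRing S] [Algebra B S]
    [IsNoetherianRing S] [IsLocalRing S] [Algebra.FormallySmooth B S] (D : Derivation B S S)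
    (x : S) (hx : x ∈ IsLocalRing.maximalIdeal S) (hD : IsUnit (D x)) :
    ∀ s, x * s = 0 → s = 0 := by
  have := isAdicComplete_X_sq S
  obtain ⟨g, hg⟩ := Algebra.FormallySmooth.exists_mkₐ_comp_eq_of_isAdicComplete (R := B) (A := S) (S := S⟦X⟧)
    (I := Ideal.span {(X : S⟦X⟧) ^ 2}) (derHom D)
  have key : ∀ s, (∀ m < 2, coeff m (g s) = coeff m (C s + C (D s) * X : S⟦X⟧)) := by
    intro s m hm
    have := DFunLike.congr_fun hg s
    simp only [AlgHom.comp_apply, Ideal.Quotient.mkₐ_eq_mk] at this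
    have h2 : Ideal.Quotient.mk (Ideal.span {(X : S⟦X⟧) ^ 2}) (g s) =
      Ideal.Quotient.mk _ (C s + C (D s) * X) := this
    rw [Ideal.Quotient.eq, Ideal.mem_span_singleton, X_pow_dvd_iff] at h2
    have := h2 m hm
    rwa [map_sub, sub_eq_zero] at this
  intro s hs
  have h0 : g x * g s = 0 := by rw [← map_mul, hs, map_zero]
  have hx0 : coeff 0 (g x) = x := by rw [key x 0 (by omega)]; simp
  have hx1 : coeff 1 (g x) = D x := by
    rw [key x 1 (by omega)]; simp [coeff_C]
  have hs0 : coeff 0 (g s) = s := by rw [key s 0 (by omega)]; simp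
  generalize g s = G at *
  have hmem : ∀ k i, coeff i G ∈ IsLocalRing.maximalIdeal S ^ k := by
    intro k
    induction k with
    | zero => simp
    | succ k ih =>
      intro i
      induction i using Nat.strong_induction_on with
      | _ i ihi =>
      have h1 := congrArg (coeff (i + 1)) h0
      rw [coeff_mul, Finset.Nat.sum_antidiagonal_succ, map_zero, hx0] at h1
      have h2 : ∑ p ∈ Finset.HasAntidiagonal.antidiagonal i, coeff (p.1 + 1) (g x) * coeff p.2 G ∈
          IsLocalRing.maximalIdeal S ^ (k + 1) := by
        have : ∑ p ∈ Finset.HasAntidiagonal.antidiagonal i, coeff (p.1 + 1) (g x) * coeff p.2 G =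
          - (x * coeff (i + 1) G) := by simp at h1 ⊢; linear_combination h1
        rw [this]
        refine neg_mem ?_
        rw [pow_succ']
        exact Ideal.mul_mem_mul hx (ih _)
      rw [← Finset.add_sum_erase _ _ (a := (0, i)) (by simp)] at h2
      have h3 : ∑ p ∈ (Finset.HasAntidiagonal.antidiagonal i).erase (0, i), coeff (p.1 + 1) (g x) * coeff p.2 G ∈
          IsLocalRing.maximalIdeal S ^ (k + 1) := by
        refine Ideal.sum_mem _ fun p hp ↦ Ideal.mul_mem_left _ _ (ihi _ ?_)
        obtain ⟨a, b⟩ := p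
        simp at hp
        simp
        by_contra hlt
        exact hp.1 (by omega) (by omega)
      have h4 := (Ideal.add_mem_iff_left _ h3).mp h2
      simp only [zero_add, hx1] at h4 ⊢
      exact (Ideal.unit_mul_mem_iff_mem _ hD).mp h4
  have : s ∈ ⨅ k, IsLocalRing.maximalIdeal S ^ k := by
    rw [Submodule.mem_iInf]
    intro k
    rw [← hs0]; exact hmem k 0
  rwa [Ideal.iInf_pow_eq_bot_of_isLocalRing _ (IsLocalRing.maximalIdeal.isMaximal S).ne_top] at this

end PS


section Step
open TensorProduct

lemma exists_derivation {B T : Type*} [CommRing B] [CommRing T] [Algebra B T]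
    [IsLocalRing T] [Algebra.FormallySmooth B T] (J : Ideal T) (hJ : J ≤ IsLocalRing.maximalIdeal T)
    [Algebra.FormallySmooth B (T ⧸ J)] (x : T) (hx : x ∈ J)
    (hx' : x ∉ IsLocalRing.maximalIdeal T * J) :
    ∃ D : Derivation B T T, IsUnit (D x) := by
  have hd : KaehlerDifferential.D B T x ∉
      (IsLocalRing.maximalIdeal T • ⊤ : Submodule T (Ω[T⁄B])) := by
    intro hmem
    apply hx'
    obtain ⟨l, hl⟩ := (Algebra.FormallySmooth.iff_split_injection (R := B) (P := T) (A := T ⧸ J)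
      Ideal.Quotient.mk_surjective).mp inferInstance
    have hker : RingHom.ker (algebraMap T (T ⧸ J)) = J := Ideal.mk_ker
    have hxk : x ∈ RingHom.ker (algebraMap T (T ⧸ J)) := hker.ge hx
    have h1 := LinearMap.congr_fun hl (Ideal.toCotangent _ ⟨x, hxk⟩)
    simp only [LinearMap.comp_apply, LinearMap.id_apply,
      KaehlerDifferential.kerCotangentToTensor_toCotangent] at h1
    let ψ : Ω[T⁄B] →ₗ[T] _ := l ∘ₗ (TensorProduct.mk T (T ⧸ J) (Ω[T⁄B]) 1)
    have h2 : ψ (KaehlerDifferential.D B T x) = Ideal.toCotangent _ ⟨x, hxk⟩ := h1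
    have h3 : Ideal.toCotangent _ ⟨x, hxk⟩ ∈ (IsLocalRing.maximalIdeal T • ⊤ :
        Submodule T (RingHom.ker (algebraMap T (T ⧸ J))).Cotangent) := by
      rw [← h2]
      have := Submodule.mem_map_of_mem (f := ψ) hmem
      rw [Submodule.map_smul''] at this
      exact Submodule.smul_mono le_rfl le_top this
    rw [← (LinearMap.range_eq_top.mpr (Ideal.toCotangent_surjective _)), LinearMap.range_eq_map,
      ← Submodule.map_smul''] at h3
    obtain ⟨y, hy, hyx⟩ := h3
    rw [Ideal.toCotangent_eq] at hyx
    have hy2 : (y : T) ∈ IsLocalRing.maximalIdeal T * J := by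
      have := Submodule.mem_map_of_mem (f := Submodule.subtype _) hy
      rw [Submodule.map_smul'', Submodule.map_top, Submodule.range_subtype] at this
      exact Ideal.mul_mono_right hker.le this
    have h4 : (y : T) - x ∈ IsLocalRing.maximalIdeal T * J := by
      have h5 := Ideal.pow_right_mono hker.le 2 hyx
      rw [sq] at h5
      exact Ideal.mul_mono_left hJ h5
    have := sub_mem hy2 h4
    simpa using this
  obtain ⟨σ, hσ⟩ := (Module.projective_def' (R := T) (P := Ω[T⁄B])).mp inferInstance
  by_contra hcon
  push Not at hcon
  apply hd
  have hc : ∀ i, σ (KaehlerDifferential.D B T x) i ∈ IsLocalRing.maximalIdeal T := by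
    intro i
    have := hcon (((Finsupp.lapply i) ∘ₗ σ).compDer (KaehlerDifferential.D B T))
    exact (IsLocalRing.mem_maximalIdeal _).mpr this
  have h5 := LinearMap.congr_fun hσ (KaehlerDifferential.D B T x)
  simp only [LinearMap.comp_apply, LinearMap.id_apply] at h5
  rw [← h5, Finsupp.linearCombination_apply, Finsupp.sum]
  exact Submodule.sum_mem _ fun i _ ↦ Submodule.smul_mem_smul (hc i) trivial

lemma formallySmooth_quot {B T : Type*} [CommRing B] [CommRing T] [Algebra B T]
    [Algebra.FormallySmooth B T] (x : T) (D : Derivation B T T) (hD : IsUnit (D x)) :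
    Algebra.FormallySmooth B (T ⧸ Ideal.span {x}) := by
  rw [Algebra.FormallySmooth.iff_split_injection (R := B) (P := T) (A := T ⧸ Ideal.span {x})
      Ideal.Quotient.mk_surjective]
  have hker : RingHom.ker (algebraMap T (T ⧸ Ideal.span {x})) = Ideal.span {x} := Ideal.mk_ker
  have hxk : x ∈ RingHom.ker (algebraMap T (T ⧸ Ideal.span {x})) :=
    hker.ge (Ideal.mem_span_singleton_self x)
  let v : (RingHom.ker (algebraMap T (T ⧸ Ideal.span {x}))).Cotangent :=
    Ideal.toCotangent _ ⟨x, hxk⟩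
  obtain ⟨u, hu⟩ := hD
  let q : T →ₗ[T] (RingHom.ker (algebraMap T (T ⧸ Ideal.span {x}))).Cotangent :=
    (LinearMap.toSpanSingleton T _ v) ∘ₗ (LinearMap.mulLeft T (↑u⁻¹ : T))
  have hxv : x • v = 0 := by
    rw [← map_smul, Ideal.toCotangent_eq_zero]
    simp only [smul_eq_mul, Submodule.coe_smul]
    rw [sq]
    exact Ideal.mul_mem_mul hxk hxk
  have hq : Ideal.span {x} ≤ LinearMap.ker q := by
    rw [Ideal.span_le, Set.singleton_subset_iff]
    simp only [SetLike.mem_coe, LinearMap.mem_ker, q, LinearMap.comp_apply,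
      LinearMap.mulLeft_apply, LinearMap.toSpanSingleton_apply, mul_smul, hxv, smul_zero]
  let q' : (T ⧸ Ideal.span {x}) →ₗ[T] _ := Submodule.liftQ _ q hq
  refine ⟨TensorProduct.lift
    (((LinearMap.lsmul T _).flip ∘ₗ q').compl₂ (D.liftKaehlerDifferential)), ?_⟩
  apply LinearMap.ext
  intro z
  obtain ⟨⟨z, hz⟩, rfl⟩ := Ideal.toCotangent_surjective _ z
  have hz' := hz
  rw [hker, Ideal.mem_span_singleton'] at hz'
  obtain ⟨r, rfl⟩ := hz'
  have hv : Ideal.toCotangent _ ⟨r * x, hz⟩ = r • v := by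
    rw [← map_smul]; rfl
  have h1 : q' 1 = (↑u⁻¹ : T) • v := by
    change q 1 = _
    simp [q]
  rw [hv, LinearMap.comp_apply, LinearMap.id_apply, map_smul, map_smul]
  congr 1
  change TensorProduct.lift _ (1 ⊗ₜ[T] KaehlerDifferential.D B T x) = v
  rw [TensorProduct.lift.tmul]
  simp [h1, ← hu, smul_smul]

end Step

section LocalExt
open Abelian Pointwise

/-- `Ext^i(M, Y)` is concentrated in degree `k`, where it is isomorphic to `M`. -/
def ExtConc {S : Type u} [CommRing S] (M Y : ModuleCat.{u} S) (k : ℕ) : Prop :=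
  (∀ i, i ≠ k → Subsingleton (Abelian.Ext M Y i)) ∧ Nonempty (Abelian.Ext M Y k ≃ₗ[S] M)

lemma extConc_zero (S : Type u) [CommRing S] : ExtConc (ModuleCat.of S S) (ModuleCat.of S S) 0 := by
  refine ⟨fun i hi ↦ ?_, ⟨?_⟩⟩
  · obtain ⟨j, rfl⟩ := Nat.exists_eq_succ_of_ne_zero hi
    exact subsingleton_of_forall_eq 0 fun e ↦ Abelian.Ext.eq_zero_of_projective e
  · exact (Abelian.Ext.linearEquiv₀ (R := S)).trans
      (ModuleCat.homLinearEquiv.trans (LinearMap.ringLmapEquivSelf S S S))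

lemma ExtConc.of_equiv {S : Type u} [CommRing S] {M N Y : ModuleCat.{u} S} {k : ℕ}
    (h : ExtConc M Y k) (e : M ≃ₗ[S] N) : ExtConc N Y k := by
  have E : ∀ i, Nonempty (Abelian.Ext M Y i ≃ₗ[S] Abelian.Ext N Y i) := fun i ↦ ⟨
    LinearEquiv.ofLinearMap
      ((Abelian.Ext.mk₀ e.toModuleIso.inv).precompOfLinear S Y (zero_add i))
      ((Abelian.Ext.mk₀ e.toModuleIso.hom).precompOfLinear S Y (zero_add i))
      (by
        ext x
        change (Abelian.Ext.mk₀ _).comp ((Abelian.Ext.mk₀ _).comp x (zero_add i)) (zero_add i) = x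
        rw [Abelian.Ext.mk₀_comp_mk₀_assoc, Iso.inv_hom_id, Abelian.Ext.mk₀_id_comp])
      (by
        ext x
        change (Abelian.Ext.mk₀ _).comp ((Abelian.Ext.mk₀ _).comp x (zero_add i)) (zero_add i) = x
        rw [Abelian.Ext.mk₀_comp_mk₀_assoc, Iso.hom_inv_id, Abelian.Ext.mk₀_id_comp])⟩
  refine ⟨fun i hi ↦ ?_, ?_⟩
  · have := h.1 i hi
    exact (E i).some.symm.toEquiv.subsingleton
  · exact ⟨(E k).some.symm.trans (h.2.some.trans e)⟩

lemma ExtConc.step_aux {S : Type u} [CommRing S] {M N Y : ModuleCat.{u} S} {k : ℕ}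
    (h : ExtConc M Y k) (x : S) (hx : IsSMulRegular M x) (g : M ⟶ N) (w : (x • 𝟙 M) ≫ g = 0)
    (hS : (ShortComplex.mk (x • 𝟙 M) g w).ShortExact) (eN : QuotSMulTop x M ≃ₗ[S] N) :
    ExtConc N Y (k + 1) := by
  let ε : Abelian.Ext N M 1 := hS.extClass
  have hε₁ : ∀ (n : ℕ) (z : Abelian.Ext M Y n), ε.comp z (add_comm 1 n) = 0 →
      ∃ w : Abelian.Ext M Y n, x • w = z := by
    intro n z hz
    obtain ⟨w, hw⟩ := Abelian.Ext.contravariant_sequence_exact₁ hS _ z (add_comm 1 n) hz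
    refine ⟨w, ?_⟩
    rw [← hw]
    dsimp only
    rw [Abelian.Ext.mk₀_smul, Abelian.Ext.smul_comp, Abelian.Ext.mk₀_id_comp]
  have hε₂ : ∀ (n : ℕ) (w : Abelian.Ext M Y n), ε.comp (x • w) (add_comm 1 n) = 0 := by
    intro n w
    have h1 := hS.extClass_comp_assoc w (h := add_comm 1 n)
    dsimp only at h1
    rw [Abelian.Ext.mk₀_smul, Abelian.Ext.smul_comp, Abelian.Ext.mk₀_id_comp] at h1
    exact h1
  have hε₃ : ∀ (n : ℕ) (y : Abelian.Ext N Y (n + 1)),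
      (Abelian.Ext.mk₀ g).comp y (zero_add (n + 1)) = 0 →
      ∃ z : Abelian.Ext M Y n, ε.comp z (add_comm 1 n) = y := fun n y hy ↦
      Abelian.Ext.contravariant_sequence_exact₃ hS _ y hy (add_comm 1 n)
  have hepi : Epi g := hS.epi_g
  have hzero : ∀ (n : ℕ) (y : Abelian.Ext M Y n), x • y = 0 → y = 0 := by
    intro n y hy
    by_cases hn : n = k
    · subst hn
      obtain ⟨e⟩ := h.2
      apply e.injective
      apply hx
      simp only
      rw [← map_smul, hy, map_zero, smul_zero]
    · have := h.1 n hn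
      exact Subsingleton.elim _ _
  have hg : ∀ (n : ℕ) (y : Abelian.Ext N Y n),
      (Abelian.Ext.mk₀ g).comp y (zero_add n) = 0 := by
    intro n y
    apply hzero
    have h1 : (Abelian.Ext.mk₀ (x • 𝟙 M)).comp
      ((Abelian.Ext.mk₀ g).comp y (zero_add n)) (zero_add n) = 0 := by
      rw [Abelian.Ext.mk₀_comp_mk₀_assoc, w]; simp
    rwa [Abelian.Ext.mk₀_smul, Abelian.Ext.smul_comp, Abelian.Ext.mk₀_id_comp] at h1
  have hsurj : ∀ (n : ℕ) (y : Abelian.Ext N Y (n + 1)),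
    ∃ z : Abelian.Ext M Y n, ε.comp z (add_comm 1 n) = y := fun n y ↦ hε₃ n y (hg _ y)
  refine ⟨fun i hi ↦ ?_, ?_⟩
  · refine subsingleton_of_forall_eq 0 fun (y : Abelian.Ext N Y i) ↦ ?_
    cases i with
    | zero =>
      apply Abelian.Ext.precomp_mk₀_injective_of_epi Y g
      rw [map_zero]
      exact hg 0 y
    | succ n =>
      obtain ⟨z, rfl⟩ := hsurj n y
      have := h.1 n (by omega)
      rw [Subsingleton.elim z 0, Abelian.Ext.comp_zero]
  · let δ : Abelian.Ext M Y k →ₗ[S] Abelian.Ext N Y (k + 1) :=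
      ε.precompOfLinear S Y (add_comm 1 k)
    have hδ : Function.Surjective δ := hsurj k
    have hker : LinearMap.ker δ = x • ⊤ := by
      ext z
      rw [LinearMap.mem_ker, Submodule.mem_smul_pointwise_iff_exists]
      constructor
      · intro hz
        obtain ⟨w, hw⟩ := hε₁ k z hz
        exact ⟨w, trivial, hw⟩
      · rintro ⟨w, -, rfl⟩
        exact hε₂ k w
    obtain ⟨e⟩ := h.2
    exact ⟨((Submodule.quotEquivOfEq _ _ hker.symm).trans
      (δ.quotKerEquivOfSurjective hδ)).symm.trans ((QuotSMulTop.congr x e).trans eN)⟩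

lemma ExtConc.step {S : Type u} [CommRing S] {M Y : ModuleCat.{u} S} {k : ℕ}
    (h : ExtConc M Y k) (x : S) (hx : IsSMulRegular M x) :
    ExtConc (ModuleCat.of S (QuotSMulTop x M)) Y (k + 1) :=
  h.step_aux x hx (ModuleCat.ofHom (Submodule.mkQ _)) _ hx.smulShortComplex_shortExact
    (LinearEquiv.refl _ _)

end LocalExt

section Geometry
open Pointwise

lemma extConc_of_le {B : Type*} {S : Type u} [CommRing B] [CommRing S] [Algebra B S]
    [IsNoetherianRing S] [IsLocalRing S] (J : Ideal S)
    (hJ : J ≤ IsLocalRing.maximalIdeal S) (hJs : Algebra.FormallySmooth B (S ⧸ J)) :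
    ∀ K : Ideal S, K ≤ J → Algebra.FormallySmooth B (S ⧸ K) →
      (∃ k, ExtConc (ModuleCat.of S (S ⧸ K)) (ModuleCat.of S S) k) →
      ∃ k, ExtConc (ModuleCat.of S (S ⧸ J)) (ModuleCat.of S S) k := by
  intro K
  induction K using WellFoundedGT.induction with
  | ind K ih =>
  intro hKJ hK hk
  by_cases hle : J ≤ K
  · rwa [← le_antisymm hKJ hle]
  obtain ⟨x, hxJ, hx⟩ : ∃ x ∈ J, x ∉ K ⊔ IsLocalRing.maximalIdeal S * J := by
    by_contra! hcon
    exact hle (Submodule.le_of_le_smul_of_le_jacobson_bot (IsNoetherian.noetherian _)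
      (IsLocalRing.maximalIdeal_le_jacobson _) hcon)
  have hKtop : K ≠ ⊤ := fun h ↦ (IsLocalRing.maximalIdeal.isMaximal S).ne_top
    (top_le_iff.mp (h ▸ hKJ.trans hJ))
  have : Nontrivial (S ⧸ K) := Ideal.Quotient.nontrivial_iff.mpr hKtop
  have : IsLocalRing (S ⧸ K) := IsLocalRing.of_surjective' (Ideal.Quotient.mk K)
    Ideal.Quotient.mk_surjective
  have hmT : IsLocalRing.maximalIdeal (S ⧸ K) ≤
      (IsLocalRing.maximalIdeal S).map (Ideal.Quotient.mk K) := by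
    intro t ht
    obtain ⟨s, rfl⟩ := Ideal.Quotient.mk_surjective t
    refine Ideal.mem_map_of_mem _ ?_
    rw [IsLocalRing.mem_maximalIdeal] at ht ⊢
    exact fun h ↦ ht (h.map _)
  have hmT' : (IsLocalRing.maximalIdeal S).map (Ideal.Quotient.mk K) ≤
      IsLocalRing.maximalIdeal (S ⧸ K) := by
    apply IsLocalRing.le_maximalIdeal
    intro h
    have h2 := congrArg (Ideal.comap (Ideal.Quotient.mk K)) h
    rw [Ideal.comap_map_of_surjective _ Ideal.Quotient.mk_surjective, Ideal.comap_top,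
      ← RingHom.ker_eq_comap_bot, Ideal.mk_ker, sup_eq_left.mpr (hKJ.trans hJ)] at h2
    exact (IsLocalRing.maximalIdeal.isMaximal S).ne_top h2
  have hJT : J.map (Ideal.Quotient.mk K) ≤ IsLocalRing.maximalIdeal (S ⧸ K) :=
    (Ideal.map_mono hJ).trans hmT'
  have hs1 : Algebra.FormallySmooth B ((S ⧸ K) ⧸ J.map (Ideal.Quotient.mk K)) :=
    Algebra.FormallySmooth.of_equiv (DoubleQuot.quotQuotEquivQuotOfLEₐ B hKJ).symm
  have hx2 : Ideal.Quotient.mk K x ∉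
      IsLocalRing.maximalIdeal (S ⧸ K) * J.map (Ideal.Quotient.mk K) := by
    intro h
    have h2 := Ideal.mul_mono_left hmT h
    rw [← Ideal.map_mul, ← Ideal.mem_comap,
      Ideal.comap_map_of_surjective _ Ideal.Quotient.mk_surjective,
      ← RingHom.ker_eq_comap_bot, Ideal.mk_ker, sup_comm] at h2
    exact hx h2
  obtain ⟨D, hD⟩ := exists_derivation (B := B) (J.map (Ideal.Quotient.mk K)) hJT
    (Ideal.Quotient.mk K x) (Ideal.mem_map_of_mem _ hxJ) hx2
  have hreg := regular_of_derivation D (Ideal.Quotient.mk K x)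
    (hJT (Ideal.mem_map_of_mem _ hxJ)) hD
  have hsm := formallySmooth_quot (Ideal.Quotient.mk K x) D hD
  apply ih (K ⊔ Ideal.span {x})
  · refine lt_of_le_of_ne le_sup_left fun h ↦ hx ?_
    refine Ideal.mem_sup_left ?_
    rw [h]
    exact Ideal.mem_sup_right (Ideal.mem_span_singleton_self x)
  · exact sup_le hKJ ((Ideal.span_singleton_le_iff_mem _).mpr hxJ)
  · have hmap : Ideal.span {Ideal.Quotient.mk K x} =
        Ideal.map (Ideal.Quotient.mkₐ B K) (Ideal.span {x}) := by
      rw [Ideal.map_span, Set.image_singleton]; rfl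
    rw [hmap] at hsm
    exact Algebra.FormallySmooth.of_equiv (DoubleQuot.quotQuotEquivQuotSupₐ B K (Ideal.span {x}))
  · obtain ⟨k, hk⟩ := hk
    refine ⟨k + 1, (hk.step x ?_).of_equiv ?_⟩
    · intro a b hab
      rw [← sub_eq_zero]
      apply hreg
      have : x • (a - b) = 0 := by
        rw [smul_sub, sub_eq_zero]; exact hab
      rwa [Algebra.smul_def] at this
    · refine LinearEquiv.trans (Submodule.quotEquivOfEq _ _ ?_)
        (Submodule.quotientQuotientEquivQuotientSup K (Ideal.span {x}))
      have : Ideal.span {x} = x • (⊤ : Submodule S S) := by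
        rw [← Submodule.ideal_span_singleton_smul]; simp
      rw [this, Submodule.map_pointwise_smul, Submodule.map_top, Submodule.range_mkQ]

theorem exists_extConc (B : Type*) {S : Type u} [CommRing B] [CommRing S] [Algebra B S]
    [IsNoetherianRing S] [IsLocalRing S] [hS : Algebra.FormallySmooth B S] (J : Ideal S)
    (hJ : J ≤ IsLocalRing.maximalIdeal S) [hJs : Algebra.FormallySmooth B (S ⧸ J)] :
    ∃ k, ExtConc (ModuleCat.of S (S ⧸ J)) (ModuleCat.of S S) k :=
  extConc_of_le (B := B) J hJ hJs ⊥ bot_le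
    (Algebra.FormallySmooth.of_equiv (AlgEquiv.quotientBot B S).symm)
    ⟨0, (extConc_zero S).of_equiv
      ((Submodule.quotEquivOfEqBot (⊥ : Submodule S S) rfl).symm)⟩

end Geometry

section Loc
open Abelian

variable {R : Type u} [CommRing R] (𝒮 : Submonoid R)

/-- The localization functor. -/
noncomputable abbrev locF : ModuleCat.{u} R ⥤ ModuleCat.{u} (Localization 𝒮) :=
  ModuleCat.localizedModuleFunctor 𝒮

/-- The localization map on `Ext`. -/
noncomputable abbrev locExt (M N : ModuleCat.{u} R) (n : ℕ) :
    Abelian.Ext M N n →+ Abelian.Ext ((locF 𝒮).obj M) ((locF 𝒮).obj N) n :=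
  (locF 𝒮).mapExtAddHom M N n

lemma mapExtendScalars_smul_id {M M' : Type*} [AddCommGroup M] [AddCommGroup M'] [Module R M]
    [Module R M'] (R' : Type*) [CommRing R'] [Algebra R R'] [IsLocalization 𝒮 R'] [Module R' M']
    [IsScalarTower R R' M'] (f : M →ₗ[R] M') [IsLocalizedModule 𝒮 f] (r : R) :
    IsLocalizedModule.mapExtendScalars 𝒮 f f R' (r • LinearMap.id) =
      (algebraMap R R' r) • LinearMap.id := by
  ext x
  obtain ⟨⟨m, s⟩, rfl⟩ := IsLocalizedModule.mk'_surjective 𝒮 f x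
  simp only [Function.uncurry_apply_pair, IsLocalizedModule.mapExtendScalars_apply_apply,
    IsLocalizedModule.map_mk', LinearMap.smul_apply, LinearMap.id_apply, algebraMap_smul,
    IsLocalizedModule.mk'_smul]

lemma locF_map_smul_id (N : ModuleCat.{u} R) (r : R) :
    (locF 𝒮).map (r • 𝟙 N) = (algebraMap R (Localization 𝒮) r) • 𝟙 ((locF 𝒮).obj N) :=
  ModuleCat.hom_ext (mapExtendScalars_smul_id 𝒮 (Localization 𝒮)
    (N.localizedModuleMkLinearMap 𝒮) r)

lemma locExt_smul (M N : ModuleCat.{u} R) (n : ℕ) (r : R) (e : Abelian.Ext M N n) :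
    locExt 𝒮 M N n (r • e) = algebraMap R (Localization 𝒮) r • locExt 𝒮 M N n e := by
  change (r • e).mapExactFunctor _ = _ • e.mapExactFunctor _
  rw [Abelian.Ext.smul_eq_comp_mk₀, Abelian.Ext.mapExactFunctor_comp,
    Abelian.Ext.mapExactFunctor_mk₀, locF_map_smul_id, ← Abelian.Ext.smul_eq_comp_mk₀]

/-- The localization property for `Ext^n(M, N)`. -/
def LocProp (M N : ModuleCat.{u} R) (n : ℕ) : Prop :=
  (∀ e, locExt 𝒮 M N n e = 0 → ∃ s ∈ 𝒮, s • e = 0) ∧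
  (∀ y, ∃ s ∈ 𝒮, ∃ e, algebraMap R (Localization 𝒮) s • y = locExt 𝒮 M N n e)

lemma locProp_zero (M N : ModuleCat.{u} R) [Module.FinitePresentation R M] : LocProp 𝒮 M N 0 := by
  have hloc : IsLocalizedModule 𝒮 (IsLocalizedModule.mapExtendScalars 𝒮
    (M.localizedModuleMkLinearMap 𝒮) (N.localizedModuleMkLinearMap 𝒮) (Localization 𝒮)) :=
    inferInstance
  have key : ∀ f : M ⟶ N, locExt 𝒮 M N 0 (Abelian.Ext.mk₀ f) =
      Abelian.Ext.mk₀ ((locF 𝒮).map f) := fun f ↦ Abelian.Ext.mapExactFunctor_mk₀ _ f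
  constructor
  · intro e he
    obtain ⟨f, rfl⟩ := (Abelian.Ext.mk₀_bijective M N).2 e
    rw [key, Abelian.Ext.mk₀_eq_zero_iff] at he
    have h2 : IsLocalizedModule.mapExtendScalars 𝒮
      (M.localizedModuleMkLinearMap 𝒮) (N.localizedModuleMkLinearMap 𝒮) (Localization 𝒮) f.hom
        = 0 := congrArg ModuleCat.Hom.hom he
    obtain ⟨s, hs⟩ := (IsLocalizedModule.eq_zero_iff 𝒮 _).mp h2
    refine ⟨s, s.2, ?_⟩
    rw [← Abelian.Ext.mk₀_smul, Abelian.Ext.mk₀_eq_zero_iff]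
    ext x
    exact LinearMap.congr_fun hs x
  · intro y
    obtain ⟨g, rfl⟩ := (Abelian.Ext.mk₀_bijective _ _).2 y
    obtain ⟨⟨f, s⟩, hs⟩ := IsLocalizedModule.surj 𝒮 (IsLocalizedModule.mapExtendScalars 𝒮
      (M.localizedModuleMkLinearMap 𝒮) (N.localizedModuleMkLinearMap 𝒮) (Localization 𝒮)) g.hom
    refine ⟨s, s.2, Abelian.Ext.mk₀ (ModuleCat.ofHom f), ?_⟩
    rw [key, ← Abelian.Ext.mk₀_smul]
    congr 1
    ext x
    have h3 := LinearMap.congr_fun hs x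
    change _ = IsLocalizedModule.mapExtendScalars 𝒮
      (M.localizedModuleMkLinearMap 𝒮) (N.localizedModuleMkLinearMap 𝒮) (Localization 𝒮) f x
    rw [← h3]
    exact algebraMap_smul (Localization 𝒮) (s : R) (M := N.localizedModule 𝒮) (g.hom x)

lemma locProp_succ {K P M : ModuleCat.{u} R} (N : ModuleCat.{u} R) (n : ℕ) (i : K ⟶ P) (p : P ⟶ M)
    (w : i ≫ p = 0) (hS : (ShortComplex.mk i p w).ShortExact) [hP : Projective P]
    (hK : LocProp 𝒮 K N n) (hPn : LocProp 𝒮 P N n) : LocProp 𝒮 M N (n + 1) := by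
  let ε : Abelian.Ext M K 1 := hS.extClass
  have hS' := hS.map_of_exact (locF 𝒮)
  let ε' : Abelian.Ext ((locF 𝒮).obj M) ((locF 𝒮).obj K) 1 := hS'.extClass
  have hPF : Projective ((locF 𝒮).obj P) := (locF 𝒮).projective_obj_of_projective hP
  have hεε' : ε.mapExactFunctor (locF 𝒮) = ε' := Abelian.Ext.mapExactFunctor_extClass _ hS
  have h1 : ∀ y : Abelian.Ext M N (n + 1), ∃ z : Abelian.Ext K N n,
      ε.comp z (add_comm 1 n) = y := fun y ↦
    Abelian.Ext.contravariant_sequence_exact₃ hS N y (Abelian.Ext.eq_zero_of_projective (P := P) _)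
      (add_comm 1 n)
  have h1' : ∀ y : Abelian.Ext ((locF 𝒮).obj M) ((locF 𝒮).obj N) (n + 1),
      ∃ z : Abelian.Ext ((locF 𝒮).obj K) ((locF 𝒮).obj N) n,
      ε'.comp z (add_comm 1 n) = y := fun y ↦
    Abelian.Ext.contravariant_sequence_exact₃ hS' _ y
      (Abelian.Ext.eq_zero_of_projective (P := (locF 𝒮).obj P) _) (add_comm 1 n)
  have h2' : ∀ z : Abelian.Ext ((locF 𝒮).obj K) ((locF 𝒮).obj N) n,
      ε'.comp z (add_comm 1 n) = 0 →
      ∃ v : Abelian.Ext ((locF 𝒮).obj P) ((locF 𝒮).obj N) n,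
        (Abelian.Ext.mk₀ ((locF 𝒮).map i)).comp v (zero_add n) = z := fun z hz ↦
    Abelian.Ext.contravariant_sequence_exact₁ hS' _ z (add_comm 1 n) hz
  have h2 : ∀ v : Abelian.Ext P N n,
      ε.comp ((Abelian.Ext.mk₀ i).comp v (zero_add n)) (add_comm 1 n) = 0 := fun v ↦
    hS.extClass_comp_assoc v (h := add_comm 1 n)
  have hc : ∀ z : Abelian.Ext K N n, locExt 𝒮 M N (n + 1) (ε.comp z (add_comm 1 n)) =
      ε'.comp (locExt 𝒮 K N n z) (add_comm 1 n) := by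
    intro z
    change (ε.comp z (add_comm 1 n)).mapExactFunctor _ = _
    rw [Abelian.Ext.mapExactFunctor_comp, hεε']
    rfl
  have hi : ∀ v : Abelian.Ext P N n, locExt 𝒮 K N n ((Abelian.Ext.mk₀ i).comp v (zero_add n)) =
      (Abelian.Ext.mk₀ ((locF 𝒮).map i)).comp (locExt 𝒮 P N n v) (zero_add n) := by
    intro v
    change ((Abelian.Ext.mk₀ i).comp v (zero_add n)).mapExactFunctor _ = _
    rw [Abelian.Ext.mapExactFunctor_comp, Abelian.Ext.mapExactFunctor_mk₀]
    rfl
  constructor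
  · intro e he
    obtain ⟨z, rfl⟩ := h1 e
    rw [hc] at he
    obtain ⟨v, hv⟩ := h2' _ he
    obtain ⟨s, hs, v₀, hv₀⟩ := hPn.2 v
    have h3 : locExt 𝒮 K N n (s • z - (Abelian.Ext.mk₀ i).comp v₀ (zero_add n)) = 0 := by
      rw [map_sub, locExt_smul, hi, ← hv₀, ← hv, Abelian.Ext.comp_smul, sub_self]
    obtain ⟨t, ht, h4⟩ := hK.1 _ h3
    refine ⟨t * s, mul_mem ht hs, ?_⟩
    rw [smul_sub, sub_eq_zero] at h4
    rw [mul_smul, ← Abelian.Ext.comp_smul, ← Abelian.Ext.comp_smul, h4, Abelian.Ext.comp_smul,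
      h2, smul_zero]
  · intro y
    obtain ⟨z, rfl⟩ := h1' y
    obtain ⟨s, hs, e, he⟩ := hK.2 z
    exact ⟨s, hs, ε.comp e (add_comm 1 n), by rw [hc, ← he, Abelian.Ext.comp_smul]⟩

lemma locProp [IsNoetherianRing R] (M N : ModuleCat.{u} R) [Module.Finite R M] (n : ℕ) :
    LocProp 𝒮 M N n := by
  induction n generalizing M with
  | zero =>
    have := Module.finitePresentation_of_finite R M
    exact locProp_zero 𝒮 M N
  | succ n ih =>
    obtain ⟨P, _, _, _, _, f, hf⟩ := Module.exists_finite_presentation R M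
    have hp : Projective (ModuleCat.of R P) :=
      ModuleCat.projective_of_categoryTheory_projective _
    exact locProp_succ 𝒮 N n _ _ _ (LinearMap.shortExact_shortComplexKer hf)
      (ih (ModuleCat.of R (LinearMap.ker f))) (ih (ModuleCat.of R P))

end Loc

section OldNew
open Abelian

variable {R : Type u} [CommRing R] {X Y : ModuleCat.{u} R} (P : ProjectiveResolution X)

lemma extMk_zero_iff (f : P.complex.X 0 ⟶ Y) (m : ℕ) (hm : 0 + 1 = m)
    (hf : P.complex.d m 0 ≫ f = 0) (h : P.extMk f m hm hf = 0) : f = 0 := by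
  simp only [← P.extEquivCohomologyClass.apply_eq_iff_eq,
    ProjectiveResolution.extEquivCohomologyClass_extMk,
    ProjectiveResolution.extEquivCohomologyClass_zero,
    CochainComplex.HomComplex.CohomologyClass.mk_eq_zero_iff] at h
  rw [CochainComplex.HomComplex.Cocycle.toSingleMk_mem_coboundaries_iff _ _ _ _ _ 1 (by lia)] at h
  obtain ⟨g, hg⟩ := h
  have hz : Limits.IsZero (P.cochainComplex.X 1) :=
    P.cochainComplex.isZero_of_isStrictlyLE 0 1
  rw [hz.eq_of_src g 0, Limits.comp_zero] at hg
  rw [← cancel_epi (P.cochainComplexXIso (-(0 : ℕ)) 0 rfl).hom, Limits.comp_zero]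
  exact hg.symm

lemma yonedaObj_d_apply (n m : ℕ) (f : P.complex.X n ⟶ Y) :
    ((P.complex.linearYonedaObj R Y).d n m).hom f = P.complex.d m n ≫ f := rfl

lemma next_eq (n : ℕ) : n + 1 = (ComplexShape.up ℕ).next n := (CochainComplex.next ℕ n).symm

lemma smul_extMk (n : ℕ) (r : R) (f : P.complex.X n ⟶ Y) (m : ℕ) (hm : n + 1 = m)
    (hf : P.complex.d m n ≫ f = 0) :
    P.extMk (r • f) m hm (by rw [Linear.comp_smul, hf, smul_zero]) = r • P.extMk f m hm hf := by
  rw [Abelian.Ext.smul_eq_comp_mk₀, ProjectiveResolution.extMk_comp_mk₀]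
  congr 1

lemma extMk_zero_iff' (n : ℕ) (f : P.complex.X n ⟶ Y) (m : ℕ) (hm : n + 1 = m)
    (hf : P.complex.d m n ≫ f = 0) :
    P.extMk f m hm hf = 0 ↔ ∃ g : P.complex.X ((ComplexShape.up ℕ).prev n) ⟶ Y,
      P.complex.d n ((ComplexShape.up ℕ).prev n) ≫ g = f := by
  cases n with
  | zero =>
    have hd : P.complex.d 0 ((ComplexShape.up ℕ).prev 0) = 0 := by
      rw [CochainComplex.prev_nat_zero]
      exact P.complex.shape _ _ (by simp)
    constructor
    · intro h
      have := extMk_zero_iff P f m hm hf h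
      exact ⟨0, by rw [this, Limits.comp_zero]⟩
    · rintro ⟨g, rfl⟩
      simp only [hd, Limits.zero_comp]
      exact P.extMk_zero m hm
  | succ p =>
    exact P.extMk_eq_zero_iff f m hm hf _ (by rw [CochainComplex.prev_nat_succ])

/-- cocycles to `Ext` -/
noncomputable def kerToExt (n : ℕ) :
    LinearMap.ker ((P.complex.linearYonedaObj R Y).sc n).g.hom →ₗ[R] Abelian.Ext X Y n where
  toFun z := P.extMk (Y := Y) z.1 ((ComplexShape.up ℕ).next n) (next_eq n) z.2
  map_add' z w := (P.add_extMk (Y := Y) z.1 w.1 _ (next_eq n) z.2 w.2).symm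
  map_smul' r z := by
    exact smul_extMk P n r (Y := Y) z.1 _ (next_eq n) z.2

/-- The old and new `Ext` modules agree. -/
noncomputable def oldNew (n : ℕ) :
    (((Ext R (ModuleCat.{u} R) n).obj (Opposite.op X)).obj Y) ≃ₗ[R] Abelian.Ext X Y n := by
  refine (P.isoExt (R := R) n Y).toLinearEquiv.trans
    ((((P.complex.linearYonedaObj R Y).sc n).moduleCatHomologyIso.toLinearEquiv).trans
    ((Submodule.quotEquivOfEq _ _ ?_).trans
      ((kerToExt (Y := Y) P n).quotKerEquivOfSurjective ?_)))
  · ext z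
    rw [LinearMap.mem_range, LinearMap.mem_ker]
    refine Iff.trans ?_ (extMk_zero_iff' P n (Y := Y) z.1 _ (next_eq n) z.2).symm
    constructor
    · rintro ⟨g, rfl⟩
      exact ⟨g, rfl⟩
    · rintro ⟨g, hg⟩
      exact ⟨g, Subtype.ext hg⟩
  · intro e
    obtain ⟨f, hf, rfl⟩ := P.extMk_surjective e _ (next_eq n)
    exact ⟨⟨f, hf⟩, rfl⟩

end OldNew

section Glue

variable {B : Type u} [CommRing B]

/-- `E` is, locally at `q`, free on the image of `e`. -/
def LocGen (q : Ideal B) {E : Type*} [AddCommGroup E] [Module B E] (e₀ : E) : Prop :=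
  (∀ b : B, b • e₀ = 0 → ∃ s : B, s ∉ q ∧ s * b = 0) ∧
  (∀ e : E, ∃ s : B, s ∉ q ∧ ∃ b : B, s • e = b • e₀)

lemma exists_unif {q : Ideal B} [hq : q.IsPrime] {E : Type*} [AddCommGroup E] [Module B E]
    [hE : Module.Finite B E] (N : Submodule B E)
    (h : ∀ e : E, ∃ s : B, s ∉ q ∧ s • e ∈ N) : ∃ s : B, s ∉ q ∧ ∀ e : E, s • e ∈ N := by
  classical
  obtain ⟨t, ht⟩ := hE.fg_top
  choose f hf hf2 using h
  refine ⟨∏ x ∈ t, f x, ?_, ?_⟩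
  · exact fun h ↦ by
      obtain ⟨x, -, hx⟩ := (hq.prod_mem_iff).mp h
      exact hf x hx
  · intro e
    have he : e ∈ Submodule.span B (t : Set E) := by rw [ht]; trivial
    induction he using Submodule.span_induction with
    | mem x hx =>
      rw [← Finset.prod_erase_mul t f hx, mul_smul]
      exact N.smul_mem _ (hf2 x)
    | zero => simp
    | add x y _ _ hx hy => rw [smul_add]; exact N.add_mem hx hy
    | smul a x _ hx => rw [smul_comm]; exact N.smul_mem _ hx

lemma eq_zero_of_local {E : Type*} [AddCommGroup E] [Module B E] (x : E)
    (h : ∀ q : Ideal B, q.IsMaximal → ∃ s : B, s ∉ q ∧ s • x = 0) : x = 0 := by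
  by_contra hx
  have : Ideal.torsionOf B E x ≠ ⊤ := by
    intro h1
    have : (1 : B) ∈ Ideal.torsionOf B E x := by rw [h1]; trivial
    rw [Ideal.mem_torsionOf_iff, one_smul] at this
    exact hx this
  obtain ⟨q, hq, hle⟩ := Ideal.exists_le_maximal _ this
  obtain ⟨s, hs, hs2⟩ := h q hq
  exact hs (hle ((Ideal.mem_torsionOf_iff _ _).mpr hs2))

lemma isOpen_support_of_locGen [IsNoetherianRing B] {E : Type*} [AddCommGroup E] [Module B E]
    [Module.Finite B E]
    (h : ∀ q ∈ Module.support B E, ∃ e : E, LocGen q.asIdeal e) :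
    IsOpen (Module.support B E) := by
  rw [isOpen_iff_forall_mem_open]
  intro q hq
  obtain ⟨e, he1, he2⟩ := h q hq
  obtain ⟨s, hs, hs2⟩ := exists_unif (q := q.asIdeal) (E := Ideal.torsionOf B E e) ⊥ (by
    rintro ⟨b, hb⟩
    obtain ⟨s, hs, h⟩ := he1 b ((Ideal.mem_torsionOf_iff _ _).mp hb)
    exact ⟨s, hs, by ext; simpa using h⟩)
  refine ⟨PrimeSpectrum.basicOpen s, ?_, (PrimeSpectrum.basicOpen s).2, hs⟩
  intro q' hq'
  rw [Module.mem_support_iff_exists_annihilator]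
  refine ⟨e, fun t ht ↦ ?_⟩
  by_contra htq
  have h1 : t • e = 0 := by
    exact (Submodule.mem_annihilator_span_singleton e t).mp ht
  have h2 := hs2 ⟨t, (Ideal.mem_torsionOf_iff _ _).mpr h1⟩
  have h3 : s * t = 0 := by simpa [Subtype.ext_iff] using h2
  rcases q'.2.mem_or_mem (h3 ▸ q'.asIdeal.zero_mem : s * t ∈ q'.asIdeal) with h | h
  · exact hq' h
  · exact htq h

open TensorProduct in
lemma invertible_of_locGen [IsNoetherianRing B] {E : Type u} [AddCommGroup E] [Module B E]
    [Module.Finite B E]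
    (h : ∀ q : Ideal B, q.IsMaximal → ∃ e : E, LocGen q e) :
    Module.Invertible B E := by
  constructor
  constructor
  · suffices H : ∀ x, contractLeft B E x = 0 → x = 0 by
      intro x y hxy
      have h1 : contractLeft B E ((x - y) + y) = contractLeft B E (x - y) + contractLeft B E y :=
        map_add _ _ _
      rw [sub_add_cancel, hxy, right_eq_add] at h1
      exact sub_eq_zero.mp (H _ h1)
    intro x hx
    refine eq_zero_of_local (B := B) x fun q hq ↦ ?_
    obtain ⟨e, he1, he2⟩ := h q hq
    have hp : q.IsPrime := hq.isPrime
    obtain ⟨s, hs, hs2⟩ := exists_unif (q := q) (E := E) (Submodule.span B {e}) (fun x ↦ by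
      obtain ⟨s, hs, b, hb⟩ := he2 x
      exact ⟨s, hs, Submodule.mem_span_singleton.mpr ⟨b, hb.symm⟩⟩)
    have key : ∀ x : Module.Dual B E ⊗[B] E, ∃ g : Module.Dual B E, s • x = g ⊗ₜ e := by
      intro x
      induction x with
      | zero => exact ⟨0, by simp⟩
      | tmul f x =>
        obtain ⟨b, hb⟩ := Submodule.mem_span_singleton.mp (hs2 x)
        exact ⟨b • f, by rw [← TensorProduct.tmul_smul, ← hb, TensorProduct.smul_tmul]⟩
      | add x y hx hy =>
        obtain ⟨f, hf⟩ := hx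
        obtain ⟨g, hg⟩ := hy
        exact ⟨f + g, by rw [smul_add, hf, hg, TensorProduct.add_tmul]⟩
    obtain ⟨g, hg⟩ := key x
    have hge : g e = 0 := by
      have : contractLeft B E (s • x) = 0 := by rw [map_smul, hx, smul_zero]
      rwa [hg, contractLeft_apply] at this
    refine ⟨s * s, fun h ↦ by rcases hp.mem_or_mem h with h | h <;> exact hs h, ?_⟩
    have h0 : s • g = 0 := by
      ext x
      obtain ⟨b, hb⟩ := Submodule.mem_span_singleton.mp (hs2 x)
      rw [LinearMap.smul_apply, ← map_smul, ← hb, map_smul, hge, smul_zero, LinearMap.zero_apply]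
    rw [mul_smul, hg, TensorProduct.smul_tmul', h0, TensorProduct.zero_tmul]
  · rw [← LinearMap.range_eq_top]
    by_contra hne
    obtain ⟨q, hq, hle⟩ := Ideal.exists_le_maximal (LinearMap.range (contractLeft B E)) hne
    obtain ⟨e, he1, he2⟩ := h q hq
    have hp : q.IsPrime := hq.isPrime
    -- the annihilator of `e` is killed by `t`
    obtain ⟨t, ht, ht2⟩ := exists_unif (q := q) (E := Ideal.torsionOf B E e) ⊥ (by
      rintro ⟨b, hb⟩
      obtain ⟨s, hs, h⟩ := he1 b ((Ideal.mem_torsionOf_iff _ _).mp hb)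
      exact ⟨s, hs, by ext; simpa using h⟩)
    obtain ⟨s, hs, hs2⟩ := exists_unif (q := q) (E := E) (Submodule.span B {e}) (fun x ↦ by
      obtain ⟨s, hs, b, hb⟩ := he2 x
      exact ⟨s, hs, Submodule.mem_span_singleton.mpr ⟨b, hb.symm⟩⟩)
    have ht3 : ∀ b : B, b • e = 0 → t * b = 0 := fun b hb ↦ by
      simpa [Subtype.ext_iff] using ht2 ⟨b, (Ideal.mem_torsionOf_iff _ _).mpr hb⟩
    choose c hc using fun x ↦ Submodule.mem_span_singleton.mp (hs2 x)
    have hc2 : ∀ x b, s • x = b • e → t * c x = t * b := fun x b hb ↦ by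
      have := ht3 (c x - b) (by rw [sub_smul, hc, hb, sub_self])
      rw [mul_sub] at this
      exact sub_eq_zero.mp this
    let f : Module.Dual B E :=
      { toFun := fun x ↦ t * c x
        map_add' := fun x y ↦ by
          rw [hc2 (x + y) (c x + c y) (by rw [smul_add, add_smul, hc, hc]), mul_add]
        map_smul' := fun a x ↦ by
          rw [hc2 (a • x) (a * c x) (by rw [mul_smul, hc, smul_comm]), RingHom.id_apply,
            smul_eq_mul]
          ring }
    have hf : f e = t * s := hc2 e s rfl
    have hm : contractLeft B E (f ⊗ₜ e) ∈ q := hle ⟨_, rfl⟩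
    rw [contractLeft_apply, hf] at hm
    rcases hp.mem_or_mem hm with h | h
    · exact ht h
    · exact hs h

lemma glue [IsNoetherianRing B] [ConnectedSpace (PrimeSpectrum B)] (E : ℕ → Type u)
    [∀ i, AddCommGroup (E i)] [∀ i, Module B (E i)] [∀ i, Module.Finite B (E i)]
    (h : ∀ q : Ideal B, q.IsPrime → ∃ k : ℕ,
      (∀ i ≠ k, ∀ e : E i, ∃ s : B, s ∉ q ∧ s • e = 0) ∧ ∃ e : E k, LocGen q e) :
    ∃ n, (∀ i ≠ n, Subsingleton (E i)) ∧ Module.Invertible B (E n) := by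
  choose k hk1 hk2 using fun q : PrimeSpectrum B ↦ h q.asIdeal q.2
  have hsup : ∀ q i, q ∈ Module.support B (E i) ↔ i = k q := by
    intro q i
    rw [Module.mem_support_iff_exists_annihilator]
    constructor
    · rintro ⟨e, he⟩
      by_contra hi
      obtain ⟨s, hs, hs2⟩ := hk1 q i hi e
      exact hs (he ((Submodule.mem_annihilator_span_singleton e s).mpr hs2))
    · rintro rfl
      obtain ⟨e, he, -⟩ := hk2 q
      refine ⟨e, fun t ht ↦ ?_⟩
      obtain ⟨s, hs, hs2⟩ := he t ((Submodule.mem_annihilator_span_singleton e t).mp ht)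
      exact (q.2.mem_or_mem (hs2 ▸ q.asIdeal.zero_mem : s * t ∈ q.asIdeal)).resolve_left hs
  obtain ⟨q₀⟩ : Nonempty (PrimeSpectrum B) := inferInstance
  have hcl : IsClopen (Module.support B (E (k q₀))) := by
    refine ⟨Module.isClosed_support, isOpen_support_of_locGen fun q hq ↦ ?_⟩
    obtain ⟨e, he⟩ := hk2 q
    rw [(hsup q _).mp hq]
    exact ⟨e, he⟩
  have huniv := hcl.eq_univ ⟨q₀, (hsup q₀ _).mpr rfl⟩
  have hall : ∀ q, k q₀ = k q := fun q ↦ (hsup q _).mp (by rw [huniv]; trivial)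
  refine ⟨k q₀, fun i hi ↦ ?_, invertible_of_locGen fun q hq ↦ ?_⟩
  · rw [← Module.support_eq_empty_iff (R := B), Set.eq_empty_iff_forall_notMem]
    intro q hq
    exact hi (((hsup q i).mp hq).trans (hall q).symm)
  · rw [hall ⟨q, hq.isPrime⟩]
    exact hk2 ⟨q, hq.isPrime⟩

end Glue

section LocalStalk

variable {R B : Type u} [CommRing R] [CommRing B] [Algebra R B] [Algebra B R]

lemma ExtConc.of_equiv₂ {S : Type u} [CommRing S] {M Y Z : ModuleCat.{u} S} {k : ℕ}
    (h : ExtConc M Y k) (e : Y ≃ₗ[S] Z) : ExtConc M Z k := by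
  obtain ⟨φ⟩ : Nonempty (Y ≅ Z) := ⟨e.toModuleIso⟩
  have hc : ∀ i, Function.Injective fun x : Abelian.Ext M Z i ↦
      x.comp (Abelian.Ext.mk₀ φ.inv) (add_zero i) := fun i x y hxy ↦ by
    have := congrArg (fun z ↦ Abelian.Ext.comp z (Abelian.Ext.mk₀ φ.hom)
      (add_zero i)) hxy
    simpa using this
  have hc' : ∀ i, Function.Surjective fun x : Abelian.Ext M Z i ↦
      x.comp (Abelian.Ext.mk₀ φ.inv) (add_zero i) := fun i x ↦
    ⟨x.comp (Abelian.Ext.mk₀ φ.hom) (add_zero i), by simp⟩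
  have E : ∀ i, Nonempty (Abelian.Ext M Z i ≃ₗ[S] Abelian.Ext M Y i) := fun i ↦ ⟨
    LinearEquiv.ofBijective
      ((Abelian.Ext.mk₀ φ.inv).postcompOfLinear S M (add_zero i))
      ⟨hc i, hc' i⟩⟩
  refine ⟨fun i hi ↦ ?_, ⟨(E k).some.trans h.2.some⟩⟩
  have := h.1 i hi
  exact (E i).some.toEquiv.subsingleton

/-- Comparison of localizations. -/
noncomputable def locEquiv (𝒮 : Submonoid R) (X : ModuleCat.{u} R) {N : Type u} [AddCommGroup N]
    [Module R N] [Module (Localization 𝒮) N] [IsScalarTower R (Localization 𝒮) N]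
    (f : X →ₗ[R] N) [IsLocalizedModule 𝒮 f] :
    N ≃ₗ[Localization 𝒮] X.localizedModule 𝒮 :=
  (IsLocalizedModule.linearEquiv 𝒮 f
    (X.localizedModuleMkLinearMap 𝒮)).extendScalarsOfIsLocalization 𝒮 (Localization 𝒮)

/-- `B` is the quotient of `R` by the kernel of `R → B`. -/
noncomputable def quotEquiv (hB : ∀ b : B, algebraMap R B (algebraMap B R b) = b) :
    B ≃ₗ[R] R ⧸ RingHom.ker (algebraMap R B) where
  toFun b := Ideal.Quotient.mk _ (algebraMap B R b)
  map_add' := by simp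
  map_smul' r b := by
    rw [RingHom.id_apply, Algebra.smul_def r (Ideal.Quotient.mk _ (algebraMap B R b)),
      Ideal.Quotient.algebraMap_eq, ← map_mul, Ideal.Quotient.eq, RingHom.mem_ker, map_sub, hB,
      map_mul, hB, Algebra.smul_def, sub_self]
  invFun := Ideal.Quotient.lift _ (algebraMap R B) fun _ h ↦ h
  left_inv b := hB b
  right_inv x := by
    obtain ⟨r, rfl⟩ := Ideal.Quotient.mk_surjective x
    change Ideal.Quotient.mk _ (algebraMap B R (algebraMap R B r)) = _
    rw [Ideal.Quotient.eq, RingHom.mem_ker, map_sub, hB, sub_self]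

lemma exists_extConc_loc [IsNoetherianRing R] [Algebra.FormallySmooth B R]
    (hB : ∀ b : B, algebraMap R B (algebraMap B R b) = b)
    (q : Ideal B) [q.IsPrime] :
    ∃ k, ExtConc ((locF (q.comap (algebraMap R B)).primeCompl).obj (ModuleCat.of R B))
      ((locF (q.comap (algebraMap R B)).primeCompl).obj (ModuleCat.of R R)) k := by
  let 𝒮 := (q.comap (algebraMap R B)).primeCompl
  let S := Localization 𝒮
  let I : Ideal R := RingHom.ker (algebraMap R B)
  let J : Ideal S := Submodule.localized' S 𝒮 (Algebra.linearMap R S) I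
  have hnoeth : IsNoetherianRing S := IsLocalization.isNoetherianRing 𝒮 S inferInstance
  have hloc : IsLocalRing S := inferInstanceAs
    (IsLocalRing (Localization.AtPrime (q.comap (algebraMap R B))))
  have h1 : Algebra.FormallySmooth R S := Algebra.FormallySmooth.of_isLocalization 𝒮
  have h2 : Algebra.FormallySmooth B S := Algebra.FormallySmooth.comp B R S
  have hJ : J ≤ IsLocalRing.maximalIdeal S := by
    have : J = I.map (algebraMap R S) := Ideal.localized'_eq_map S 𝒮 I
    rw [this, ← Localization.AtPrime.map_eq_maximalIdeal]
    refine Ideal.map_mono fun r hr ↦ ?_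
    rw [Ideal.mem_comap, (RingHom.mem_ker).mp hr]
    exact q.zero_mem
  have htower : IsScalarTower R B (S ⧸ J) := by
    refine IsScalarTower.of_algebraMap_eq fun r ↦ ?_
    rw [IsScalarTower.algebraMap_apply R S (S ⧸ J), IsScalarTower.algebraMap_apply B S (S ⧸ J),
      IsScalarTower.algebraMap_apply B R S, Ideal.Quotient.algebraMap_eq, Ideal.Quotient.eq,
      ← map_sub]
    have : J = I.map (algebraMap R S) := Ideal.localized'_eq_map S 𝒮 I
    rw [this]
    refine Ideal.mem_map_of_mem _ ?_
    rw [RingHom.mem_ker, map_sub, hB, sub_self]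
  have hcomp : (IsScalarTower.toAlgHom R B (S ⧸ J)).toLinearMap =
      (Submodule.toLocalizedQuotient' S 𝒮 (Algebra.linearMap R S) I) ∘ₗ
        (quotEquiv hB).toLinearMap := by
    ext b
    rfl
  have hlm : IsLocalizedModule 𝒮 (IsScalarTower.toAlgHom R B (S ⧸ J)).toLinearMap := by
    rw [hcomp]
    infer_instance
  have hl : IsLocalization (Algebra.algebraMapSubmonoid B 𝒮) (S ⧸ J) :=
    isLocalizedModule_iff_isLocalization.mp hlm
  have h3 : Algebra.FormallySmooth B (S ⧸ J) :=
    Algebra.FormallySmooth.of_isLocalization (Algebra.algebraMapSubmonoid B 𝒮)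
  obtain ⟨k, hk⟩ := exists_extConc B J hJ
  refine ⟨k, ?_⟩
  have e1 : (S ⧸ J) ≃ₗ[S] ((ModuleCat.of R B).localizedModule 𝒮) :=
    locEquiv 𝒮 (ModuleCat.of R B) (IsScalarTower.toAlgHom R B (S ⧸ J)).toLinearMap
  have e2 : S ≃ₗ[S] ((ModuleCat.of R R).localizedModule 𝒮) :=
    locEquiv 𝒮 (ModuleCat.of R R) (Algebra.linearMap R S)
  exact (hk.of_equiv e1).of_equiv₂ e2

end LocalStalk

section Final

variable {R B : Type u} [CommRing R] [CommRing B] [Algebra R B] [Algebra B R]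

lemma smul_ext (hB : ∀ b : B, algebraMap R B (algebraMap B R b) = b) (Y : ModuleCat.{u} R)
    (i : ℕ) (r : R) (e : Abelian.Ext (ModuleCat.of R B) Y i) :
    r • e = algebraMap B R (algebraMap R B r) • e := by
  have key : ∀ r : R, r • e =
      (Abelian.Ext.mk₀ (r • 𝟙 (ModuleCat.of R B))).comp e (zero_add i) := by
    intro r
    rw [Abelian.Ext.mk₀_smul, Abelian.Ext.smul_comp, Abelian.Ext.mk₀_id_comp]
  rw [key, key]
  congr 2
  ext b
  change r • b = algebraMap B R (algebraMap R B r) • b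
  rw [Algebra.smul_def, Algebra.smul_def, hB]

lemma exists_locMap (𝒮 : Submonoid R) (X : ModuleCat.{u} R) : ∃ f : X → (locF 𝒮).obj X,
    (∀ (r : R) (x : X), algebraMap R (Localization 𝒮) r • f x = f (r • x)) ∧
    (∀ x : X, f x = 0 → ∃ t ∈ 𝒮, t • x = 0) ∧
    (∀ y, ∃ t ∈ 𝒮, ∃ x, algebraMap R (Localization 𝒮) t • y = f x) := by
  let f : X →ₗ[R] X.localizedModule 𝒮 := X.localizedModuleMkLinearMap 𝒮
  have hf : IsLocalizedModule 𝒮 f := X.localizedModule_isLocalizedModule 𝒮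
  have hsm : ∀ (r : R) (y : X.localizedModule 𝒮), algebraMap R (Localization 𝒮) r • y = r • y :=
    fun r y ↦ algebraMap_smul (Localization 𝒮) r y
  refine ⟨f, fun r x ↦ ?_, fun x hx ↦ ?_, fun y ↦ ?_⟩
  · exact (hsm r (f x)).trans (f.map_smul r x).symm
  · obtain ⟨t, ht⟩ := (IsLocalizedModule.eq_zero_iff 𝒮 f).mp hx
    exact ⟨t, t.2, ht⟩
  · obtain ⟨⟨x, t⟩, hx⟩ := IsLocalizedModule.surj 𝒮 f y
    exact ⟨t, t.2, x, (hsm t y).trans hx⟩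

lemma local_ext [IsNoetherianRing R] [Algebra.FormallySmooth B R]
    (hB : ∀ b : B, algebraMap R B (algebraMap B R b) = b)
    (q : Ideal B) (hq : q.IsPrime) : ∃ k,
      (∀ i ≠ k, ∀ e : Abelian.Ext (ModuleCat.of R B) (ModuleCat.of R R) i,
        ∃ s : B, s ∉ q ∧ algebraMap B R s • e = 0) ∧
      ∃ e₀ : Abelian.Ext (ModuleCat.of R B) (ModuleCat.of R R) k,
        (∀ b : B, algebraMap B R b • e₀ = 0 → ∃ s : B, s ∉ q ∧ s * b = 0) ∧
        (∀ e : Abelian.Ext (ModuleCat.of R B) (ModuleCat.of R R) k,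
          ∃ s : B, s ∉ q ∧ ∃ b : B, algebraMap B R s • e = algebraMap B R b • e₀) := by
  obtain ⟨k, hk1, ⟨φ⟩⟩ := exists_extConc_loc hB q
  have hfin : Module.Finite R (ModuleCat.of R B) :=
    Module.Finite.of_surjective (Algebra.linearMap R B) fun b ↦ ⟨algebraMap B R b, hB b⟩
  have L := locProp (q.comap (algebraMap R B)).primeCompl (ModuleCat.of R B) (ModuleCat.of R R)
  have hsm := locExt_smul (q.comap (algebraMap R B)).primeCompl (ModuleCat.of R B)
    (ModuleCat.of R R)
  generalize h𝒮 : (q.comap (algebraMap R B)).primeCompl = 𝒮 at *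
  have hmem : ∀ s ∈ 𝒮, algebraMap R B s ∉ q := by
    intro s hs
    rw [← h𝒮] at hs
    exact hs
  have hS := smul_ext hB (ModuleCat.of R R)
  refine ⟨k, fun i hi e ↦ ?_, ?_⟩
  · have := hk1 i hi
    obtain ⟨s, hs, hs2⟩ := (L i).1 e (Subsingleton.elim _ _)
    exact ⟨algebraMap R B s, hmem s hs, by rw [← hS, hs2]⟩
  · obtain ⟨f, hfsm, hf0, hfs⟩ := exists_locMap 𝒮 (ModuleCat.of R B)
    obtain ⟨y₀, hy₀⟩ := φ.surjective (f (1 : B))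
    obtain ⟨s₀, hs₀, e₀, he₀⟩ := (L k).2 y₀
    refine ⟨e₀, fun b hb ↦ ?_, fun e ↦ ?_⟩
    · have h1 : algebraMap R (Localization 𝒮) (algebraMap B R b) •
          algebraMap R (Localization 𝒮) s₀ • y₀ = 0 := by
        rw [he₀, ← hsm, hb, map_zero]
      have h2 := congrArg φ h1
      rw [map_smul, map_smul, map_zero, hy₀, hfsm, hfsm] at h2
      obtain ⟨t, ht0, ht⟩ := hf0 _ h2
      refine ⟨algebraMap R B t * algebraMap R B s₀, ?_, ?_⟩
      · intro h
        rcases hq.mem_or_mem h with h | h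
        · exact hmem _ ht0 h
        · exact hmem _ hs₀ h
      · change (t : R) • (algebraMap B R b • (s₀ • (1 : B))) = 0 at ht
        rw [Algebra.smul_def, Algebra.smul_def, Algebra.smul_def, hB, mul_one] at ht
        rw [← ht]
        ring
    · obtain ⟨t, ht0, x, hx'⟩ := hfs (φ (locExt 𝒮 _ _ k e))
      have h3 : algebraMap R (Localization 𝒮) t • locExt 𝒮 _ _ k e =
          algebraMap R (Localization 𝒮) (algebraMap B R x) • y₀ := by
        apply φ.injective
        rw [map_smul, map_smul, hx', hy₀, hfsm]
        congr 1
        change x = algebraMap B R x • (1 : B)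
        rw [Algebra.smul_def, hB, mul_one]
      have h4 : locExt 𝒮 _ _ k ((s₀ * t) • e - algebraMap B R x • e₀) = 0 := by
        rw [map_sub, hsm, hsm, ← he₀, map_mul, mul_smul, h3, smul_comm, sub_self]
      obtain ⟨t', ht', h5⟩ := (L k).1 _ h4
      rw [smul_sub, sub_eq_zero, ← mul_smul, ← mul_smul, hS _ (t' * (s₀ * t)),
        hS _ (t' * algebraMap B R x)] at h5
      refine ⟨_, ?_, _, h5⟩
      exact hmem _ (𝒮.mul_mem ht' (𝒮.mul_mem hs₀ ht0))

lemma newMain [IsNoetherianRing R] [IsNoetherianRing B] [Algebra.FormallySmooth B R]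
    [ConnectedSpace (PrimeSpectrum B)]
    (hB : ∀ b : B, algebraMap R B (algebraMap B R b) = b)
    (E : ℕ → Type u) [∀ i, AddCommGroup (E i)] [∀ i, Module R (E i)] [∀ i, Module B (E i)]
    (hsm : ∀ i (b : B) (e : E i), b • e = algebraMap B R b • e)
    (ψ : ∀ i, E i ≃ₗ[R] Abelian.Ext (ModuleCat.of R B) (ModuleCat.of R R) i) :
    ∃ n, (∀ i ≠ n, Subsingleton (E i)) ∧ Module.Invertible B (E n) := by
  have hS := smul_ext hB (ModuleCat.of R R)
  have hfin : Module.Finite R (ModuleCat.of R B) :=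
    Module.Finite.of_surjective (Algebra.linearMap R B) fun b ↦ ⟨algebraMap B R b, hB b⟩
  have hfin2 : ∀ i, Module.Finite B (E i) := by
    intro i
    have h0 : Module.Finite R (Abelian.Ext (ModuleCat.of R B) (ModuleCat.of R R) i) :=
      inferInstance
    have h1 : Module.Finite R (E i) := Module.Finite.equiv (ψ i).symm
    obtain ⟨t, ht⟩ := h1.fg_top
    refine ⟨⟨t, ?_⟩⟩
    rw [eq_top_iff]
    intro e _
    have he : e ∈ Submodule.span R (t : Set (E i)) := by rw [ht]; trivial
    induction he using Submodule.span_induction with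
    | mem x hx => exact Submodule.subset_span hx
    | zero => exact Submodule.zero_mem _
    | add x y _ _ hx hy => exact Submodule.add_mem _ (hx trivial) (hy trivial)
    | smul a x _ hx =>
      have : a • x = algebraMap R B a • x := by
        apply (ψ i).injective
        rw [hsm, map_smul, map_smul]
        exact hS i a _
      rw [this]
      exact Submodule.smul_mem _ _ (hx trivial)
  refine glue E fun q hq ↦ ?_
  obtain ⟨k, hk1, e₀, he1, he2⟩ := local_ext hB q hq
  have hψ : ∀ i (b : B) (e : E i), ψ i (b • e) = algebraMap B R b • ψ i e := fun i b e ↦ by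
    rw [hsm, map_smul]
  refine ⟨k, fun i hi e ↦ ?_, (ψ k).symm e₀, fun b hb ↦ ?_, fun e ↦ ?_⟩
  · obtain ⟨s, hs, h⟩ := hk1 i hi (ψ i e)
    exact ⟨s, hs, (ψ i).injective (by rw [hψ, h, map_zero])⟩
  · refine he1 b ?_
    have := congrArg (ψ k) hb
    rwa [hψ, LinearEquiv.apply_symm_apply, map_zero] at this
  · obtain ⟨s, hs, b, h⟩ := he2 (ψ k e)
    exact ⟨s, hs, b, (ψ k).injective (by rw [hψ, hψ, LinearEquiv.apply_symm_apply, h])⟩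

end Final

end ExtEnv

open TensorProduct in
/-- **Hochschild cohomology of a smooth algebra with coefficients in the enveloping ring is
an invertible module concentrated in a single degree.**
Let `A` be a commutative noetherian ring and `B` a nonzero, flat, formally smooth
`A`-algebra, essentially of finite type over `A`, with connected spectrum.  Then there is
an `n : ℕ` such that `Ext^i_{B ⊗[A] B}(B, B ⊗[A] B) = 0` for all `i ≠ n`, and
`Ext^n_{B ⊗[A] B}(B, B ⊗[A] B)` is an invertible `B`-module (for the canonical `B`-module
structure, obtained by restricting scalars along `B → B ⊗[A] B`, `b ↦ b ⊗ 1`). -/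
theorem ext_enveloping_concentrated_invertible
    {A B : Type u} [CommRing A] [CommRing B] [Algebra A B]
    [IsNoetherianRing A] [Nontrivial B]
    [Algebra.EssFiniteType A B] [Algebra.FormallySmooth A B]
    (hflat : Module.Flat A B)
    (hconn : ConnectedSpace (PrimeSpectrum B)) :
    ∃ n : ℕ,
      (∀ i : ℕ, i ≠ n →
        letI := ((Algebra.TensorProduct.lmul' A (S := B)).toRingHom).toModule
        Subsingleton (((Ext (B ⊗[A] B) (ModuleCat.{u} (B ⊗[A] B)) i).obj
          (Opposite.op (ModuleCat.of (B ⊗[A] B) B))).obj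
            (ModuleCat.of (B ⊗[A] B) (B ⊗[A] B)))) ∧
      (letI := ((Algebra.TensorProduct.lmul' A (S := B)).toRingHom).toModule
       letI : Module B (((Ext (B ⊗[A] B) (ModuleCat.{u} (B ⊗[A] B)) n).obj
          (Opposite.op (ModuleCat.of (B ⊗[A] B) B))).obj
            (ModuleCat.of (B ⊗[A] B) (B ⊗[A] B))) :=
         Module.compHom _ (algebraMap B (B ⊗[A] B))
       Module.IsInvertible B (((Ext (B ⊗[A] B) (ModuleCat.{u} (B ⊗[A] B)) n).obj
          (Opposite.op (ModuleCat.of (B ⊗[A] B) B))).obj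
            (ModuleCat.of (B ⊗[A] B) (B ⊗[A] B)))) := by
  have hRA : Algebra.EssFiniteType B (B ⊗[A] B) := inferInstance
  have hnB : IsNoetherianRing B := Algebra.EssFiniteType.isNoetherianRing A B
  have hnR : IsNoetherianRing (B ⊗[A] B) := Algebra.EssFiniteType.isNoetherianRing B (B ⊗[A] B)
  have hfs : Algebra.FormallySmooth B (B ⊗[A] B) := inferInstance
  letI : Algebra (B ⊗[A] B) B := ((Algebra.TensorProduct.lmul' A (S := B)).toRingHom).toAlgebra
  letI M : ∀ n, Module B (((Ext (B ⊗[A] B) (ModuleCat.{u} (B ⊗[A] B)) n).obj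
          (Opposite.op (ModuleCat.of (B ⊗[A] B) B))).obj
            (ModuleCat.of (B ⊗[A] B) (B ⊗[A] B))) := fun n ↦
         Module.compHom _ (algebraMap B (B ⊗[A] B))
  have hB : ∀ b : B, algebraMap (B ⊗[A] B) B (algebraMap B (B ⊗[A] B) b) = b := fun b ↦ by
    change Algebra.TensorProduct.lmul' A (S := B) (b ⊗ₜ[A] (1 : B)) = b
    simp
  obtain ⟨n, h1, h2⟩ := ExtEnv.newMain hB
    (fun i ↦ ((Ext (B ⊗[A] B) (ModuleCat.{u} (B ⊗[A] B)) i).obj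
          (Opposite.op (ModuleCat.of (B ⊗[A] B) B))).obj
            (ModuleCat.of (B ⊗[A] B) (B ⊗[A] B))) (fun i b e ↦ rfl)
    (fun i ↦ ExtEnv.oldNew (projectiveResolution (ModuleCat.of (B ⊗[A] B) B)) i)
  refine ⟨n, h1, ?_⟩
  exact ⟨Module.Dual B _, inferInstance, inferInstance,
    ⟨(TensorProduct.comm B _ _).trans (Module.Invertible.linearEquiv B _)⟩⟩
end
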